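/- Third-order at-the-money implied volatility asymptotics for the pure-jump CGMY model: with κ ≡ 0, define d₁ := (1/π)·Γ(1−1/Y)·(2·C·Γ(−Y)·|cos(πY/2)|)^{1/Y}, d₂ := (C·Γ(−Y)/2)·((M−1)^Y − M^Y − (G+1)^Y + G^Y), d₃₁ := (γ̃²/(2π))·Γ(1+1/Y)·(−2·C·Γ(−Y)·cos(πY/2))^{−1/Y}, d₃₂ := −(1/2)·E[(Z⁺+Ũ)²·1_{Z⁺+Ũ≤0}] − ∫₀^∞ w·(P(Z⁺+Ũ ≥ w) − C·M^Y/(Y·w^Y) − C·(G+1)^Y/(Y·w^Y)) dw, and d₃ := d₃₁ if Y < 3/2, d₃ := d₃₂ if Y > 3/2, and d₃ := d₃₁ + d₃₂ if Y = 3/2. Suppose δ > 0 and σ̂ : (0,δ) → (0,∞) satisfies C_BS(t, σ̂(t)) = Π(t) for all t ∈ (0,δ). Then, as t → 0⁺: if 1 < Y ≤ 3/2, (1/√(2π))·σ̂(t) = d₁·t^{1/Y−1/2} + d₂·t^{1/2} + d₃·t^{3/2−1/Y} + o(t^{3/2−1/Y}); and if 3/2 < Y < 2, (1/√(2π))·σ̂(t)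 = d₁·t^{1/Y−1/2} + d₂·t^{1/2} + d₃·t^{2/Y−1/2} + o(t^{2/Y−1/2}). -/

import Mathlib

open MeasureTheory ProbabilityTheory Filter Topology Asymptotics Set

/-- The standard normal cumulative distribution function. -/
noncomputable def stdGaussianCDF (x : ℝ) : ℝ :=
  ∫ t in Set.Iic x, Real.exp (-t ^ 2 / 2) / Real.sqrt (2 * Real.pi)

/-- The Black–Scholes at-the-money call price with volatility `Σ`, maturity `t`,
spot `1` and zero interest rate. -/
noncomputable def CBS (t Sig : ℝ) : ℝ := 2 * stdGaussianCDF (Sig * Real.sqrt t / 2) - 1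

lemma strip_shift {H : ℂ → ℂ} {a b : ℝ} (hab : a ≤ b)
    (hc : ContinuousOn H {z | a ≤ z.im ∧ z.im ≤ b})
    (hd : DifferentiableOn ℂ H {z | a < z.im ∧ z.im < b})
    (g : ℝ → ℝ) (hg : Integrable g) (hg1 : Tendsto g atTop (𝓝 0)) (hg2 : Tendsto g atBot (𝓝 0))
    (hb : ∀ x y : ℝ, a ≤ y → y ≤ b → ‖H (x + y * Complex.I)‖ ≤ g x) :
    ∫ x : ℝ, H (x + a * Complex.I) = ∫ x : ℝ, H (x + b * Complex.I) := by
  have hcont : ∀ y : ℝ, a ≤ y → y ≤ b → Continuous fun x : ℝ => H (x + y * Complex.I) := by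
    intro y h1 h2
    refine hc.comp_continuous (by fun_prop) ?_
    intro x; simp [h1, h2]
  have hintg : ∀ y : ℝ, a ≤ y → y ≤ b → Integrable fun x : ℝ => H (x + y * Complex.I) := by
    intro y h1 h2
    exact hg.mono' (hcont y h1 h2).aestronglyMeasurable (ae_of_all _ fun x => hb x y h1 h2)
  have t1 := intervalIntegral_tendsto_integral (hintg a le_rfl hab) tendsto_neg_atTop_atBot
    tendsto_id
  have t2 := intervalIntegral_tendsto_integral (hintg b hab le_rfl) tendsto_neg_atTop_atBot
    tendsto_id
  have key : ∀ T : ℝ, ‖(∫ x in (-T)..(id T), H (x + a * Complex.I))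
      - ∫ x in (-T)..(id T), H (x + b * Complex.I)‖ ≤ g T * (b - a) + g (-T) * (b - a) := by
    intro T
    have h := Complex.integral_boundary_rect_eq_zero_of_continuousOn_of_differentiableOn H
      (⟨-T, a⟩ : ℂ) (⟨T, b⟩ : ℂ)
      (hc.mono (by
        intro z hz
        rw [Complex.mem_reProdIm] at hz
        have := hz.2
        simp only [uIcc_of_le hab] at this
        exact this))
      (hd.mono (by
        intro z hz
        rw [Complex.mem_reProdIm] at hz
        have := hz.2
        simp only [min_eq_left hab, max_eq_right hab] at this
        exact this))
    simp only at h
    have e : (∫ x in (-T)..(id T), H (x + a * Complex.I))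
      - ∫ x in (-T)..(id T), H (x + b * Complex.I) =
       - (Complex.I • ∫ y in a..b, H ((T:ℂ) + y * Complex.I))
        + Complex.I • ∫ y in a..b, H (((-T : ℝ):ℂ) + y * Complex.I) := by
      simp only [id]
      linear_combination h
    have b1 : ∀ S : ℝ, ‖∫ y in a..b, H ((S:ℂ) + y * Complex.I)‖ ≤ g S * (b - a) := by
      intro S
      have := intervalIntegral.norm_integral_le_of_norm_le_const (a := a) (b := b) (C := g S)
        (f := fun y : ℝ => H ((S:ℂ) + y * Complex.I)) (by
          intro y hy
          rw [uIoc_of_le hab] at hy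
          exact hb S y hy.1.le hy.2)
      rwa [abs_of_nonneg (by linarith)] at this
    rw [e]
    refine (norm_add_le _ _).trans ?_
    rw [norm_neg, norm_smul, norm_smul, Complex.norm_I, one_mul, one_mul]
    exact add_le_add (b1 T) (b1 (-T))
  have t3 : Tendsto (fun T : ℝ => g T * (b - a) + g (-T) * (b - a)) atTop (𝓝 0) := by
    have := (hg1.mul_const (b - a)).add ((hg2.comp tendsto_neg_atTop_atBot).mul_const (b - a))
    simpa using this
  have t4 := squeeze_zero_norm key t3
  have := tendsto_nhds_unique (t1.sub t2) t4
  exact sub_eq_zero.1 this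

/-- integrals over ℝ through exponential substitution -/
lemma integral_exp_subst (g : ℝ → ℂ) :
    ∫ x : ℝ, (Real.exp x : ℂ) * g (Real.exp x) = ∫ s in Ioi (0:ℝ), g s := by
  have h := integral_image_eq_integral_abs_deriv_smul (s := univ) (f := Real.exp)
    (f' := Real.exp) MeasurableSet.univ
    (fun x _ => (Real.hasDerivAt_exp x).hasDerivWithinAt) (Real.exp_injective.injOn) g
  rw [image_univ, Real.range_exp, setIntegral_univ] at h
  rw [h]
  simp [abs_of_pos (Real.exp_pos _)]

lemma integrable_exp_subst (g : ℝ → ℝ) (hg : IntegrableOn g (Ioi 0)) :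
    Integrable fun x : ℝ => Real.exp x * g (Real.exp x) := by
  have h := integrableOn_image_iff_integrableOn_abs_deriv_smul (s := univ) (f := Real.exp)
    (f' := Real.exp) MeasurableSet.univ
    (fun x _ => (Real.hasDerivAt_exp x).hasDerivWithinAt) (Real.exp_injective.injOn) g
  rw [image_univ, Real.range_exp] at h
  have := h.1 hg
  simpa [abs_of_pos (Real.exp_pos _)] using this

lemma cpow_polar {s θ : ℝ} (hs : 0 < s) (h1 : -Real.pi < θ) (h2 : θ ≤ Real.pi) (Y : ℝ) :
    ((s:ℂ) * Complex.exp (θ * Complex.I)) ^ (Y:ℂ) =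
      ((s ^ Y : ℝ):ℂ) * Complex.exp ((Y * θ : ℝ) * Complex.I) := by
  have hne : (s:ℂ) * Complex.exp (θ * Complex.I) ≠ 0 := by
    simp [hs.ne', Complex.exp_ne_zero]
  rw [Complex.cpow_def_of_ne_zero hne, Complex.log_ofReal_mul hs (Complex.exp_ne_zero _),
    Complex.log_exp (by simpa using h1) (by simpa using h2), Real.rpow_def_of_pos hs]
  push_cast
  rw [← Complex.exp_add]
  congr 1; ring

lemma ofReal_mul_cpow {s : ℝ} (hs : 0 < s) (w : ℂ) (Y : ℂ) :
    ((s:ℂ) * w) ^ Y = (s:ℂ) ^ Y * w ^ Y := by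
  by_cases hw : w = 0
  · subst hw
    by_cases hY : Y = 0 
    · subst hY; simp
    · simp [Complex.zero_cpow hY]
  have hne : (s:ℂ) ≠ 0 := by simp [hs.ne']
  rw [Complex.cpow_def_of_ne_zero (mul_ne_zero hne hw), Complex.log_ofReal_mul hs hw,
    Complex.cpow_def_of_ne_zero hne, Complex.cpow_def_of_ne_zero hw, ← Complex.exp_add,
    Complex.ofReal_log hs.le]
  congr 1; ring

lemma cos_piY_neg {Y : ℝ} (h1 : 1 < Y) (h2 : Y < 2) : Real.cos (Real.pi * Y / 2) < 0 := by
  apply Real.cos_neg_of_pi_div_two_lt_of_lt <;> nlinarith [Real.pi_pos]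

lemma re_cpow_neg_I {Y : ℝ} (u : ℝ) (hu : u = 1 ∨ u = -1) :
    (((0:ℝ) - Complex.I * u : ℂ) ^ (Y:ℂ)) = 
     (Real.cos (Real.pi * Y / 2) : ℂ) - Complex.I * u * Real.sin (Real.pi * Y / 2) := by
  rcases hu with rfl | rfl
  · have h := cpow_polar (s := 1) (θ := -(Real.pi/2)) one_pos (by linarith [Real.pi_pos]) 
      (by linarith [Real.pi_pos]) Y
    have e : ((0:ℝ) - Complex.I * (1:ℝ) : ℂ) = (1:ℝ) * Complex.exp ((-(Real.pi/2) : ℝ) * Complex.I) := by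
      rw [Complex.exp_mul_I, ← Complex.ofReal_cos, ← Complex.ofReal_sin]
      simp
    rw [e, h, Complex.exp_mul_I, ← Complex.ofReal_cos, ← Complex.ofReal_sin,
      show Y * -(Real.pi/2) = -(Real.pi * Y/2) by ring, Real.cos_neg, Real.sin_neg]
    push_cast; simp; ring
  · have h := cpow_polar (s := 1) (θ := (Real.pi/2)) one_pos (by linarith [Real.pi_pos]) 
      (by linarith [Real.pi_pos]) Y
    have e : ((0:ℝ) - Complex.I * (-1:ℝ) : ℂ) = (1:ℝ) * Complex.exp (((Real.pi/2) : ℝ) * Complex.I) := by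
      rw [Complex.exp_mul_I, ← Complex.ofReal_cos, ← Complex.ofReal_sin]
      simp
    rw [e, h, Complex.exp_mul_I, ← Complex.ofReal_cos, ← Complex.ofReal_sin,
      show Y * (Real.pi/2) = (Real.pi * Y/2) by ring]
    push_cast; simp; ring

lemma abs_mul_sign_eq (u : ℝ) : |u| * Real.sign u = u := by
  rcases lt_trichotomy u 0 with h | h | h
  · rw [abs_of_neg h, Real.sign_of_neg h]; ring
  · simp [h]
  · rw [abs_of_pos h, Real.sign_of_pos h]; ring

lemma integrable_of_even {f : ℝ → ℝ} (hf : ∀ x, f (-x) = f x) (h : IntegrableOn f (Ioi 0)) :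
    Integrable f := by
  have h2 : IntegrableOn f (Iio 0) := by
    have := (Measure.measurePreserving_neg (volume : Measure ℝ)).integrableOn_comp_preimage
      (Homeomorph.neg ℝ).measurableEmbedding (f := f) (s := Ioi 0)
    have h3 := this.2 h
    simp only [Function.comp_def, neg_preimage, neg_Ioi, neg_zero, hf] at h3
    exact h3
  have h4 := h2.union ((integrableOn_Ici_iff_integrableOn_Ioi (by finiteness)).2 h)
  rw [← integrableOn_univ]
  refine h4.mono_set ?_
  intro x _
  exact lt_or_ge x 0

lemma cpow_neg_I_mul {Y : ℝ} (hY : 1 < Y) (u : ℝ) :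
    ((-(Complex.I * u)) : ℂ) ^ (Y:ℂ) = ((|u| ^ Y : ℝ) : ℂ) *
      ((Real.cos (Real.pi * Y / 2) : ℂ) - Complex.I * (Real.sign u : ℝ) * Real.sin (Real.pi * Y / 2)) := by
  rcases eq_or_ne u 0 with rfl | hu
  · have : (Y:ℂ) ≠ 0 := by norm_cast; linarith
    rw [abs_zero, Real.zero_rpow (by linarith)]
    simp [Complex.zero_cpow this]
  · have hsg : Real.sign u = 1 ∨ Real.sign u = -1 := by
      rcases lt_or_gt_of_ne hu with h | h
      · right; exact Real.sign_of_neg h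
      · left; exact Real.sign_of_pos h
    rw [← re_cpow_neg_I _ hsg]
    have e : (-(Complex.I * u) : ℂ) = ((|u| : ℝ) : ℂ) * ((0:ℝ) - Complex.I * (Real.sign u : ℝ)) := by
      have : u = |u| * Real.sign u := (abs_mul_sign_eq u).symm
      conv_lhs => rw [this]
      push_cast; ring
    rw [e, ofReal_mul_cpow (abs_pos.2 hu), Complex.ofReal_cpow (abs_nonneg u)]

lemma continuousOn_cpow_halfplane {Y : ℝ} (hY : 1 < Y) :
    ContinuousOn (fun z : ℂ => z ^ (Y:ℂ)) {z | 0 ≤ z.re} := by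
  intro z hz
  apply ContinuousAt.continuousWithinAt
  rcases eq_or_ne z 0 with rfl | h0
  · have := Complex.continuousAt_cpow_zero_of_re_pos (z := (Y:ℂ)) (by simp; linarith)
    exact ContinuousAt.comp (f := fun z : ℂ => (z, (Y:ℂ))) this (by fun_prop)
  · refine continuousAt_cpow_const ?_
    rw [Complex.mem_slitPlane_iff]
    rcases (le_iff_lt_or_eq.1 (show 0 ≤ z.re from hz)) with h | h
    · left; exact h
    · right
      intro h'
      exact h0 (Complex.ext h.symm h')

lemma differentiableOn_cpow_halfplane {Y : ℝ}  :
    DifferentiableOn ℂ (fun z : ℂ => z ^ (Y:ℂ)) {z | 0 < z.re} := by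
  intro z hz
  exact (differentiableAt_id.cpow_const (by left; exact hz)).differentiableWithinAt

lemma exists_re_cpow_le {Y : ℝ} (h1 : 1 < Y) (h2 : Y < 2) :
    ∃ R > (0:ℝ), ∃ κ > (0:ℝ), ∀ s u : ℝ, 0 ≤ s → R * s ≤ |u| → 
      (((s:ℂ) - Complex.I * u) ^ (Y:ℂ)).re ≤ - κ * |u| ^ Y := by
  set q := Real.cos (Real.pi * Y / 2) with hq
  have hqn : q < 0 := cos_piY_neg h1 h2
  have hev : ∀ u : ℝ, u = 1 ∨ u = -1 → ∀ᶠ ε : ℝ in 𝓝[≥] 0, 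
      (((ε:ℂ) - Complex.I * u) ^ (Y:ℂ)).re < q / 2 := by
    intro u hu
    have hc : ContinuousWithinAt (fun ε : ℝ => (((ε:ℂ) - Complex.I * u) ^ (Y:ℂ)).re) (Ici 0) 0 := by
      have : ContinuousOn (fun ε : ℝ => (((ε:ℂ) - Complex.I * u) ^ (Y:ℂ)).re) (Ici 0) := by
        refine Complex.continuous_re.comp_continuousOn ?_
        exact (continuousOn_cpow_halfplane h1).comp (f := fun ε : ℝ => (ε:ℂ) - Complex.I * u)
          (by fun_prop) (by intro x hx; simpa using hx)
      exact this 0 (by simp)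
    have hv : (((0:ℝ) - Complex.I * u : ℂ) ^ (Y:ℂ)).re = q := by
      rw [re_cpow_neg_I u hu, mul_assoc, ← Complex.ofReal_mul]
      simp only [Complex.sub_re, Complex.ofReal_re, Complex.re_mul_ofReal, Complex.I_re]
      ring
    have := hc.tendsto
    simp only [hv] at this
    exact this.eventually_lt_const (by linarith)
  have h3 := (hev 1 (Or.inl rfl)).and (hev (-1) (Or.inr rfl))
  obtain ⟨ε, hε, hεs⟩ := mem_nhdsGE_iff_exists_Ico_subset.1 h3
  have hε0 : 0 < ε := hε
  refine ⟨2 / ε, by positivity, -q/2, by linarith, ?_⟩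
  intro s u hs hsu
  rcases eq_or_ne u 0 with rfl | hu
  · have hs0 : s = 0 := by
      have : 0 < 2 / ε := by positivity
      rw [abs_zero] at hsu
      nlinarith
    subst hs0
    have : (Y:ℂ) ≠ 0 := by norm_cast; linarith
    rw [abs_zero, Real.zero_rpow (by linarith)]
    simp [Complex.zero_cpow this]
  · have hup := abs_pos.2 hu
    have hsg : Real.sign u = 1 ∨ Real.sign u = -1 := by
      rcases lt_or_gt_of_ne hu with h | h
      · right; exact Real.sign_of_neg h
      · left; exact Real.sign_of_pos h
    have e : ((s:ℂ) - Complex.I * u : ℂ) = ((|u| : ℝ) : ℂ) * (((s/|u| : ℝ):ℂ) - Complex.I * (Real.sign u : ℝ)) := by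
      have : u = |u| * Real.sign u := (abs_mul_sign_eq u).symm
      have hne : ((|u|:ℝ):ℂ) ≠ 0 := by exact_mod_cast hup.ne'
      conv_lhs => rw [this]
      push_cast
      field_simp
    have hmem : s / |u| ∈ Ico 0 ε := by
      refine ⟨by positivity, ?_⟩
      rw [div_lt_iff₀ hup]
      rw [div_mul_eq_mul_div, div_le_iff₀ hε0] at hsu
      nlinarith
    have hb := hεs hmem
    have hb' : ((((s/|u| : ℝ):ℂ) - Complex.I * (Real.sign u : ℝ)) ^ (Y:ℂ)).re < q/2 := by
      rcases hsg with h | h <;> rw [h]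
      · exact hb.1
      · exact hb.2
    rw [e, ofReal_mul_cpow hup, ← Complex.ofReal_cpow (abs_nonneg u), Complex.re_ofReal_mul]
    have : 0 < |u| ^ Y := Real.rpow_pos_of_pos hup _
    nlinarith

/-- decay bound -/
lemma exists_norm_Phi_le {k Y : ℝ} (hk : 0 < k) (h1 : 1 < Y) (h2 : Y < 2) :
    ∃ κ > (0:ℝ), ∀ L : ℝ, 0 ≤ L → ∃ K > (0:ℝ), ∀ s u : ℝ, 0 ≤ s → s ≤ L → 
      ‖Complex.exp (k * ((s:ℂ) - Complex.I * u) ^ (Y:ℂ))‖ ≤ K * Real.exp (- κ * |u| ^ Y) := by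
  obtain ⟨R, hR, κ, hκ, H⟩ := exists_re_cpow_le h1 h2
  refine ⟨k * κ, by positivity, fun L hL => 
    ⟨Real.exp (k * (L + R * L) ^ Y + k * κ * (R * L) ^ Y), Real.exp_pos _, ?_⟩⟩
  intro s u hs hsL
  rw [Complex.norm_exp, ← Real.exp_add, Complex.re_ofReal_mul]
  apply Real.exp_le_exp.2
  by_cases hc : R * s ≤ |u|
  · have := H s u hs hc
    have h3 : 0 ≤ k * (L + R * L) ^ Y + k * κ * (R * L) ^ Y := by positivity
    nlinarith
  · push Not at hc
    have hu : |u| ≤ R * L := hc.le.trans (by gcongr)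
    have h4 : |u| ^ Y ≤ (R * L) ^ Y := Real.rpow_le_rpow (abs_nonneg _) hu (by linarith)
    have h5 : (((s:ℂ) - Complex.I * u) ^ (Y:ℂ)).re ≤ (L + R * L) ^ Y := by
      refine (Complex.re_le_norm _).trans ?_
      rw [Complex.norm_cpow_real]
      apply Real.rpow_le_rpow (norm_nonneg _) _ (by linarith)
      refine (norm_sub_le _ _).trans ?_
      simp [abs_of_nonneg hs]
      linarith
    have := mul_le_mul_of_nonneg_left h5 hk.le
    have := mul_le_mul_of_nonneg_left h4 (by positivity : 0 ≤ k * κ)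
    linarith

lemma integrable_exp_neg_abs_rpow {κ Y : ℝ} (hκ : 0 < κ) (hY : 1 < Y) :
    Integrable fun u : ℝ => Real.exp (-κ * |u| ^ Y) := by
  have h := integrableOn_rpow_mul_exp_neg_mul_rpow (p := Y) (s := 0) (by norm_num) 
    (by linarith : 0 < Y) hκ
  have h' : IntegrableOn (fun u : ℝ => Real.exp (-κ * |u| ^ Y)) (Ioi 0) := by
    refine h.congr_fun ?_ measurableSet_Ioi
    intro x hx
    simp [abs_of_pos (mem_Ioi.1 hx)]
  exact integrable_of_even (by simp) h'

lemma tendsto_exp_neg_abs_rpow {κ Y : ℝ} (hκ : 0 < κ) (hY : 1 < Y) {l : Filter ℝ}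
    (hl : Tendsto (fun u : ℝ => |u|) l atTop) :
    Tendsto (fun u : ℝ => Real.exp (-κ * |u| ^ Y)) l (𝓝 0) := by
  refine Real.tendsto_exp_atBot.comp ?_
  have := (tendsto_rpow_atTop (by linarith : 0 < Y)).comp hl
  exact (this.const_mul_atTop_of_neg (by linarith : -κ < 0))

/-- Inverse Fourier integrand along the vertical line of abscissa `s`. -/
noncomputable def stF (k Y s x : ℝ) : ℂ :=
  ∫ u : ℝ, Complex.exp (((s:ℂ) - Complex.I * u) * x) * Complex.exp (k * ((s:ℂ) - Complex.I * u) ^ (Y:ℂ))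

lemma norm_exp_line (s u x : ℝ) :
    ‖Complex.exp (((s:ℂ) - Complex.I * u) * x)‖ = Real.exp (s * x) := by
  rw [Complex.norm_exp]; congr 1; simp

lemma stF_shift {k Y : ℝ} (hk : 0 < k) (h1 : 1 < Y) (h2 : Y < 2) {s : ℝ} (hs : 0 ≤ s) (x : ℝ) :
    stF k Y 0 x = stF k Y s x := by
  obtain ⟨κ, hκ, H⟩ := exists_norm_Phi_le hk h1 h2
  obtain ⟨K, hK, HK⟩ := H s hs
  have hmaps : MapsTo (fun z : ℂ => -Complex.I * z) {z | 0 ≤ z.im ∧ z.im ≤ s} {z : ℂ | 0 ≤ z.re} := by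
    intro z hz; simpa using hz.1
  have hmaps' : MapsTo (fun z : ℂ => -Complex.I * z) {z | 0 < z.im ∧ z.im < s} {z : ℂ | 0 < z.re} := by
    intro z hz; simpa using hz.1
  have key := strip_shift (H := fun z => Complex.exp ((-Complex.I * z) * x) *
      Complex.exp (k * (-Complex.I * z) ^ (Y:ℂ))) (a := 0) (b := s) hs
    (by
      refine ContinuousOn.mul (by fun_prop) ?_
      refine Complex.continuous_exp.comp_continuousOn ?_
      refine ContinuousOn.mul (by fun_prop) ?_
      exact (continuousOn_cpow_halfplane h1).comp (by fun_prop) hmaps)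
    (by
      refine DifferentiableOn.mul (by fun_prop) ?_
      refine DifferentiableOn.cexp ?_
      refine DifferentiableOn.mul (by fun_prop) ?_
      exact (differentiableOn_cpow_halfplane (Y := Y)).comp (by fun_prop) hmaps')
    (fun u => Real.exp (s * |x|) * (K * Real.exp (-κ * |u| ^ Y)))
    (((integrable_exp_neg_abs_rpow hκ h1).const_mul K).const_mul _)
    (by simpa using ((tendsto_exp_neg_abs_rpow hκ h1 tendsto_abs_atTop_atTop).const_mul K).const_mul (Real.exp (s * |x|)))
    (by simpa using ((tendsto_exp_neg_abs_rpow hκ h1 tendsto_abs_atBot_atTop).const_mul K).const_mul (Real.exp (s * |x|)))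
    (by
      intro u y hy0 hys
      have e : -Complex.I * (u + y * Complex.I) = (y:ℂ) - Complex.I * u := by
        linear_combination (-y : ℂ) * Complex.I_mul_I
      rw [e, norm_mul, norm_exp_line]
      refine mul_le_mul ?_ (HK y u hy0 hys) (norm_nonneg _) (Real.exp_pos _).le
      apply Real.exp_le_exp.2
      calc y * x ≤ y * |x| := by gcongr; exact le_abs_self x
        _ ≤ s * |x| := by gcongr)
  have e : ∀ y u : ℝ, -Complex.I * (u + y * Complex.I) = (y:ℂ) - Complex.I * u := by
    intro y u
    linear_combination (-y : ℂ) * Complex.I_mul_I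
  simp only [e] at key
  exact key

lemma integrable_stF {k Y : ℝ} (hk : 0 < k) (h1 : 1 < Y) (h2 : Y < 2) {s : ℝ} (hs : 0 ≤ s) (x : ℝ) :
    Integrable fun u : ℝ => Complex.exp (((s:ℂ) - Complex.I * u) * x) * Complex.exp (k * ((s:ℂ) - Complex.I * u) ^ (Y:ℂ)) := by
  obtain ⟨κ, hκ, H⟩ := exists_norm_Phi_le hk h1 h2
  obtain ⟨K, hK, HK⟩ := H s hs
  refine ((((integrable_exp_neg_abs_rpow hκ h1).const_mul K).const_mul (Real.exp (s * x)))).mono' ?_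
    (ae_of_all _ fun u => ?_)
  · apply Continuous.aestronglyMeasurable
    refine Continuous.mul (by fun_prop) ?_
    refine Complex.continuous_exp.comp (Continuous.mul (by fun_prop) ?_)
    exact (continuousOn_cpow_halfplane h1).comp_continuous (by fun_prop) (by intro u; simpa using hs)
  · rw [norm_mul, norm_exp_line]
    gcongr
    exact HK s u hs le_rfl

lemma norm_stF_le {k Y : ℝ} (hk : 0 < k) (h1 : 1 < Y) (h2 : Y < 2) {s : ℝ} (hs : 0 ≤ s) :
    ∃ B : ℝ, ∀ x : ℝ, ‖stF k Y 0 x‖ ≤ B * Real.exp (s * x) := by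
  obtain ⟨κ, hκ, H⟩ := exists_norm_Phi_le hk h1 h2
  obtain ⟨K, hK, HK⟩ := H s hs
  refine ⟨∫ u : ℝ, K * Real.exp (-κ * |u| ^ Y), fun x => ?_⟩
  rw [stF_shift hk h1 h2 hs, stF, ← integral_mul_const]
  refine norm_integral_le_of_norm_le (((integrable_exp_neg_abs_rpow hκ h1).const_mul K).mul_const _)
    (ae_of_all _ fun u => ?_)
  rw [norm_mul, norm_exp_line, mul_comm]
  gcongr
  exact HK s u hs le_rfl

lemma continuous_stF {k Y : ℝ} (hk : 0 < k) (h1 : 1 < Y) (h2 : Y < 2) :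
    Continuous fun x => stF k Y 0 x := by
  obtain ⟨κ, hκ, H⟩ := exists_norm_Phi_le hk h1 h2
  obtain ⟨K, hK, HK⟩ := H 0 le_rfl
  unfold stF
  refine continuous_of_dominated (bound := fun u => K * Real.exp (-κ * |u| ^ Y)) ?_ ?_ ?_ ?_
  · intro x; exact (integrable_stF hk h1 h2 le_rfl x).aestronglyMeasurable
  · intro x
    refine ae_of_all _ fun u => ?_
    rw [norm_mul, norm_exp_line, zero_mul, Real.exp_zero, one_mul]
    exact HK 0 u le_rfl le_rfl
  · exact ((integrable_exp_neg_abs_rpow hκ h1).const_mul K)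
  · refine ae_of_all _ fun u => by fun_prop

lemma conj_stF {k Y : ℝ} (h1 : 1 < Y) (u x : ℝ) :
    (starRingEnd ℂ) (Complex.exp (((0:ℝ) - Complex.I * u) * x) * Complex.exp (k * (((0:ℝ):ℂ) - Complex.I * u) ^ (Y:ℂ)))
    = Complex.exp (((0:ℝ) - Complex.I * (-u : ℝ)) * x) * Complex.exp (k * (((0:ℝ):ℂ) - Complex.I * (-u:ℝ)) ^ (Y:ℂ)) := by
  have e : ∀ u : ℝ, (((0:ℝ):ℂ) - Complex.I * u) = -(Complex.I * u) := by intro u; simp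
  simp only [e]
  rw [cpow_neg_I_mul h1, cpow_neg_I_mul h1, map_mul, ← Complex.exp_conj, ← Complex.exp_conj]
  simp only [map_mul, map_neg, map_sub, Complex.conj_ofReal, Complex.conj_I, abs_neg, Real.sign_neg]
  push_cast
  congr 2 <;> ring_nf

/-- `stF` is real and given by the half-line integral. -/
lemma stF_eq {k Y : ℝ} (hk : 0 < k) (h1 : 1 < Y) (h2 : Y < 2) (x : ℝ) :
    stF k Y 0 x = ((2 * (∫ u in Ioi (0:ℝ), Complex.exp (-(Complex.I * u) * x) * Complex.exp (k * (-(Complex.I * u)) ^ (Y:ℂ))).re : ℝ) : ℂ) := by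
  have e : ∀ u : ℝ, (((0:ℝ):ℂ) - Complex.I * u) = -(Complex.I * u) := by intro u; simp
  have hi := integrable_stF hk h1 h2 le_rfl x (s := 0)
  have hs := intervalIntegral.integral_Iic_add_Ioi (b := (0:ℝ)) hi.integrableOn hi.integrableOn
  have hneg := integral_comp_neg_Ioi 0 (fun u : ℝ => Complex.exp ((((0:ℝ):ℂ) - Complex.I * u) * x) * Complex.exp (k * (((0:ℝ):ℂ) - Complex.I * u) ^ (Y:ℂ)))
  simp only [← conj_stF h1, neg_zero] at hneg
  rw [integral_conj] at hneg
  rw [← hneg] at hs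
  rw [stF, ← hs, add_comm, Complex.add_conj]
  simp only [e]

lemma gb_integrable {p q b : ℝ} (hp : 0 < p) (hq : 0 < q) (hb : 0 < b) :
    Integrable fun ξ : ℝ => Real.exp (p * ξ - b * Real.exp (q * ξ)) := by
  have h := integrableOn_rpow_mul_exp_neg_mul_rpow (p := q) (s := p - 1) (b := b) (by linarith) hq hb
  refine (integrable_exp_subst _ h).congr (ae_of_all _ fun ξ => ?_)
  simp only
  rw [← Real.exp_mul, ← Real.exp_mul, ← Real.exp_add, ← Real.exp_add]
  congr 1; ring_nf

lemma gb_tendsto_top {p q b : ℝ} (hq : 0 < q) (hb : 0 < b) :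
    Tendsto (fun ξ : ℝ => Real.exp (p * ξ - b * Real.exp (q * ξ))) atTop (𝓝 0) := by
  have h := tendsto_rpow_mul_exp_neg_mul_atTop_nhds_zero (p / q) b hb
  have h2 : Tendsto (fun ξ : ℝ => Real.exp (q * ξ)) atTop atTop :=
    Real.tendsto_exp_atTop.comp (tendsto_id.const_mul_atTop hq)
  refine (h.comp h2).congr fun ξ => ?_
  simp only [Function.comp_def]
  rw [← Real.exp_mul, ← Real.exp_add]
  congr 1; field_simp; ring

lemma gb_tendsto_bot {p q b : ℝ} (hp : 0 < p) (hb : 0 < b) :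
    Tendsto (fun ξ : ℝ => Real.exp (p * ξ - b * Real.exp (q * ξ))) atBot (𝓝 0) := by
  have h : Tendsto (fun ξ : ℝ => Real.exp (p * ξ)) atBot (𝓝 0) :=
    Real.tendsto_exp_atBot.comp (tendsto_id.const_mul_atBot hp)
  refine squeeze_zero (fun _ => (Real.exp_pos _).le) (fun ξ => ?_) h
  apply Real.exp_le_exp.2
  have := Real.exp_pos (q * ξ)
  nlinarith

lemma exp_re_line (ξ y a : ℝ) : (Complex.exp (a * (ξ + y * Complex.I))).re = Real.exp (a * ξ) * Real.cos (a * y) := by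
  rw [Complex.exp_re]; simp

/-- rotation for the model integrals -/
lemma model_rot {x a : ℝ} (hx : 0 < x) (ha : 0 < a) :
    ∫ ξ : ℝ, Complex.exp (x * Complex.exp (ξ + (-(3*Real.pi/4) : ℝ) * Complex.I) + a * (ξ + (-(3*Real.pi/4) : ℝ) * Complex.I))
      = ((x ^ (-a) * Real.Gamma a : ℝ) : ℂ) * Complex.exp ((-(Real.pi * a) : ℝ) * Complex.I) := by
  have hsq : 0 < Real.sqrt 2 / 2 := by positivity
  have key := strip_shift (H := fun z => Complex.exp (x * Complex.exp z + a * z)) (a := -Real.pi)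
    (b := -(3*Real.pi/4)) (by linarith [Real.pi_pos]) (by fun_prop) (by fun_prop)
    (fun ξ => Real.exp (a * ξ - (x * (Real.sqrt 2 / 2)) * Real.exp (1 * ξ)))
    (gb_integrable ha one_pos (by positivity)) (gb_tendsto_top one_pos (by positivity))
    (gb_tendsto_bot ha (by positivity))
    (by
      intro ξ y h1 h2
      rw [Complex.norm_exp]
      apply Real.exp_le_exp.2
      have e := exp_re_line ξ y 1
      simp only [Complex.ofReal_one, one_mul] at e
      rw [Complex.add_re, Complex.re_ofReal_mul, e, Complex.re_ofReal_mul]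
      simp only [Complex.add_re, Complex.ofReal_re, Complex.re_ofReal_mul, Complex.I_re, mul_zero, add_zero, one_mul]
      have hc : Real.cos y ≤ - (Real.sqrt 2 / 2) := by
        rw [← Real.cos_pi_div_four, ← Real.cos_pi_sub, ← Real.cos_neg y]
        apply Real.cos_le_cos_of_nonneg_of_le_pi <;> linarith [Real.pi_pos]
      have := Real.exp_pos ξ
      have := mul_le_mul_of_nonneg_left hc (mul_pos hx this).le
      linarith)
  rw [← key]
  have hG := Real.integral_rpow_mul_exp_neg_mul_Ioi ha hx
  have h3 := integral_exp_subst (fun s => ((s ^ (a-1) * Real.exp (-(x * s)) : ℝ) : ℂ))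
  rw [integral_complex_ofReal, hG] at h3
  have e2 : ((x ^ (-a) * Real.Gamma a : ℝ) : ℂ) = (((1 / x) ^ a * Real.Gamma a : ℝ) : ℂ) := by
    rw [Real.rpow_neg hx.le, one_div, Real.inv_rpow hx.le]
  rw [e2, ← h3, ← integral_mul_const]
  congr 1; ext ξ
  rw [Complex.exp_add, Complex.exp_add (ξ:ℂ)]
  have e3 : Complex.exp ((-Real.pi : ℝ) * Complex.I) = -1 := by
    push_cast; rw [neg_mul, Complex.exp_neg, Complex.exp_pi_mul_I]; norm_num
  rw [e3, ← Real.exp_mul, ← Real.exp_add]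
  push_cast
  rw [← Complex.exp_add, ← Complex.exp_add, ← Complex.exp_add]
  congr 1; ring

lemma norm_exp_sub_le {w : ℂ} (hw : w.re ≤ 0) : ‖Complex.exp w - 1 - w‖ ≤ 3 * ‖w‖ ^ 2 := by
  by_cases h : ‖w‖ ≤ 1
  · have := Complex.norm_exp_sub_one_sub_id_le h
    nlinarith [sq_nonneg ‖w‖]
  · push Not at h
    have h1 : ‖Complex.exp w‖ ≤ 1 := by
      rw [Complex.norm_exp]; exact Real.exp_le_one_iff.2 hw
    calc _ ≤ ‖Complex.exp w - 1‖ + ‖w‖ := norm_sub_le _ _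
      _ ≤ ‖Complex.exp w‖ + ‖(1:ℂ)‖ + ‖w‖ := by gcongr; exact norm_sub_le _ _
      _ ≤ _ := by rw [norm_one]; nlinarith

lemma cos_range_neg {Y y : ℝ} (h1 : 1 < Y) (h2 : Y < 2) (hy1 : -(3*Real.pi/4) ≤ y) (hy2 : y ≤ -(Real.pi/2)) :
    Real.cos (Y * y) < 0 := by
  rw [← Real.cos_neg]
  have := Real.pi_pos
  apply Real.cos_neg_of_pi_div_two_lt_of_lt <;> nlinarith

/-- main rotation -/
lemma half_line_rot {k Y x : ℝ} (hk : 0 < k) (h1 : 1 < Y) (h2 : Y < 2) (hx : 0 < x) :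
    ∫ u in Ioi (0:ℝ), Complex.exp (-(Complex.I * u) * x) * Complex.exp (k * (-(Complex.I * u)) ^ (Y:ℂ))
     = Complex.I * ∫ ξ : ℝ, Complex.exp (x * Complex.exp (ξ + (-(3*Real.pi/4) : ℝ) * Complex.I)
        + k * Complex.exp (Y * (ξ + (-(3*Real.pi/4) : ℝ) * Complex.I)) + (ξ + (-(3*Real.pi/4) : ℝ) * Complex.I)) := by
  obtain ⟨y0, hy0, hmax⟩ := isCompact_Icc.exists_isMaxOn (s := Icc (-(3*Real.pi/4)) (-(Real.pi/2)))
    (by rw [nonempty_Icc]; linarith [Real.pi_pos]) (f := fun y => Real.cos (Y * y)) (by fun_prop)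
  have hκ := cos_range_neg h1 h2 hy0.1 hy0.2
  set κ := Real.cos (Y * y0) with hκd
  have key := strip_shift (H := fun z => Complex.exp (x * Complex.exp z + k * Complex.exp (Y * z) + z))
    (a := -(3*Real.pi/4)) (b := -(Real.pi/2)) (by linarith [Real.pi_pos]) (by fun_prop) (by fun_prop)
    (fun ξ => Real.exp (1 * ξ - (k * (-κ)) * Real.exp (Y * ξ)))
    (gb_integrable one_pos (by linarith) (by nlinarith)) (gb_tendsto_top (by linarith) (by nlinarith))
    (gb_tendsto_bot one_pos (by nlinarith))
    (by
      intro ξ y hy1 hy2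
      rw [Complex.norm_exp]
      apply Real.exp_le_exp.2
      have e := exp_re_line ξ y 1
      simp only [Complex.ofReal_one, one_mul] at e
      rw [Complex.add_re, Complex.add_re, Complex.re_ofReal_mul, e, Complex.re_ofReal_mul, exp_re_line]
      simp only [Complex.add_re, Complex.ofReal_re, Complex.re_ofReal_mul, Complex.I_re, mul_zero, add_zero, one_mul]
      have hc : Real.cos y ≤ 0 := by
        rw [← Real.cos_neg y]
        apply Real.cos_nonpos_of_pi_div_two_le_of_le <;> linarith [Real.pi_pos]
      have hc2 : Real.cos (Y * y) ≤ κ := hmax ⟨hy1, hy2⟩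
      have := Real.exp_pos ξ
      have := mul_nonneg (mul_pos hx this).le (neg_nonneg.2 hc)
      have := mul_le_mul_of_nonneg_left hc2 (mul_pos hk (Real.exp_pos (Y * ξ))).le
      linarith)
  rw [key, ← integral_exp_subst, ← integral_const_mul]
  congr 1; ext ξ
  have e3 : Complex.exp ((-(Real.pi/2) : ℝ) * Complex.I) = -Complex.I := by
    push_cast
    rw [neg_mul, Complex.exp_neg, Complex.exp_pi_div_two_mul_I, Complex.inv_I]
  have e4 : -(Complex.I * (Real.exp ξ : ℝ)) = ((Real.exp ξ : ℝ) : ℂ) * Complex.exp ((-(Real.pi/2) : ℝ) * Complex.I) := by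
    rw [e3]; ring
  have e5 : Complex.exp (ξ + (-(Real.pi/2) : ℝ) * Complex.I) = -(Complex.I * (Real.exp ξ : ℝ)) := by
    rw [e4, Complex.exp_add]; push_cast; ring
  have e6 : Complex.exp (Y * (ξ + (-(Real.pi/2) : ℝ) * Complex.I)) = (-(Complex.I * (Real.exp ξ : ℝ))) ^ (Y:ℂ) := by
    rw [e4, cpow_polar (Real.exp_pos ξ) (by linarith [Real.pi_pos]) (by linarith [Real.pi_pos]),
      ← Real.exp_mul, Complex.ofReal_exp, ← Complex.exp_add]
    congr 1; push_cast; ring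
  rw [Complex.exp_add, Complex.exp_add, e5, e6]
  rw [show (x:ℂ) * -(Complex.I * (Real.exp ξ : ℝ)) = -(Complex.I * (Real.exp ξ : ℝ)) * x by ring]
  linear_combination ((Real.exp ξ : ℂ) * Complex.exp (-(Complex.I * (Real.exp ξ : ℝ)) * x) * Complex.exp (k * (-(Complex.I * (Real.exp ξ : ℝ))) ^ (Y:ℂ))) * (Complex.I_mul_I)

lemma model_rot_integrable {x a : ℝ} (hx : 0 < x) (ha : 0 < a) :
    Integrable fun ξ : ℝ => Complex.exp (x * Complex.exp (ξ + (-(3*Real.pi/4) : ℝ) * Complex.I) + a * (ξ + (-(3*Real.pi/4) : ℝ) * Complex.I)) := by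
  refine (gb_integrable (p := a) (q := 1) (b := x * (Real.sqrt 2 / 2)) ha one_pos (by positivity)).mono'
    (by apply Continuous.aestronglyMeasurable; fun_prop) (ae_of_all _ fun ξ => ?_)
  rw [Complex.norm_exp]
  apply Real.exp_le_exp.2
  have e := exp_re_line ξ (-(3*Real.pi/4)) 1
  simp only [Complex.ofReal_one, one_mul] at e
  rw [Complex.add_re, Complex.re_ofReal_mul, e, Complex.re_ofReal_mul]
  simp only [Complex.add_re, Complex.ofReal_re, Complex.re_ofReal_mul, Complex.I_re, mul_zero, add_zero, one_mul]
  have hc : Real.cos (-(3*Real.pi/4)) = - (Real.sqrt 2 / 2) := by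
    rw [Real.cos_neg, ← Real.cos_pi_div_four, ← Real.cos_pi_sub]; congr 1; ring
  rw [hc]; apply le_of_eq; ring

lemma half_line_asymp {k Y : ℝ} (hk : 0 < k) (h1 : 1 < Y) (h2 : Y < 2) :
    ∃ B : ℝ, ∀ x : ℝ, 0 < x → 
    |(∫ u in Ioi (0:ℝ), Complex.exp (-(Complex.I * u) * x) * Complex.exp (k * (-(Complex.I * u)) ^ (Y:ℂ))).re
       - k * Real.Gamma (Y+1) * Real.sin (Real.pi * (Y+1)) * x ^ (-(Y+1))| ≤ B * x ^ (-(2*Y+1)) := by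
  refine ⟨3 * k^2 * ((Real.sqrt 2 / 2) ^ (-(2*Y+1)) * Real.Gamma (2*Y+1)), fun x hx => ?_⟩
  set y := -(3*Real.pi/4) with hy
  rw [half_line_rot hk h1 h2 hx]
  set R : ℝ → ℂ := fun ξ => Complex.exp (x * Complex.exp (ξ + (y : ℝ) * Complex.I) + (ξ + (y : ℝ) * Complex.I)) *
    (Complex.exp (k * Complex.exp (Y * (ξ + (y : ℝ) * Complex.I))) - 1 - k * Complex.exp (Y * (ξ + (y : ℝ) * Complex.I))) with hR
  have hcy : Real.cos y = - (Real.sqrt 2 / 2) := by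
    rw [hy, Real.cos_neg, ← Real.cos_pi_div_four, ← Real.cos_pi_sub]; congr 1; ring
  have hsq : 0 < Real.sqrt 2 / 2 := by positivity
  have hb : 0 < x * (Real.sqrt 2 / 2) := by positivity
  have hRb : ∀ ξ, ‖R ξ‖ ≤ 3 * k^2 * Real.exp ((2*Y+1) * ξ - (x * (Real.sqrt 2 / 2)) * Real.exp (1 * ξ)) := by
    intro ξ
    rw [hR, norm_mul]
    have hre : (k * Complex.exp (Y * (ξ + (y : ℝ) * Complex.I))).re ≤ 0 := by
      rw [Complex.re_ofReal_mul, exp_re_line]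
      have := cos_range_neg (y := y) h1 h2 le_rfl (by rw [hy]; linarith [Real.pi_pos])
      have := mul_pos hk (mul_pos (Real.exp_pos (Y * ξ)) (neg_pos.2 this))
      linarith
    have hn := norm_exp_sub_le hre
    have e := exp_re_line ξ y 1
    simp only [Complex.ofReal_one, one_mul] at e
    have hn1 : ‖Complex.exp (x * Complex.exp (ξ + (y : ℝ) * Complex.I) + (ξ + (y : ℝ) * Complex.I))‖ = 
       Real.exp (ξ - x * (Real.sqrt 2 / 2) * Real.exp ξ) := by
      rw [Complex.norm_exp, Complex.add_re, Complex.re_ofReal_mul, e, hcy]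
      congr 1
      simp
      ring
    have hn2 : ‖(k:ℂ) * Complex.exp (Y * (ξ + (y : ℝ) * Complex.I))‖ = k * Real.exp (Y * ξ) := by
      rw [norm_mul, Complex.norm_exp, Complex.norm_real, Real.norm_of_nonneg hk.le]
      congr 2; simp
    rw [hn2] at hn
    rw [hn1]
    refine (mul_le_mul_of_nonneg_left hn (Real.exp_pos _).le).trans (le_of_eq ?_)
    rw [mul_pow, ← Real.exp_nat_mul, show ((2*Y+1) * ξ - (x * (Real.sqrt 2 / 2)) * Real.exp (1 * ξ)) = (ξ - x * (Real.sqrt 2 / 2) * Real.exp ξ) + (2:ℕ) * (Y * ξ) by push_cast; ring_nf, Real.exp_add]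
    ring
  have hgi := (gb_integrable (p := 2*Y+1) (q := 1) (b := x * (Real.sqrt 2 / 2)) (by linarith) one_pos hb).const_mul (3 * k^2)
  have hRi : Integrable R := hgi.mono' (by apply Continuous.aestronglyMeasurable; rw [hR]; fun_prop) (ae_of_all _ hRb)
  have hval : ∫ ξ : ℝ, Real.exp ((2*Y+1) * ξ - (x * (Real.sqrt 2 / 2)) * Real.exp (1 * ξ)) = 
      (Real.sqrt 2 / 2) ^ (-(2*Y+1)) * Real.Gamma (2*Y+1) * x ^ (-(2*Y+1)) := by
    have hG := Real.integral_rpow_mul_exp_neg_mul_Ioi (a := 2*Y+1) (by linarith) hb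
    have h3 := integral_exp_subst (fun s => ((s ^ (2*Y+1-1) * Real.exp (-(x * (Real.sqrt 2 / 2) * s)) : ℝ) : ℂ))
    rw [integral_complex_ofReal, hG] at h3
    have h4 : ∫ ξ : ℝ, ((Real.exp ((2*Y+1) * ξ - (x * (Real.sqrt 2 / 2)) * Real.exp (1 * ξ)) : ℝ) : ℂ) = ((((1 / (x * (Real.sqrt 2 / 2))) ^ (2*Y+1) * Real.Gamma (2*Y+1)) : ℝ) : ℂ) := by
      rw [← h3]
      congr 1; ext ξ
      norm_cast
      rw [← Real.exp_mul, ← Real.exp_add, ← Real.exp_add]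
      congr 1; ring_nf
    rw [integral_complex_ofReal] at h4
    rw [Complex.ofReal_inj.1 h4, one_div, Real.inv_rpow hb.le, Real.mul_rpow hx.le hsq.le, Real.rpow_neg hx.le, Real.rpow_neg hsq.le]
    rw [mul_inv]; ring
  have hRn : ‖∫ ξ, R ξ‖ ≤ 3 * k^2 * ((Real.sqrt 2 / 2) ^ (-(2*Y+1)) * Real.Gamma (2*Y+1)) * x ^ (-(2*Y+1)) := by
    have := norm_integral_le_of_norm_le hgi (ae_of_all _ hRb)
    rw [integral_const_mul, hval] at this
    linarith
  have i1 := model_rot_integrable hx one_pos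
  have i2 := model_rot_integrable hx (by linarith : 0 < Y + 1)
  have m1 := model_rot hx one_pos
  have m2 := model_rot hx (by linarith : 0 < Y + 1)
  have hsplit : ∫ ξ : ℝ, Complex.exp (x * Complex.exp (ξ + (y : ℝ) * Complex.I)
        + k * Complex.exp (Y * (ξ + (y : ℝ) * Complex.I)) + (ξ + (y : ℝ) * Complex.I)) = 
      ((x ^ (-1:ℝ) * Real.Gamma 1 : ℝ) : ℂ) * Complex.exp ((-(Real.pi * 1) : ℝ) * Complex.I) + 
      k * (((x ^ (-(Y+1)) * Real.Gamma (Y+1) : ℝ) : ℂ) * Complex.exp ((-(Real.pi * (Y+1)) : ℝ) * Complex.I)) + ∫ ξ, R ξ := by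
    have i3 := i2.const_mul (k:ℂ)
    have i4 := i1.add i3
    rw [← m1, ← m2, ← integral_const_mul, ← integral_add i1 i3]
    refine Eq.trans ?_ (integral_add i4 hRi)
    congr 1; ext ξ
    rw [hR]
    simp only [Pi.add_apply]
    rw [← hy]
    set z := (ξ:ℂ) + (y:ℝ) * Complex.I
    have a1 : Complex.exp (x * Complex.exp z + k * Complex.exp (Y * z) + z) = Complex.exp (x * Complex.exp z + z) * Complex.exp (k * Complex.exp (Y * z)) := by
      rw [← Complex.exp_add]; congr 1; ring
    have a2 : Complex.exp (x * Complex.exp z + ((Y+1 : ℝ):ℂ) * z) = Complex.exp (x * Complex.exp z + z) * Complex.exp (Y * z) := by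
      rw [← Complex.exp_add]; congr 1; push_cast; ring
    rw [a1, a2, Complex.ofReal_one, one_mul]
    ring
  rw [hsplit, mul_add, mul_add, Complex.add_re, Complex.add_re]
  have r1 : (Complex.I * (((x ^ (-1:ℝ) * Real.Gamma 1 : ℝ) : ℂ) * Complex.exp ((-(Real.pi * 1) : ℝ) * Complex.I))).re = 0 := by
    rw [Complex.I_mul_re, Complex.im_ofReal_mul, Complex.exp_ofReal_mul_I_im, mul_one, Real.sin_neg, Real.sin_pi]; simp
  have r2 : (Complex.I * (k * (((x ^ (-(Y+1)) * Real.Gamma (Y+1) : ℝ) : ℂ) * Complex.exp ((-(Real.pi * (Y+1)) : ℝ) * Complex.I)))).re = k * Real.Gamma (Y+1) * Real.sin (Real.pi * (Y+1)) * x ^ (-(Y+1)) := by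
    rw [Complex.I_mul_re, Complex.im_ofReal_mul, Complex.im_ofReal_mul, Complex.exp_ofReal_mul_I_im, Real.sin_neg]; ring
  rw [r1, r2]
  have r3 : |(Complex.I * ∫ ξ, R ξ).re| ≤ ‖∫ ξ, R ξ‖ := by
    refine (Complex.abs_re_le_norm _).trans ?_
    rw [norm_mul, Complex.norm_I, one_mul]
  refine le_trans (le_of_eq ?_) (r3.trans hRn)
  congr 1; ring

/-- density asymptotics -/
lemma stF_asymp {C Y : ℝ} (hk : 0 < C * Real.Gamma (-Y)) (h1 : 1 < Y) (h2 : Y < 2) :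
    ∃ B : ℝ, ∀ x : ℝ, 0 < x → 
    |(stF (C * Real.Gamma (-Y)) Y 0 x).re / (2 * Real.pi) - C * x ^ (-(Y+1))| ≤ B * x ^ (-(2*Y+1)) := by
  obtain ⟨B, hB⟩ := half_line_asymp hk h1 h2
  refine ⟨B / Real.pi, fun x hx => ?_⟩
  have h := hB x hx
  rw [stF_eq hk h1 h2, Complex.ofReal_re]
  set J := (∫ u in Ioi (0:ℝ), Complex.exp (-(Complex.I * u) * x) * Complex.exp ((C * Real.Gamma (-Y) : ℝ) * (-(Complex.I * u)) ^ (Y:ℂ))).re with hJ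
  have hs : Real.sin (Real.pi * (Y+1)) ≠ 0 := by
    rw [mul_add, mul_one, Real.sin_add_pi, neg_ne_zero]
    have : Real.sin (Real.pi * Y) < 0 := by
      have := Real.sin_pos_of_pos_of_lt_pi (x := Real.pi * Y - Real.pi) (by nlinarith [Real.pi_pos]) (by nlinarith [Real.pi_pos])
      rw [Real.sin_sub_pi] at this; linarith
    exact this.ne
  have hg : Real.Gamma (-Y) * Real.Gamma (Y+1) * Real.sin (Real.pi * (Y+1)) = Real.pi := by
    have := Real.Gamma_mul_Gamma_one_sub (-Y)
    rw [show 1 - -Y = Y + 1 by ring] at this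
    have e : Real.sin (Real.pi * -Y) = Real.sin (Real.pi * (Y+1)) := by
      rw [mul_add, mul_one, Real.sin_add_pi, mul_neg, Real.sin_neg]
    rw [this, e]; field_simp
  have e2 : 2 * J / (2 * Real.pi) - C * x ^ (-(Y+1)) = (J - C * Real.Gamma (-Y) * Real.Gamma (Y + 1) * Real.sin (Real.pi * (Y + 1)) * x ^ (-(Y + 1))) / Real.pi := by
    rw [show C * Real.Gamma (-Y) * Real.Gamma (Y + 1) * Real.sin (Real.pi * (Y + 1)) = C * Real.pi from by linear_combination C * hg]
    field_simp
  rw [e2, abs_div, abs_of_pos Real.pi_pos, div_mul_eq_mul_div]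
  gcongr

/-- candidate density -/
noncomputable def stD (k Y x : ℝ) : ℝ := (stF k Y 0 x).re / (2 * Real.pi)

lemma continuous_stD {k Y : ℝ} (hk : 0 < k) (h1 : 1 < Y) (h2 : Y < 2) : Continuous (stD k Y) := by
  unfold stD
  exact (Complex.continuous_re.comp (continuous_stF hk h1 h2)).div_const _

lemma abs_stD_le_exp {k Y : ℝ} (hk : 0 < k) (h1 : 1 < Y) (h2 : Y < 2) {s : ℝ} (hs : 0 ≤ s) :
    ∃ B : ℝ, 0 ≤ B ∧ ∀ x : ℝ, |stD k Y x| ≤ B * Real.exp (s * x) := by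
  obtain ⟨B, hB⟩ := norm_stF_le hk h1 h2 hs
  refine ⟨|B|, abs_nonneg _, fun x => ?_⟩
  unfold stD
  rw [abs_div, abs_of_pos (by positivity : 0 < 2 * Real.pi), div_le_iff₀ (by positivity)]
  refine (Complex.abs_re_le_norm _).trans ((hB x).trans ?_)
  have h3 : 1 ≤ 2 * Real.pi := by linarith [Real.pi_gt_three]
  calc B * Real.exp (s * x) ≤ |B| * Real.exp (s*x) := by gcongr; exact le_abs_self B
    _ ≤ _ := le_mul_of_one_le_right (by positivity) h3

lemma abs_stD_le_rpow {C Y : ℝ} (hk : 0 < C * Real.Gamma (-Y)) (h1 : 1 < Y) (h2 : Y < 2) :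
    ∃ B : ℝ, 0 ≤ B ∧ ∀ x : ℝ, 1 ≤ x → |stD (C * Real.Gamma (-Y)) Y x| ≤ B * x ^ (-(Y+1)) := by
  obtain ⟨B, hB⟩ := stF_asymp hk h1 h2
  refine ⟨|C| + |B|, by positivity, fun x hx => ?_⟩
  have h := hB x (by linarith)
  have e : x ^ (-(2*Y+1)) ≤ x ^ (-(Y+1)) := Real.rpow_le_rpow_of_exponent_le hx (by linarith)
  have p : 0 < x ^ (-(2*Y+1)) := Real.rpow_pos_of_pos (by linarith) _
  have p' : 0 < x ^ (-(Y+1)) := Real.rpow_pos_of_pos (by linarith) _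
  have := abs_sub_abs_le_abs_sub (stD (C * Real.Gamma (-Y)) Y x) (C * x ^ (-(Y+1)))
  rw [abs_mul, abs_of_pos p'] at this
  have h3 : B * x ^ (-(2*Y+1)) ≤ |B| * x ^ (-(Y+1)) := by
    calc _ ≤ |B| * x ^ (-(2*Y+1)) := by gcongr; exact le_abs_self B
      _ ≤ _ := by gcongr
  unfold stD at *
  linarith

/-- weighted integrability of the density -/
lemma integrable_stD_mul {C Y : ℝ} (hk : 0 < C * Real.Gamma (-Y)) (h1 : 1 < Y) (h2 : Y < 2)
    {l : ℝ} (hl : 0 ≤ l) : 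
    Integrable fun x : ℝ => (1 + |x|) * Real.exp (-l * x) * stD (C * Real.Gamma (-Y)) Y x := by
  obtain ⟨B, hB0, hB⟩ := abs_stD_le_exp hk h1 h2 (s := l + 2) (by linarith)
  obtain ⟨B', hB0', hB'⟩ := abs_stD_le_rpow hk h1 h2
  have hc : Continuous fun x : ℝ => (1 + |x|) * Real.exp (-l * x) * stD (C * Real.Gamma (-Y)) Y x := by
    have := continuous_stD hk h1 h2
    fun_prop
  rw [← integrableOn_univ, ← Iic_union_Ioi (a := (1:ℝ))]
  refine IntegrableOn.union ?_ ?_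
  · have hi : IntegrableOn (fun x : ℝ => (B * 6) * Real.exp x) (Iic 1) := (integrableOn_exp_Iic 1).const_mul _
    refine hi.mono' hc.aestronglyMeasurable (ae_restrict_of_forall_mem measurableSet_Iic fun x hx => ?_)
    rw [norm_mul, norm_mul, Real.norm_eq_abs, Real.norm_eq_abs, Real.norm_eq_abs, abs_of_pos (Real.exp_pos _), abs_of_nonneg (by positivity : 0 ≤ 1 + |x|)]
    have hx1 : x ≤ 1 := hx
    have e1 : (1 + |x|) * Real.exp x ≤ 6 * 1 := by
      rcases le_total 0 x with h | h
      · rw [abs_of_nonneg h]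
        have : Real.exp x ≤ Real.exp 1 := Real.exp_le_exp.2 hx1
        have := Real.exp_one_lt_d9
        nlinarith [Real.exp_pos x]
      · rw [abs_of_nonpos h]
        have h3 := Real.add_one_le_exp (-x)
        have h4 : Real.exp (-x) * Real.exp x = 1 := by rw [← Real.exp_add]; simp
        nlinarith [Real.exp_pos x]
    calc (1 + |x|) * Real.exp (-l * x) * |stD (C * Real.Gamma (-Y)) Y x| ≤ (1 + |x|) * Real.exp (-l * x) * (B * Real.exp ((l+2) * x)) := by gcongr; exact hB x
      _ = B * ((1 + |x|) * Real.exp x) * Real.exp x := by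
        rw [show (l+2)*x = l * x + x + x by ring, Real.exp_add, Real.exp_add, show -l * x = -(l*x) by ring, Real.exp_neg]
        field_simp
      _ ≤ B * (6*1) * Real.exp x := by gcongr
      _ = _ := by ring
  · have hi : IntegrableOn (fun x : ℝ => (2 * B') * x ^ (-Y)) (Ioi 1) := (integrableOn_Ioi_rpow_of_lt (by linarith) one_pos).const_mul _
    refine hi.mono' hc.aestronglyMeasurable (ae_restrict_of_forall_mem measurableSet_Ioi fun x hx => ?_)
    rw [norm_mul, norm_mul, Real.norm_eq_abs, Real.norm_eq_abs, Real.norm_eq_abs, abs_of_pos (Real.exp_pos _), abs_of_nonneg (by positivity : 0 ≤ 1 + |x|)]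
    have hx1 : 1 < x := hx
    rw [abs_of_pos (by linarith : 0 < x)]
    calc (1 + x) * Real.exp (-l * x) * |stD (C * Real.Gamma (-Y)) Y x| ≤ (2 * x) * 1 * (B' * x ^ (-(Y+1))) := by
          gcongr
          · linarith
          · rw [Real.exp_le_one_iff]; nlinarith
          · exact hB' x hx1.le
      _ = 2 * B' * (x * x ^ (-(Y+1))) := by ring
      _ = _ := by 
        congr 1
        nth_rewrite 1 [← Real.rpow_one x]
        rw [← Real.rpow_add (by linarith)]; congr 1; ring

lemma stF_real {k Y : ℝ} (hk : 0 < k) (h1 : 1 < Y) (h2 : Y < 2) (x : ℝ) :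
    stF k Y 0 x = ((2 * Real.pi * stD k Y x : ℝ) : ℂ) := by
  have : (stF k Y 0 x) = ((stF k Y 0 x).re : ℂ) := by rw [stF_eq hk h1 h2]; simp
  rw [this, stD]; congr 1; field_simp

open FourierTransform in
lemma stD_fourier {C Y : ℝ} (hk : 0 < C * Real.Gamma (-Y)) (h1 : 1 < Y) (h2 : Y < 2)
    {l : ℝ} (hl : 0 ≤ l) (u : ℝ) :
    ∫ x : ℝ, Complex.exp (-(((l:ℂ) - Complex.I * u)) * x) * (stD (C * Real.Gamma (-Y)) Y x : ℂ)
      = Complex.exp ((C * Real.Gamma (-Y) : ℝ) * ((l:ℂ) - Complex.I * u) ^ (Y:ℂ)) := by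
  set k := C * Real.Gamma (-Y) with hkd
  set h : ℝ → ℂ := fun u => Complex.exp (k * ((l:ℂ) - Complex.I * u) ^ (Y:ℂ)) with hh
  have hi : Integrable h := by
    have := integrable_stF hk h1 h2 hl 0
    simpa using this
  have hcont : Continuous h := by
    refine Complex.continuous_exp.comp (Continuous.mul (by fun_prop) ?_)
    exact (continuousOn_cpow_halfplane (by linarith)).comp_continuous (by fun_prop) (fun u => by simpa using hl)
  have hF : ∀ ξ : ℝ, 𝓕 h ξ = ((2 * Real.pi * (Real.exp (-l * (2 * Real.pi * ξ)) * stD k Y (2 * Real.pi * ξ)) : ℝ) : ℂ) := by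
    intro ξ
    rw [Real.fourier_eq']
    have e := stF_shift hk h1 h2 hl (2 * Real.pi * ξ)
    rw [stF_real hk h1 h2] at e
    have e2 : stF k Y l (2 * Real.pi * ξ) = Complex.exp (l * (2 * Real.pi * ξ)) * ∫ v : ℝ, Complex.exp (((-2 * Real.pi * inner ℝ v ξ : ℝ) : ℂ) * Complex.I) • h v := by
      rw [stF, ← integral_const_mul]
      congr 1; ext v
      rw [hh, smul_eq_mul, ← mul_assoc]
      congr 1
      rw [← Complex.exp_add]
      congr 1
      simp
      ring
    rw [e2] at e
    push_cast
    have e3 : Complex.exp (-(l * (2 * Real.pi * ξ))) * Complex.exp (l * (2 * Real.pi * ξ)) = 1 := by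
      rw [← Complex.exp_add]; simp
    rw [show (-(l:ℂ) * (2 * Real.pi * ξ)) = -(l * (2 * Real.pi * ξ)) by ring]
    push_cast at e
    push_cast
    linear_combination -(∫ v : ℝ, Complex.exp ((-2 * Real.pi * ((inner ℝ v ξ : ℝ) : ℂ) ) * Complex.I) • h v) * e3 - Complex.exp (-(l * (2 * Real.pi * ξ))) * e
  have hw : Integrable fun x : ℝ => Real.exp (-l * x) * stD k Y x := by
    refine (integrable_stD_mul hk h1 h2 hl).mono ?_ (ae_of_all _ fun x => ?_)
    · have := continuous_stD hk h1 h2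
      apply Continuous.aestronglyMeasurable; fun_prop
    · rw [mul_assoc, norm_mul (1 + |x|)]
      refine le_mul_of_one_le_left (norm_nonneg _) ?_
      rw [Real.norm_of_nonneg (by positivity)]
      linarith [abs_nonneg x]
  have hFi : Integrable (𝓕 h) := by
    have : 𝓕 h = fun ξ : ℝ => ((2 * Real.pi * (Real.exp (-l * (2 * Real.pi * ξ)) * stD k Y (2 * Real.pi * ξ)) : ℝ) : ℂ) := funext hF
    rw [this]
    exact ((hw.comp_mul_left' (R := 2 * Real.pi) (by positivity)).const_mul (2 * Real.pi)).ofReal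
  have inv := congrFun (hcont.fourierInv_fourier_eq hi hFi) u
  rw [Real.fourierInv_eq'] at inv
  rw [show Complex.exp (k * ((l:ℂ) - Complex.I * u) ^ (Y:ℂ)) = h u from rfl, ← inv]
  have sub := Measure.integral_comp_mul_left (fun x : ℝ => (2 * Real.pi : ℂ) * (Complex.exp (-(((l:ℂ) - Complex.I * u)) * x) * (stD k Y x : ℂ))) (2 * Real.pi)
  rw [abs_of_pos (by positivity)] at sub
  have e5 : (∫ (x : ℝ), Complex.exp (-(((l:ℂ) - Complex.I * u)) * x) * (stD k Y x : ℂ)) = (2 * Real.pi)⁻¹ • ((2 * Real.pi:ℂ) * ∫ (x : ℝ), Complex.exp (-(((l:ℂ) - Complex.I * u)) * x) * (stD k Y x : ℂ)) := by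
    rw [Complex.real_smul]; push_cast
    have : (Real.pi : ℂ) ≠ 0 := by exact_mod_cast Real.pi_ne_zero
    field_simp
  rw [e5, ← integral_const_mul, ← sub]
  congr 1; ext ξ
  rw [hF, smul_eq_mul]
  push_cast
  have e6 : Complex.exp (-((l:ℂ) - Complex.I * u) * (2 * Real.pi * ξ)) = Complex.exp (2 * Real.pi * ((inner ℝ ξ u : ℝ):ℂ) * Complex.I) * Complex.exp (-l * (2 * Real.pi * ξ)) := by
    rw [← Complex.exp_add]; congr 1
    simp; ring
  rw [e6]; ring

lemma gamma_neg_pos {Y : ℝ} (h1 : 1 < Y) (h2 : Y < 2) : 0 < Real.Gamma (-Y) := by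
  have e1 := Real.Gamma_add_one (s := -Y) (by linarith)
  have e2 := Real.Gamma_add_one (s := -Y+1) (by linarith)
  have p := Real.Gamma_pos_of_pos (s := -Y+1+1) (by linarith)
  rw [e2, e1] at p
  have : 0 < (-Y+1) * (-Y) := by nlinarith
  have e3 : (-Y+1) * (-Y * Real.Gamma (-Y)) = ((-Y+1) * (-Y)) * Real.Gamma (-Y) := by ring
  rw [e3] at p
  exact (pos_iff_pos_of_mul_pos p).1 this

lemma integrable_stD {C Y : ℝ} (hk : 0 < C * Real.Gamma (-Y)) (h1 : 1 < Y) (h2 : Y < 2) :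
    Integrable (stD (C * Real.Gamma (-Y)) Y) := by
  refine (integrable_stD_mul hk h1 h2 le_rfl).mono (continuous_stD hk h1 h2).aestronglyMeasurable (ae_of_all _ fun x => ?_)
  rw [neg_zero, zero_mul, Real.exp_zero, mul_one, norm_mul]
  refine le_mul_of_one_le_left (norm_nonneg _) ?_
  rw [Real.norm_of_nonneg (by positivity)]
  linarith [abs_nonneg x]

/-- integrals against pos/neg parts -/
lemma integral_pos_sub_neg {E : Type*} [NormedAddCommGroup E] [NormedSpace ℝ E]
    {f : ℝ → ℝ} (hf : Measurable f) {g : ℝ → E} (hg : StronglyMeasurable g) 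
    (hi : Integrable fun x => f x • g x) :
    Integrable g (volume.withDensity fun x => ENNReal.ofReal (f x)) ∧
    Integrable g (volume.withDensity fun x => ENNReal.ofReal (-f x)) ∧
    (∫ x, g x ∂(volume.withDensity fun x => ENNReal.ofReal (f x))) - 
     (∫ x, g x ∂(volume.withDensity fun x => ENNReal.ofReal (-f x))) = ∫ x, f x • g x := by
  have a : ∀ f : ℝ → ℝ, Measurable f → (Integrable fun x => f x • g x) → 
      Integrable g (volume.withDensity fun x => ENNReal.ofReal (f x)) := by
    intro f hf hi
    rw [integrable_withDensity_iff_integrable_smul' (by fun_prop) (by simp)]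
    refine hi.mono (by 
      refine AEStronglyMeasurable.smul ?_ hg.aestronglyMeasurable
      apply Measurable.aestronglyMeasurable
      fun_prop) (ae_of_all _ fun x => ?_)
    rw [norm_smul, norm_smul]
    gcongr
    rw [ENNReal.toReal_ofReal', Real.norm_eq_abs, Real.norm_eq_abs]
    exact abs_max_le_max_abs_abs.trans (by simp)
  have b : ∀ f : ℝ → ℝ, Measurable f → 
      (∫ x, g x ∂(volume.withDensity fun x => ENNReal.ofReal (f x))) = ∫ x, max (f x) 0 • g x := by
    intro f hf 
    rw [integral_withDensity_eq_integral_toReal_smul (by fun_prop) (by simp)]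
    simp only [ENNReal.toReal_ofReal']
  have hi' : Integrable fun x => (-f x) • g x := by simpa using hi.neg
  have i1 := a f hf hi
  have i2 := a (fun x => - f x) hf.neg hi'
  refine ⟨i1, i2, ?_⟩
  rw [integrable_withDensity_iff_integrable_smul' (by fun_prop) (by simp)] at i1 i2
  simp only [ENNReal.toReal_ofReal'] at i1 i2
  rw [b f hf, b (fun x => - f x) hf.neg, ← integral_sub i1 i2]
  congr 1; ext x
  rw [← sub_smul]
  congr 1
  rcases le_total 0 (f x) with h | h
  · rw [max_eq_left h, max_eq_right (by linarith), sub_zero]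
  · rw [max_eq_right h, max_eq_left (by linarith)]; ring

lemma law_integral {C Y : ℝ} (hk : 0 < C * Real.Gamma (-Y)) (h1 : 1 < Y) (h2 : Y < 2)
    (m : Measure ℝ) [IsProbabilityMeasure m]
    (hm : ∀ u : ℝ, ∫ x, Complex.exp (Complex.I * u * x) ∂m = Complex.exp ((C * Real.Gamma (-Y) : ℝ) * (-(Complex.I * u)) ^ (Y:ℂ)))
    {E : Type*} [NormedAddCommGroup E] [NormedSpace ℝ E] {g : ℝ → E} (hg : StronglyMeasurable g) 
    (hi : Integrable fun x => stD (C * Real.Gamma (-Y)) Y x • g x) :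
    Integrable g m ∧ ∫ x, g x ∂m = ∫ x, stD (C * Real.Gamma (-Y)) Y x • g x := by
  set f := stD (C * Real.Gamma (-Y)) Y with hfd
  have hf : Measurable f := (continuous_stD hk h1 h2).measurable
  have hfi : Integrable f := integrable_stD hk h1 h2
  have : IsFiniteMeasure (volume.withDensity fun x => ENNReal.ofReal (f x)) := isFiniteMeasure_withDensity_ofReal hfi.2
  have : IsFiniteMeasure (volume.withDensity fun x => ENNReal.ofReal (-f x)) := isFiniteMeasure_withDensity_ofReal hfi.neg.2
  have key : m + (volume.withDensity fun x => ENNReal.ofReal (-f x)) = (volume.withDensity fun x => ENNReal.ofReal (f x)) := by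
    apply Measure.ext_of_charFun
    ext u
    have hsm : StronglyMeasurable fun x : ℝ => Complex.exp (u * x * Complex.I) := by
      apply Continuous.stronglyMeasurable; fun_prop
    have hn : ∀ x : ℝ, ‖Complex.exp (u * x * Complex.I)‖ = 1 := by
      intro x; rw [← Complex.ofReal_mul, Complex.norm_exp_ofReal_mul_I]
    obtain ⟨i1, i2, i3⟩ := integral_pos_sub_neg hf hsm (hfi.norm.mono' (by 
       apply AEStronglyMeasurable.smul hf.aestronglyMeasurable hsm.aestronglyMeasurable) (ae_of_all _ fun x => by rw [norm_smul, hn, mul_one]))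
    have i0 : Integrable (fun x : ℝ => Complex.exp (u * x * Complex.I)) m := by
      refine (integrable_const (1:ℝ)).mono' hsm.aestronglyMeasurable (ae_of_all _ fun x => (hn x).le)
    rw [charFun_apply_real, charFun_apply_real, integral_add_measure i0 i2, sub_eq_iff_eq_add.1 i3]
    congr 1
    have e := stD_fourier hk h1 h2 le_rfl u
    simp only [Complex.ofReal_zero, zero_sub] at e
    have e' := hm u
    rw [← e] at e'
    convert e' using 3 with x x
    · congr 1; ring
    · rw [Complex.real_smul, mul_comm]; congr 2; ring
  obtain ⟨i1, i2, i3⟩ := integral_pos_sub_neg hf hg hi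
  rw [← key] at i1 i3
  have im := i1.left_of_add_measure
  refine ⟨im, ?_⟩
  rw [← i3, integral_add_measure im i2]; simp

section facts
variable {C Y : ℝ} (hk : 0 < C * Real.Gamma (-Y)) (h1 : 1 < Y) (h2 : Y < 2)
    (m : Measure ℝ) [IsProbabilityMeasure m]
    (hm : ∀ u : ℝ, ∫ x, Complex.exp (Complex.I * u * x) ∂m = Complex.exp ((C * Real.Gamma (-Y) : ℝ) * (-(Complex.I * u)) ^ (Y:ℂ)))

theorem law_laplace (hk : 0 < C * Real.Gamma (-Y)) (h1 : 1 < Y) (h2 : Y < 2)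
    (m : Measure ℝ) [IsProbabilityMeasure m]
    (hm : ∀ u : ℝ, ∫ x, Complex.exp (Complex.I * u * x) ∂m = Complex.exp ((C * Real.Gamma (-Y) : ℝ) * (-(Complex.I * u)) ^ (Y:ℂ)))
    (z : ℂ) (hz : 0 ≤ z.re) :
    Integrable (fun x : ℝ => Complex.exp (-z * x)) m ∧ 
    ∫ x : ℝ, Complex.exp (-z * x) ∂m = Complex.exp ((C * Real.Gamma (-Y) : ℝ) * z ^ (Y:ℂ)) := by
  have hz' : z = ((z.re:ℝ):ℂ) - Complex.I * ((-z.im : ℝ) : ℂ) := by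
    apply Complex.ext <;> simp
  have hsm : StronglyMeasurable fun x : ℝ => Complex.exp (-z * x) := by
      apply Continuous.stronglyMeasurable; fun_prop
  have hi : Integrable fun x => stD (C * Real.Gamma (-Y)) Y x • Complex.exp (-z * x) := by
    refine (integrable_stD_mul hk h1 h2 hz).mono ?_ (ae_of_all _ fun x => ?_)
    · exact AEStronglyMeasurable.smul (continuous_stD hk h1 h2).aestronglyMeasurable hsm.aestronglyMeasurable
    · rw [norm_smul, norm_mul, norm_mul, Complex.norm_exp, mul_comm ‖stD _ _ _‖]
      gcongr
      rw [Real.norm_of_nonneg (Real.exp_pos _).le, Real.norm_of_nonneg (by positivity)]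
      simp
      nlinarith [Real.exp_pos (-(z.re * x)), abs_nonneg x]
  obtain ⟨a, b⟩ := law_integral hk h1 h2 m hm hsm hi
  refine ⟨a, ?_⟩
  rw [b]
  have e := stD_fourier hk h1 h2 hz (-z.im)
  rw [← hz'] at e
  rw [← e]
  congr 1; ext x; rw [Complex.real_smul, mul_comm]

theorem law_weight (hk : 0 < C * Real.Gamma (-Y)) (h1 : 1 < Y) (h2 : Y < 2)
    (m : Measure ℝ) [IsProbabilityMeasure m]
    (hm : ∀ u : ℝ, ∫ x, Complex.exp (Complex.I * u * x) ∂m = Complex.exp ((C * Real.Gamma (-Y) : ℝ) * (-(Complex.I * u)) ^ (Y:ℂ)))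
    {l : ℝ} (hl : 0 ≤ l) :
    Integrable (fun x : ℝ => (1 + |x|) * Real.exp (-l * x)) m := by
  refine (law_integral hk h1 h2 m hm (by apply Continuous.stronglyMeasurable; fun_prop) ?_).1
  refine (integrable_stD_mul hk h1 h2 hl).congr (ae_of_all _ fun x => ?_)
  simp only [smul_eq_mul]; ring

theorem law_exp (hk : 0 < C * Real.Gamma (-Y)) (h1 : 1 < Y) (h2 : Y < 2)
    (m : Measure ℝ) [IsProbabilityMeasure m]
    (hm : ∀ u : ℝ, ∫ x, Complex.exp (Complex.I * u * x) ∂m = Complex.exp ((C * Real.Gamma (-Y) : ℝ) * (-(Complex.I * u)) ^ (Y:ℂ)))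
    {l : ℝ} (hl : 0 ≤ l) :
    Integrable (fun x : ℝ => Real.exp (-l * x)) m ∧ ∫ x, Real.exp (-l * x) ∂m = Real.exp (C * Real.Gamma (-Y) * l ^ Y) := by
  obtain ⟨a, b⟩ := law_laplace hk h1 h2 m hm (l:ℂ) (by simpa using hl)
  constructor
  · have := a.re
    refine this.congr (ae_of_all _ fun x => ?_)
    simp only [RCLike.re_to_complex]
    rw [← Complex.ofReal_re (Real.exp (-l * x))]; congr 1; push_cast; rfl
  · have : ∫ x : ℝ, Complex.exp (-(l:ℂ) * x) ∂m = ((∫ x, Real.exp (-l * x) ∂m : ℝ) : ℂ) := by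
      rw [← integral_complex_ofReal]; congr 1; ext x; push_cast; rfl
    rw [this, ← Complex.ofReal_cpow hl] at b
    exact_mod_cast b

theorem law_mean (hk : 0 < C * Real.Gamma (-Y)) (h1 : 1 < Y) (h2 : Y < 2)
    (m : Measure ℝ) [IsProbabilityMeasure m]
    (hm : ∀ u : ℝ, ∫ x, Complex.exp (Complex.I * u * x) ∂m = Complex.exp ((C * Real.Gamma (-Y) : ℝ) * (-(Complex.I * u)) ^ (Y:ℂ))) :
    Integrable (fun x : ℝ => x) m ∧ ∫ x, x ∂m = 0 := by
  have w0 := law_weight hk h1 h2 m hm le_rfl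
  have w1 := law_weight hk h1 h2 m hm zero_le_one
  have hi : Integrable (fun x : ℝ => x) m := by
    refine w0.mono (by fun_prop) (ae_of_all _ fun x => ?_)
    simp only [neg_zero, zero_mul, Real.exp_zero, mul_one]
    rw [Real.norm_eq_abs, Real.norm_of_nonneg (by positivity)]; linarith [abs_nonneg x]
  refine ⟨hi, ?_⟩
  have hd : ∀ x : ℝ, Tendsto (fun l : ℝ => (Real.exp (-l * x) - 1) / l) (𝓝[>] 0) (𝓝 (-x)) := by
    intro x
    have : HasDerivAt (fun l : ℝ => Real.exp (-l * x)) (-x) 0 := by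
      have := ((hasDerivAt_id (0:ℝ)).neg.mul_const x).exp
      simpa using this
    have t := this.tendsto_slope_zero_right
    refine t.congr fun l => ?_
    simp; ring
  have lim1 : Tendsto (fun l : ℝ => ∫ x, (Real.exp (-l * x) - 1) / l ∂m) (𝓝[>] 0) (𝓝 (∫ x, -x ∂m)) := by
    refine tendsto_integral_filter_of_dominated_convergence (fun x => (1 + |x|) * Real.exp (-0 * x) + (1 + |x|) * Real.exp (-1 * x)) ?_ ?_ (w0.add w1) (ae_of_all _ hd)
    · exact Eventually.of_forall fun l => (by fun_prop)
    · have : Ioc (0:ℝ) 1 ∈ 𝓝[>] (0:ℝ) := Ioc_mem_nhdsGT one_pos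
      filter_upwards [this] with l hl
      refine ae_of_all _ fun x => ?_
      have hl0 := hl.1
      rw [norm_div, Real.norm_of_nonneg hl0.le, div_le_iff₀ hl0, Real.norm_eq_abs]
      simp only [neg_zero, zero_mul, Real.exp_zero, mul_one]
      have ep := Real.exp_pos (-1 * x)
      rcases le_total 0 x with h | h
      · have a1 := Real.add_one_le_exp (-l * x)
        have a2 : Real.exp (-l * x) ≤ 1 := Real.exp_le_one_iff.2 (by nlinarith)
        rw [abs_of_nonpos (by linarith), abs_of_nonneg h]
        have : 0 ≤ (1 + x) * Real.exp (-1 * x) * l := by positivity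
        nlinarith
      · have a1 := Real.add_one_le_exp (l * x)
        have a2 : 1 ≤ Real.exp (-l * x) := Real.one_le_exp (by nlinarith)
        have a3 : Real.exp (-l * x) * Real.exp (l * x) = 1 := by rw [← Real.exp_add]; simp
        have a4 : Real.exp (-l * x) ≤ Real.exp (-1 * x) := Real.exp_le_exp.2 (by nlinarith [hl.2])
        rw [abs_of_nonneg (by linarith), abs_of_nonpos h]
        have : Real.exp (-l * x) - 1 ≤ Real.exp (-l * x) * (-(l * x)) := by nlinarith [Real.exp_pos (-l * x)]
        have b1 : Real.exp (-l * x) * (-(l * x)) ≤ Real.exp (-1 * x) * (-(l * x)) := by 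
          apply mul_le_mul_of_nonneg_right a4; nlinarith
        have b2 : 0 ≤ (1 + -x) * l := by apply mul_nonneg <;> linarith
        have b3 : 0 ≤ Real.exp (-1 * x) * l := by positivity
        nlinarith
  have lim2 : Tendsto (fun l : ℝ => ∫ x, (Real.exp (-l * x) - 1) / l ∂m) (𝓝[>] 0) (𝓝 0) := by
    have e : (fun l : ℝ => (Real.exp (C * Real.Gamma (-Y) * l ^ Y) - 1) / l) =ᶠ[𝓝[>] 0] fun l : ℝ => ∫ x, (Real.exp (-l * x) - 1) / l ∂m := by
      filter_upwards [self_mem_nhdsWithin] with l hl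
      obtain ⟨a, b⟩ := law_exp hk h1 h2 m hm (le_of_lt hl)
      rw [integral_div, integral_sub a (integrable_const _), b]; simp
    refine Tendsto.congr' e ?_
    have hd : HasDerivAt (fun l : ℝ => Real.exp (C * Real.Gamma (-Y) * l ^ Y)) 0 0 := by
      have := ((Real.hasDerivAt_rpow_const (x := 0) (p := Y) (Or.inr h1.le)).const_mul (C * Real.Gamma (-Y))).exp
      rw [Real.zero_rpow (x := Y - 1) (by linarith)] at this
      simpa using this
    refine hd.tendsto_slope_zero_right.congr fun l => ?_
    simp [Real.zero_rpow (x := Y) (by linarith)]; ring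
  have := tendsto_nhds_unique lim1 lim2
  rw [integral_neg] at this
  linarith

theorem law_tail (hk : 0 < C * Real.Gamma (-Y)) (h1 : 1 < Y) (h2 : Y < 2)
    (m : Measure ℝ) [IsProbabilityMeasure m]
    (hm : ∀ u : ℝ, ∫ x, Complex.exp (Complex.I * u * x) ∂m = Complex.exp ((C * Real.Gamma (-Y) : ℝ) * (-(Complex.I * u)) ^ (Y:ℂ))) :
    ∃ B : ℝ, 0 ≤ B ∧ ∀ x : ℝ, 0 < x → |m.real (Ici x) - C / Y * x ^ (-Y)| ≤ B * x ^ (-(2 * Y)) := by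
  obtain ⟨B, hB⟩ := stF_asymp hk h1 h2
  have hB0 : 0 ≤ B := by
    have := (abs_nonneg _).trans (hB 1 one_pos)
    simpa using this
  refine ⟨B / (2 * Y), by positivity, fun x hx => ?_⟩
  have hfi := integrable_stD hk h1 h2
  have hind : (fun y => stD (C * Real.Gamma (-Y)) Y y • (Ici x).indicator (fun _ => (1:ℝ)) y) = (Ici x).indicator (stD (C * Real.Gamma (-Y)) Y) := by
    ext y; by_cases h : y ∈ Ici x <;> simp [h]
  have h3 := (law_integral hk h1 h2 m hm (g := (Ici x).indicator fun _ => (1:ℝ)) (stronglyMeasurable_const.indicator measurableSet_Ici) (by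
     rw [hind]; exact hfi.indicator measurableSet_Ici)).2
  rw [hind, integral_indicator measurableSet_Ici, integral_indicator measurableSet_Ici, integral_Ici_eq_integral_Ioi (μ := volume)] at h3
  simp only [integral_const, smul_eq_mul, mul_one, MeasurableSet.univ, measureReal_restrict_apply, univ_inter] at h3
  rw [h3]
  have j1 : IntegrableOn (fun s : ℝ => s ^ (-(Y+1))) (Ioi x) := integrableOn_Ioi_rpow_of_lt (by linarith) hx
  have j2 : IntegrableOn (fun s : ℝ => s ^ (-(2*Y+1))) (Ioi x) := integrableOn_Ioi_rpow_of_lt (by linarith) hx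
  have v1 : ∫ s in Ioi x, C * s ^ (-(Y+1)) = C / Y * x ^ (-Y) := by
    rw [integral_const_mul, integral_Ioi_rpow_of_lt (by linarith) hx, show -(Y+1)+1 = -Y by ring]; 
    field_simp
  have v2 : ∫ s in Ioi x, B * s ^ (-(2*Y+1)) = B / (2 * Y) * x ^ (-(2*Y)) := by
    rw [integral_const_mul, integral_Ioi_rpow_of_lt (by linarith) hx, show -(2*Y+1)+1 = -(2*Y) by ring]; 
    field_simp
  rw [← v1, ← v2, ← integral_sub hfi.integrableOn (j1.const_mul C), ← Real.norm_eq_abs]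
  refine norm_integral_le_of_norm_le (j2.const_mul B) (ae_restrict_of_forall_mem measurableSet_Ioi fun s hs => ?_)
  exact hB s (hx.trans hs)

end facts

structure StLaw (C Y : ℝ) (m : Measure ℝ) : Prop where
  hC : 0 < C
  h1 : 1 < Y
  h2 : Y < 2
  prob : IsProbabilityMeasure m
  lap : ∀ z : ℂ, 0 ≤ z.re → Integrable (fun x : ℝ => Complex.exp (-z * x)) m ∧ 
    ∫ x : ℝ, Complex.exp (-z * x) ∂m = Complex.exp ((C * Real.Gamma (-Y) : ℝ) * z ^ (Y:ℂ))
  ex : ∀ l : ℝ, 0 ≤ l → Integrable (fun x : ℝ => Real.exp (-l * x)) m ∧ 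
    ∫ x, Real.exp (-l * x) ∂m = Real.exp (C * Real.Gamma (-Y) * l ^ Y)
  mean : Integrable (fun x : ℝ => x) m ∧ ∫ x, x ∂m = 0
  tail : ∃ B : ℝ, 0 ≤ B ∧ ∀ x : ℝ, 0 < x → |m.real (Ici x) - C / Y * x ^ (-Y)| ≤ B * x ^ (-(2 * Y))

lemma stLaw_of_char {C Y : ℝ} (hC : 0 < C) (h1 : 1 < Y) (h2 : Y < 2)
    (m : Measure ℝ) [IsProbabilityMeasure m]
    (hm : ∀ u : ℝ, ∫ x, Complex.exp (Complex.I * u * x) ∂m = Complex.exp ((C * Real.Gamma (-Y) : ℝ) * (-(Complex.I * u)) ^ (Y:ℂ))) :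
    StLaw C Y m := by
  have hk : 0 < C * Real.Gamma (-Y) := mul_pos hC (gamma_neg_pos h1 h2)
  exact ⟨hC, h1, h2, inferInstance, law_laplace hk h1 h2 m hm, fun l hl => law_exp hk h1 h2 m hm hl,
    law_mean hk h1 h2 m hm, law_tail hk h1 h2 m hm⟩

lemma rpow_neg_diff {Y p q r : ℝ} (hY : 0 < Y) (hr : 0 < r) (hp : r ≤ p) (hq : r ≤ q) :
    |p ^ (-Y) - q ^ (-Y)| ≤ Y * r ^ (-(Y+1)) * |p - q| := by
  have := Convex.norm_image_sub_le_of_norm_hasDerivWithin_le (f := fun x : ℝ => x ^ (-Y)) (f' := fun x => (-Y) * x ^ (-Y-1)) (s := Ici r) (x := q) (y := p) (C := Y * r ^ (-(Y+1))) ?_ ?_ (convex_Ici r) hq hp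
  · simpa using this
  · intro x hx
    exact (Real.hasDerivAt_rpow_const (Or.inl (hr.trans_le hx).ne')).hasDerivWithinAt
  · intro x hx
    rw [norm_mul, norm_neg, Real.norm_of_nonneg hY.le, Real.norm_of_nonneg (Real.rpow_nonneg (hr.le.trans hx) _), show -Y - 1 = -(Y+1) by ring]
    exact mul_le_mul_of_nonneg_left (Real.rpow_le_rpow_of_nonpos hr hx (by linarith)) hY.le

set_option maxHeartbeats 1000000 in
/-- slice estimate -/
lemma slice_bound {C Y : ℝ} {m : Measure ℝ} (H : StLaw C Y m) {a b : ℝ} (ha : 0 < a) (hb : 0 ≤ b) :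
    ∃ c : ℝ, 0 ≤ c ∧ ∀ (w : ℝ), 1 ≤ w → ∀ y : ℝ, ∀ S : Set ℝ, Ioi y ⊆ S → S ⊆ Ici y → 
      |m.real ({x | w ≤ a * x + b * y} ∩ S) - C * a ^ Y / Y * w ^ (-Y)| ≤ c * (1 + |y|) * w ^ (-(Y+1)) := by
  obtain ⟨B, hB0, hB⟩ := H.tail
  have hY := H.h1
  have hC := H.hC
  have := H.prob
  have hth : 0 < a + b := by linarith
  set θ := a + b with hθ
  have hθa : a ≤ θ := by linarith
  -- constants
  set c1 := B * (1/θ) ^ (-(2*Y)) with hc1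
  set c2 := C * a ^ Y / Y * (Y * (a/θ) ^ (-(Y+1)) * b) with hc2
  set c3 := ((C / Y + B) * (1/θ) ^ (-(2*Y)) + C * a ^ Y / Y + C/Y * (1/θ)^(-Y)) * θ with hc3
  have hc1' : 0 ≤ c1 := by positivity
  have hc2' : 0 ≤ c2 := by positivity
  have hc3' : 0 ≤ c3 := by positivity
  refine ⟨c1 + c2 + c3, by positivity, fun w hw y S hS1 hS2 => ?_⟩
  have hw0 : 0 < w := by linarith
  set r := w / θ with hr
  have hr0 : 0 < r := by positivity
  have wp : 0 < w ^ (-(Y+1)) := Real.rpow_pos_of_pos hw0 _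
  have w2 : w ^ (-(2*Y)) ≤ w ^ (-(Y+1)) := Real.rpow_le_rpow_of_exponent_le hw (by linarith)
  have rw2 : r ^ (-(2*Y)) = (1/θ) ^ (-(2*Y)) * w ^ (-(2*Y)) := by
    rw [← Real.mul_rpow (by positivity) hw0.le]; congr 1; rw [hr]; ring
  have rw1 : r ^ (-Y) = (1/θ) ^ (-Y) * w ^ (-Y) := by
    rw [← Real.mul_rpow (by positivity) hw0.le]; congr 1; rw [hr]; ring
  rcases lt_or_ge y r with hy | hy
  · have hbr : b * y ≤ b * r := by gcongr
    have hwθ : w = a * r + b * r := by rw [hr, hθ]; field_simp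
    have e : {x | w ≤ a * x + b * y} ∩ S = Ici ((w - b * y) / a) := by
      ext x
      simp only [mem_inter_iff, mem_ofPred_eq, mem_Ici, div_le_iff₀ ha]
      constructor
      · rintro ⟨h, -⟩; linarith
      · intro h
        refine ⟨by linarith, hS1 ?_⟩
        have : a * r ≤ a * x := by linarith
        exact hy.trans_le (le_of_mul_le_mul_left this ha)
    rw [e]
    have hp : r ≤ (w - b * y) / a := by rw [le_div_iff₀ ha]; linarith
    have t1 := hB _ (hr0.trans_le hp)
    have t2 : ((w - b * y) / a) ^ (-(2*Y)) ≤ r ^ (-(2*Y)) := Real.rpow_le_rpow_of_nonpos hr0 hp (by linarith)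
    have wy : 0 < w - b * y := by nlinarith
    have t3 : C / Y * ((w - b * y) / a) ^ (-Y) = C * a ^ Y / Y * (w - b * y) ^ (-Y) := by
      rw [Real.div_rpow wy.le ha.le, Real.rpow_neg ha.le]; field_simp
    rw [t3] at t1
    have t4 := rpow_neg_diff (Y := Y) (p := w - b * y) (q := w) (r := a * r) (by linarith) (by positivity) (by linarith) (by nlinarith)
    have t5 : |w - b * y - w| = b * |y| := by
      rw [show w - b * y - w = -(b * y) by ring, abs_neg, abs_mul, abs_of_nonneg hb]
    have t6 : (a * r) ^ (-(Y+1)) = (a/θ) ^ (-(Y+1)) * w ^ (-(Y+1)) := by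
      rw [← Real.mul_rpow (by positivity) hw0.le]; congr 1; rw [hr]; ring
    rw [t5, t6] at t4
    calc |m.real (Ici ((w - b * y) / a)) - C * a ^ Y / Y * w ^ (-Y)| 
        = |(m.real (Ici ((w - b * y) / a)) - C * a ^ Y / Y * (w - b * y) ^ (-Y)) + C * a ^ Y / Y * ((w - b * y) ^ (-Y) - w ^ (-Y))| := by congr 1; ring
      _ ≤ B * r ^ (-(2*Y)) + C * a ^ Y / Y * (Y * ((a/θ) ^ (-(Y+1)) * w ^ (-(Y+1))) * (b * |y|)) := by
          refine (abs_add_le _ _).trans (add_le_add (t1.trans (by gcongr)) ?_)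
          rw [abs_mul, abs_of_pos (by positivity)]
          gcongr
      _ = c1 * w ^ (-(2*Y)) + c2 * (|y| * w ^ (-(Y+1))) := by rw [rw2]; ring
      _ ≤ c1 * w ^ (-(Y+1)) + c2 * (|y| * w ^ (-(Y+1))) := by gcongr
      _ ≤ (c1 + c2 + c3) * (1 + |y|) * w ^ (-(Y+1)) := by
          have h5 : c1 + c2 * |y| ≤ (c1 + c2 + c3) * (1 + |y|) := by
            have q1 := mul_nonneg hc1' (abs_nonneg y)
            have q3 := mul_nonneg hc3' (abs_nonneg y)
            linarith
          have h6 := mul_le_mul_of_nonneg_right h5 wp.le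
          linarith
  · have hy0 : 0 < y := hr0.trans_le hy
    have n1 : m.real ({x | w ≤ a * x + b * y} ∩ S) ≤ m.real (Ici r) := by
      refine measureReal_mono (fun x hx => ?_) (measure_ne_top _ _)
      exact hy.trans (hS2 hx.2)
    have n2 := hB r hr0
    have n3 : m.real (Ici r) ≤ C / Y * r ^ (-Y) + B * r ^ (-(2*Y)) := by linarith [(abs_le.1 n2).2]
    have w3 : w ^ (-(2*Y)) ≤ w ^ (-Y) := Real.rpow_le_rpow_of_exponent_le hw (by linarith)
    have w4 : w ^ (-Y) ≤ θ * |y| * w ^ (-(Y+1)) := by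
      have : w ^ (-Y) = w * w ^ (-(Y+1)) := by
        nth_rewrite 2 [← Real.rpow_one w]
        rw [← Real.rpow_add hw0]; congr 1; ring
      rw [this, abs_of_pos hy0]
      gcongr
      rw [hr, div_le_iff₀ hth] at hy; linarith
    have wY : 0 < w ^ (-Y) := Real.rpow_pos_of_pos hw0 _
    have n0 : 0 ≤ m.real ({x | w ≤ a * x + b * y} ∩ S) := measureReal_nonneg
    have k0 : 0 ≤ C * a ^ Y / Y * w ^ (-Y) := by positivity
    calc |m.real ({x | w ≤ a * x + b * y} ∩ S) - C * a ^ Y / Y * w ^ (-Y)| 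
        ≤ C / Y * r ^ (-Y) + B * r ^ (-(2*Y)) + C * a ^ Y / Y * w ^ (-Y) := by rw [abs_le]; constructor <;> linarith
      _ ≤ C / Y * ((1/θ) ^ (-Y) * w ^ (-Y)) + (C / Y + B) * ((1/θ) ^ (-(2*Y)) * w ^ (-Y)) + C * a ^ Y / Y * w ^ (-Y) := by
          rw [rw1, rw2]
          gcongr
          have : 0 < C / Y := by positivity
          linarith
      _ = ((C / Y + B) * (1/θ) ^ (-(2*Y)) + C * a ^ Y / Y + C/Y * (1/θ)^(-Y)) * w ^ (-Y) := by ring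
      _ ≤ ((C / Y + B) * (1/θ) ^ (-(2*Y)) + C * a ^ Y / Y + C/Y * (1/θ)^(-Y)) * (θ * |y| * w ^ (-(Y+1))) := by gcongr
      _ = c3 * |y| * w ^ (-(Y+1)) := by rw [hc3]; ring
      _ ≤ (c1 + c2 + c3) * (1 + |y|) * w ^ (-(Y+1)) := by
          have h5 : c3 * |y| ≤ (c1 + c2 + c3) * (1 + |y|) := by
            have q1 := mul_nonneg hc1' (abs_nonneg y)
            have q3 := mul_nonneg hc2' (abs_nonneg y)
            linarith
          exact mul_le_mul_of_nonneg_right h5 wp.le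

lemma prod_tail {C Y : ℝ} {m : Measure ℝ} (H : StLaw C Y m) {a b : ℝ} (ha : 0 < a) (hb : 0 ≤ b) :
    ∃ c : ℝ, 0 ≤ c ∧ ∀ (w : ℝ), 1 ≤ w → ∀ S : Set (ℝ × ℝ), MeasurableSet S → {p | p.1 < p.2} ⊆ S → S ⊆ {p | p.1 ≤ p.2} → 
      |(m.prod m).real ({p | w ≤ a * p.2 + b * p.1} ∩ S) - C * a ^ Y / Y * w ^ (-Y)| ≤ c * w ^ (-(Y+1)) := by
  have := H.prob
  obtain ⟨c, hc, hs⟩ := slice_bound H ha hb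
  have hi : Integrable (fun y : ℝ => 1 + |y|) m := (integrable_const _).add H.mean.1.abs
  refine ⟨c * ∫ y, (1 + |y|) ∂m, mul_nonneg hc (integral_nonneg fun y => by positivity), fun w hw S hS h1 h2 => ?_⟩
  have hA : MeasurableSet ({p : ℝ × ℝ | w ≤ a * p.2 + b * p.1} ∩ S) := by
    refine MeasurableSet.inter (measurableSet_le (by fun_prop) (by fun_prop)) hS
  have e : (m.prod m).real ({p | w ≤ a * p.2 + b * p.1} ∩ S) = ∫ y, m.real ({x | w ≤ a * x + b * y} ∩ {x | (y, x) ∈ S}) ∂m := by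
    rw [measureReal_def, Measure.prod_apply hA, integral_eq_lintegral_of_nonneg_ae (ae_of_all _ fun y => measureReal_nonneg)]
    · congr 1
      apply lintegral_congr
      intro y
      rw [ofReal_measureReal]; rfl
    · exact (measurable_measure_prodMk_left hA).ennreal_toReal.aestronglyMeasurable
  have hintg : Integrable (fun y => m.real ({x | w ≤ a * x + b * y} ∩ {x | (y, x) ∈ S})) m := by
    refine (integrable_const (1:ℝ)).mono' (measurable_measure_prodMk_left hA).ennreal_toReal.aestronglyMeasurable (ae_of_all _ fun y => ?_)
    rw [Real.norm_of_nonneg measureReal_nonneg]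
    exact measureReal_le_one
  have e2 : C * a ^ Y / Y * w ^ (-Y) = ∫ y, C * a ^ Y / Y * w ^ (-Y) ∂m := by simp
  rw [e, e2, ← integral_sub hintg (integrable_const _), ← Real.norm_eq_abs]
  refine (norm_integral_le_of_norm_le ((hi.const_mul c).mul_const (w ^ (-(Y+1)))) (ae_of_all _ fun y => ?_)).trans (le_of_eq ?_)
  · exact hs w hw y _ (fun x hx => h1 hx) (fun x hx => h2 hx)
  · rw [integral_mul_const, integral_const_mul]

lemma one_sub_exp_integrable {s p q : ℝ} (hs : 0 < s) (hp : 0 < p) (hq : 1 < q) (hpq : q - 1 < p) :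
    IntegrableOn (fun u : ℝ => (1 - Real.exp (-s * u ^ p)) * u ^ (-q)) (Ioi 0) := by
  have hm : Measurable fun u : ℝ => (1 - Real.exp (-s * u ^ p)) * u ^ (-q) := by fun_prop
  have b0 : ∀ u : ℝ, 0 < u → 0 ≤ 1 - Real.exp (-s * u ^ p) := by
    intro u hu
    have : Real.exp (-s * u ^ p) ≤ 1 := Real.exp_le_one_iff.2 (by have := Real.rpow_nonneg hu.le p; nlinarith)
    linarith
  rw [← Ioc_union_Ioi_eq_Ioi zero_le_one]
  refine IntegrableOn.union ?_ ?_
  · have hi : IntegrableOn (fun u : ℝ => s * u ^ (p - q)) (Ioc 0 1) := by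
      have := (intervalIntegral.intervalIntegrable_rpow' (a := 0) (b := 1) (r := p - q) (by linarith)).const_mul s
      rwa [intervalIntegrable_iff_integrableOn_Ioc_of_le zero_le_one] at this
    refine hi.mono' hm.aestronglyMeasurable (ae_restrict_of_forall_mem measurableSet_Ioc fun u hu => ?_)
    rw [Real.norm_of_nonneg (mul_nonneg (b0 u hu.1) (Real.rpow_nonneg hu.1.le _)), sub_eq_add_neg p q, Real.rpow_add hu.1, ← mul_assoc]
    refine mul_le_mul_of_nonneg_right ?_ (Real.rpow_nonneg hu.1.le _)
    linarith [Real.add_one_le_exp (-s * u ^ p)]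
  · have hi : IntegrableOn (fun u : ℝ => u ^ (-q)) (Ioi 1) := integrableOn_Ioi_rpow_of_lt (by linarith) one_pos
    refine hi.mono' hm.aestronglyMeasurable (ae_restrict_of_forall_mem measurableSet_Ioi fun u hu => ?_)
    have hu0 : 0 < u := one_pos.trans hu
    rw [Real.norm_of_nonneg (mul_nonneg (b0 u hu0) (Real.rpow_nonneg hu0.le _))]
    refine mul_le_of_le_one_left (Real.rpow_nonneg hu0.le _) ?_
    linarith [Real.exp_pos (-s * u ^ p)]

lemma one_sub_exp_integral {s p q : ℝ} (hs : 0 < s) (hp : 0 < p) (hq : 1 < q) (hpq : q - 1 < p) :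
    ∫ u in Ioi (0:ℝ), (1 - Real.exp (-s * u ^ p)) * u ^ (-q) = 
     1 / (q - 1) * s ^ ((q-1)/p) * Real.Gamma (1 - (q-1)/p) := by
  have i1 := one_sub_exp_integrable hs hp hq hpq
  have i2 := integrableOn_rpow_mul_exp_neg_mul_rpow (s := p - q) (by linarith) hp hs
  have v2 := integral_rpow_mul_exp_neg_mul_rpow (q := p - q) hp (by linarith) hs
  have b0 : ∀ u : ℝ, 0 ≤ u → 0 ≤ 1 - Real.exp (-s * u ^ p) := by
    intro u hu
    have : Real.exp (-s * u ^ p) ≤ 1 := Real.exp_le_one_iff.2 (by have := Real.rpow_nonneg hu p; nlinarith)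
    linarith
  set F : ℝ → ℝ := fun u => (1 - Real.exp (-s * u ^ p)) * u ^ (1-q) with hF
  have hF0 : F 0 = 0 := by
    simp [hF, Real.zero_rpow hp.ne']
  have hcont : ContinuousWithinAt F (Ici 0) 0 := by
    rw [ContinuousWithinAt, hF0]
    refine squeeze_zero_norm' (a := fun u : ℝ => s * u ^ (p+1-q)) ?_ ?_
    · filter_upwards [self_mem_nhdsWithin] with u hu
      have hu : 0 ≤ u := hu
      rcases hu.eq_or_lt with h | h
      · rw [← h, hF0]; simp; positivity
      · rw [hF, Real.norm_of_nonneg (mul_nonneg (b0 u hu) (Real.rpow_nonneg hu _)), show p+1-q = p+(1-q) by ring, Real.rpow_add h, ← mul_assoc]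
        refine mul_le_mul_of_nonneg_right ?_ (Real.rpow_nonneg hu _)
        linarith [Real.add_one_le_exp (-s * u ^ p)]
    · have : ContinuousAt (fun u : ℝ => s * u ^ (p+1-q)) 0 := by
        apply ContinuousAt.mul continuousAt_const
        exact Real.continuousAt_rpow_const _ _ (Or.inr (by linarith))
      have h := this.tendsto
      rw [Real.zero_rpow (by linarith), mul_zero] at h
      exact h.mono_left nhdsWithin_le_nhds
  have hinf : Tendsto F atTop (𝓝 0) := by
    refine squeeze_zero_norm' (a := fun u : ℝ => u ^ (-(q-1))) ?_ (tendsto_rpow_neg_atTop (by linarith))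
    filter_upwards [eventually_gt_atTop 0] with u hu
    rw [hF, Real.norm_of_nonneg (mul_nonneg (b0 u hu.le) (Real.rpow_nonneg hu.le _)), show -(q-1) = 1 - q by ring]
    refine mul_le_of_le_one_left (Real.rpow_nonneg hu.le _) ?_
    linarith [Real.exp_pos (-s * u ^ p)]
  have key := integral_Ioi_of_hasDerivAt_of_tendsto hcont (f' := fun u => (s * p) * (u ^ (p-q) * Real.exp (-s * u ^ p)) + (1 - q) * ((1 - Real.exp (-s * u ^ p)) * u ^ (-q))) ?_ ((i2.const_mul _).add (i1.const_mul _)) hinf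
  · rw [integral_add (i2.const_mul _) (i1.const_mul _), integral_const_mul, integral_const_mul, v2, hF0] at key
    have e : s ^ ((q-1)/p) = s * s ^ (-(p - q + 1)/p) := by
      nth_rewrite 2 [← Real.rpow_one s]
      rw [← Real.rpow_add hs]; congr 1; field_simp; ring
    rw [show 1 - (q-1)/p = (p-q+1)/p by field_simp; ring, e]
    have hq' : q - 1 ≠ 0 := by linarith
    field_simp
    field_simp at key
    linarith
  · intro u hu
    have hu : 0 < u := hu
    have d1 := (((Real.hasDerivAt_rpow_const (x := u) (p := p) (Or.inl hu.ne')).const_mul (-s)).exp.const_sub 1).mul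
      (Real.hasDerivAt_rpow_const (x := u) (p := 1 - q) (Or.inl hu.ne'))
    refine d1.congr_deriv ?_
    have e1 : u ^ (p - q) = u ^ (p-1) * u ^ (1-q) := by rw [← Real.rpow_add hu]; congr 1; ring
    rw [e1, show 1 - q - 1 = -q by ring]
    ring

lemma g_nonneg (x : ℝ) : 0 ≤ Real.exp (-x) - 1 + x := by linarith [Real.add_one_le_exp (-x)]

/-- taylor limit -/
lemma g_limit (w : ℝ) : Tendsto (fun h : ℝ => (Real.exp (-(h * w)) - 1 + h * w) / h ^ 2) (𝓝[>] 0) (𝓝 (w ^ 2 / 2)) := by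
  have h0 : Tendsto (fun h : ℝ => h * |w| ^ 3) (𝓝[>] 0) (𝓝 0) := by
    have : Tendsto (fun h : ℝ => h * |w| ^ 3) (𝓝 0) (𝓝 (0 * |w|^3)) := (continuous_id.mul continuous_const).tendsto 0
    rw [zero_mul] at this
    exact this.mono_left nhdsWithin_le_nhds
  rw [tendsto_iff_norm_sub_tendsto_zero]
  refine squeeze_zero' (Eventually.of_forall fun h => norm_nonneg _) ?_ h0
  have hev : ∀ᶠ h in 𝓝[>] (0:ℝ), |h * w| ≤ 1 := by
    have : Tendsto (fun h : ℝ => |h * w|) (𝓝[>] 0) (𝓝 |0 * w|) := by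
      have : Continuous (fun h : ℝ => |h * w|) := by fun_prop
      exact (this.tendsto 0).mono_left nhdsWithin_le_nhds
    rw [zero_mul, abs_zero] at this
    exact this.eventually_le_const one_pos
  filter_upwards [hev, self_mem_nhdsWithin] with h hh hpos
  have hpos : 0 < h := hpos
  have := Real.exp_bound (x := -(h*w)) (by rwa [abs_neg]) (n := 3) (by norm_num)
  simp only [Finset.sum_range_succ, Finset.sum_range_zero] at this
  norm_num [Nat.factorial] at this
  have e : (Real.exp (-(h * w)) - 1 + h * w) / h ^ 2 - w ^ 2 / 2 = (Real.exp (-(h * w)) - (1 + -(h*w) + (h*w)^2/2)) / h^2 := by field_simp; ring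
  rw [e, norm_div, Real.norm_eq_abs, Real.norm_of_nonneg (by positivity), div_le_iff₀ (by positivity)]
  refine this.trans ?_
  rw [abs_of_pos hpos]
  have : 0 ≤ h ^ 3 * |w| ^ 3 := by positivity
  nlinarith

lemma neg_part_limit {Ω : Type*} [MeasurableSpace Ω] (Q : Measure Ω) [IsProbabilityMeasure Q] {W : Ω → ℝ}
    (hW : Measurable W) (hexp : Integrable (fun ω => Real.exp (-W ω)) Q) :
    Tendsto (fun h : ℝ => ∫ ω, {ω | W ω ≤ 0}.indicator (fun ω => (Real.exp (-(h * W ω)) - 1 + h * W ω) / h^2) ω ∂Q) (𝓝[>] 0)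
      (𝓝 (∫ ω, {ω | W ω ≤ 0}.indicator (fun ω => W ω ^ 2 / 2) ω ∂Q)) := by
  have hS : MeasurableSet {ω | W ω ≤ 0} := measurableSet_le hW measurable_const
  refine tendsto_integral_filter_of_dominated_convergence (fun ω => 8 * Real.exp (-W ω)) ?_ ?_ (hexp.const_mul 8) ?_
  · refine Eventually.of_forall fun h => (Measurable.indicator (by fun_prop) hS).aestronglyMeasurable
  · have : Ioc (0:ℝ) (1/2) ∈ 𝓝[>] (0:ℝ) := Ioc_mem_nhdsGT (by norm_num)
    filter_upwards [this] with h hh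
    refine ae_of_all _ fun ω => ?_
    by_cases hω : ω ∈ {ω | W ω ≤ 0}
    · rw [indicator_of_mem hω]
      have hω : W ω ≤ 0 := hω
      have hh0 := hh.1
      rw [Real.norm_of_nonneg (div_nonneg (g_nonneg _) (by positivity)), div_le_iff₀ (by positivity)]
      set y := - W ω with hy
      have hy0 : 0 ≤ y := by linarith
      have hWy : W ω = - y := by linarith
      rw [hWy, show -(h * -y) = h * y by ring]
      -- e^z - 1 - z ≤ z^2/2 e^z
      have a1 : ∀ z : ℝ, 0 ≤ z → Real.exp z - 1 - z ≤ z^2 * Real.exp z := by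
        intro z hz
        have b1 := Real.add_one_le_exp (-z)
        have b2 : Real.exp (-z) * Real.exp z = 1 := by rw [← Real.exp_add]; simp
        have b3 := Real.exp_pos z
        have : Real.exp z - 1 ≤ z * Real.exp z := by nlinarith
        nlinarith
      have a2 := a1 (h*y) (by positivity)
      have a3 : Real.exp (h * y) ≤ Real.exp (y/2) := Real.exp_le_exp.2 (by nlinarith [hh.2])
      have a4 : y^2 ≤ 8 * Real.exp (y/2) := by
        have c1 := Real.quadratic_le_exp_of_nonneg (x := y/2) (by positivity)
        have c2 : 1 + y/2 + (y/2)^2/2 ≤ Real.exp (y/2) := c1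
        nlinarith
      have a5 : Real.exp (y/2) * Real.exp (y/2) = Real.exp y := by rw [← Real.exp_add]; congr 1; ring
      calc Real.exp (h * y) - 1 + h * -y = Real.exp (h*y) - 1 - h * y := by ring
        _ ≤ (h*y)^2 * Real.exp (h*y) := a2
        _ ≤ (h*y)^2 * Real.exp (y/2) := by gcongr
        _ = h^2 * (y^2 * Real.exp (y/2)) := by ring
        _ ≤ h^2 * (8 * Real.exp (y/2) * Real.exp (y/2)) := by gcongr
        _ = _ := by rw [mul_assoc 8, a5]; ring
    · rw [indicator_of_notMem hω]; simp; positivity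
  · refine ae_of_all _ fun ω => ?_
    by_cases hω : ω ∈ {ω | W ω ≤ 0}
    · simp only [indicator_of_mem hω]; exact g_limit _
    · simp only [indicator_of_notMem hω]; exact tendsto_const_nhds

lemma layer_g {Ω : Type*} [MeasurableSpace Ω] (Q : Measure Ω) [IsProbabilityMeasure Q] {W : Ω → ℝ}
    (hW : Measurable W) {h : ℝ} (hh : 0 < h) :
    ∫ ω, {ω | 0 < W ω}.indicator (fun ω => Real.exp (-(h * W ω)) - 1 + h * W ω) ω ∂Q = 
      ∫ w in Ioi (0:ℝ), Q.real {ω | w ≤ W ω} * (h * (1 - Real.exp (-(h * w)))) := by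
  have hS : MeasurableSet {ω | 0 < W ω} := measurableSet_lt measurable_const hW
  have lc := lintegral_comp_eq_lintegral_meas_le_mul (f := fun ω => max (W ω) 0) (g := fun w => h * (1 - Real.exp (-(h * w)))) Q
    (ae_of_all _ fun ω => le_max_right _ _) (by fun_prop) 
    (fun t ht => by apply Continuous.intervalIntegrable; fun_prop)
    (ae_restrict_of_forall_mem measurableSet_Ioi fun w hw => by
      have hw : 0 < w := hw
      have : Real.exp (-(h * w)) ≤ 1 := Real.exp_le_one_iff.2 (by have := mul_pos hh hw; linarith)
      have : 0 ≤ 1 - Real.exp (-(h * w)) := by linarith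
      positivity)
  have hintg : ∀ x : ℝ, ∫ w in (0:ℝ)..x, h * (1 - Real.exp (-(h * w))) = Real.exp (-(h * x)) - 1 + h * x := by
    intro x
    have := intervalIntegral.integral_eq_sub_of_hasDerivAt (a := 0) (b := x) (f := fun w => Real.exp (-(h * w)) - 1 + h * w) (f' := fun w => h * (1 - Real.exp (-(h * w)))) ?_ ?_
    · rw [this]; simp
    · intro w _
      have d := ((((hasDerivAt_id w).const_mul h).neg.exp).sub_const 1).add ((hasDerivAt_id w).const_mul h)
      refine d.congr_deriv ?_
      simp only [id, Pi.neg_apply]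
      ring
    · apply Continuous.intervalIntegrable; fun_prop
  simp only [hintg] at lc
  rw [integral_eq_lintegral_of_nonneg_ae, integral_eq_lintegral_of_nonneg_ae]
  · congr 1
    have e1 : ∀ ω, ENNReal.ofReal ({ω | 0 < W ω}.indicator (fun ω => Real.exp (-(h * W ω)) - 1 + h * W ω) ω) = ENNReal.ofReal (Real.exp (-(h * max (W ω) 0)) - 1 + h * max (W ω) 0) := by
      intro ω
      by_cases hω : ω ∈ {ω | 0 < W ω}
      · rw [indicator_of_mem hω, max_eq_left (le_of_lt hω)]
      · rw [indicator_of_notMem hω, max_eq_right (not_lt.1 hω)]; simp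
    simp only [e1]
    rw [lc]
    refine setLIntegral_congr_fun measurableSet_Ioi fun w hw => ?_
    have hw : 0 < w := hw
    have : {ω | w ≤ max (W ω) 0} = {ω | w ≤ W ω} := by
      ext ω; simp [hw]
    simp only [this]
    rw [ENNReal.ofReal_mul measureReal_nonneg, ofReal_measureReal]
  · refine ae_restrict_of_forall_mem measurableSet_Ioi fun w hw => ?_
    have hw : 0 < w := hw
    have : Real.exp (-(h * w)) ≤ 1 := Real.exp_le_one_iff.2 (by have := mul_pos hh hw; linarith)
    have : 0 ≤ 1 - Real.exp (-(h * w)) := by linarith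
    show 0 ≤ _
    have := measureReal_nonneg (μ := Q) (s := {ω | w ≤ W ω})
    positivity
  · apply Measurable.aestronglyMeasurable
    have : Antitone fun w : ℝ => Q.real {ω | w ≤ W ω} := by
      intro a b hab
      exact measureReal_mono (fun ω hω => hab.trans hω) (measure_ne_top _ _)
    have := this.measurable
    fun_prop
  · refine ae_of_all _ fun ω => indicator_nonneg (fun ω _ => g_nonneg _) ω
  · exact (Measurable.indicator (by fun_prop) hS).aestronglyMeasurable

lemma tail_integrable {Ω : Type*} [MeasurableSpace Ω] (Q : Measure Ω) [IsProbabilityMeasure Q] {W : Ω → ℝ}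
    {Y K B : ℝ} (h1 : 1 < Y) (h2 : Y < 2) 
    (hB : ∀ w : ℝ, 1 ≤ w → |Q.real {ω | w ≤ W ω} - K * w ^ (-Y)| ≤ B * w ^ (-(Y+1))) :
    IntegrableOn (fun w : ℝ => w * (Q.real {ω | w ≤ W ω} - K * w ^ (-Y))) (Ioi 0) := by
  have hmq : Measurable fun w : ℝ => Q.real {ω | w ≤ W ω} := by
    have : Antitone fun w : ℝ => Q.real {ω | w ≤ W ω} := by
      intro a b hab
      exact measureReal_mono (fun ω hω => hab.trans hω) (measure_ne_top _ _)
    exact this.measurable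
  have hm : Measurable (fun w : ℝ => w * (Q.real {ω | w ≤ W ω} - K * w ^ (-Y))) := by fun_prop
  rw [← Ioc_union_Ioi_eq_Ioi zero_le_one]
  refine IntegrableOn.union ?_ ?_
  · have hi : IntegrableOn (fun w : ℝ => 1 + |K| * w ^ (1-Y)) (Ioc 0 1) := by
      have a := (intervalIntegral.intervalIntegrable_rpow' (a := 0) (b := 1) (r := 1 - Y) (by linarith)).const_mul |K|
      rw [intervalIntegrable_iff_integrableOn_Ioc_of_le zero_le_one] at a
      exact (integrableOn_const (by simp)).add a
    refine hi.mono' hm.aestronglyMeasurable (ae_restrict_of_forall_mem measurableSet_Ioc fun w hw => ?_)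
    have hw0 := hw.1
    rw [mul_sub]
    refine (norm_sub_le _ _).trans (add_le_add ?_ ?_)
    · rw [norm_mul, Real.norm_of_nonneg hw0.le, Real.norm_of_nonneg measureReal_nonneg]
      exact mul_le_one₀ hw.2 measureReal_nonneg measureReal_le_one
    · rw [norm_mul, norm_mul, Real.norm_of_nonneg hw0.le, Real.norm_of_nonneg (Real.rpow_nonneg hw0.le _), Real.norm_eq_abs, sub_eq_add_neg, Real.rpow_add hw0, Real.rpow_one]
      exact le_of_eq (by ring)
  · have hi : IntegrableOn (fun w : ℝ => B * w ^ (-Y)) (Ioi 1) := (integrableOn_Ioi_rpow_of_lt (by linarith) one_pos).const_mul _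
    refine hi.mono' hm.aestronglyMeasurable (ae_restrict_of_forall_mem measurableSet_Ioi fun w hw => ?_)
    have hw1 : 1 < w := hw
    have hw0 : 0 < w := by linarith
    rw [norm_mul, Real.norm_of_nonneg hw0.le, Real.norm_eq_abs]
    refine (mul_le_mul_of_nonneg_left (hB w hw1.le) hw0.le).trans (le_of_eq ?_)
    rw [show -Y = 1 + -(Y+1) by ring, Real.rpow_add hw0, Real.rpow_one]; ring

/-- main expansion -/
lemma expansion {Ω : Type*} [MeasurableSpace Ω] (Q : Measure Ω) [IsProbabilityMeasure Q] {W : Ω → ℝ}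
    (hW : Measurable W) (hexp : ∀ l : ℝ, 0 ≤ l → Integrable (fun ω => Real.exp (-(l * W ω))) Q) (hintg : Integrable W Q)
    {Y K B : ℝ} (h1 : 1 < Y) (h2 : Y < 2)
    (hB : ∀ w : ℝ, 1 ≤ w → |Q.real {ω | w ≤ W ω} - K * w ^ (-Y)| ≤ B * w ^ (-(Y+1))) :
    Tendsto (fun h : ℝ => (∫ ω, (Real.exp (-(h * W ω)) - 1 + h * W ω) ∂Q - K * (Real.Gamma (2 - Y) / (Y-1)) * h ^ Y) / h ^ 2)
      (𝓝[>] 0) (𝓝 (∫ ω, {ω | W ω ≤ 0}.indicator (fun ω => W ω ^ 2 / 2) ω ∂Q + 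
         ∫ w in Ioi (0:ℝ), w * (Q.real {ω | w ≤ W ω} - K * w ^ (-Y)))) := by
  have hS : MeasurableSet {ω | W ω ≤ 0} := measurableSet_le hW measurable_const
  have lim1 := neg_part_limit Q hW (by simpa using hexp 1 zero_le_one)
  have ti := tail_integrable Q h1 h2 hB
  have hmq : Measurable fun w : ℝ => Q.real {ω | w ≤ W ω} := by
    have : Antitone fun w : ℝ => Q.real {ω | w ≤ W ω} := by
      intro a b hab
      exact measureReal_mono (fun ω hω => hab.trans hω) (measure_ne_top _ _)
    exact this.measurable
  have hbd : ∀ h w : ℝ, 0 < h → 0 < w → ‖(1 - Real.exp (-(h * w))) / h * (Q.real {ω | w ≤ W ω} - K * w ^ (-Y))‖ ≤ ‖w * (Q.real {ω | w ≤ W ω} - K * w ^ (-Y))‖ := by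
    intro h w hh hw
    rw [norm_mul, norm_mul]
    refine mul_le_mul_of_nonneg_right ?_ (norm_nonneg _)
    have := mul_pos hh hw
    have a : Real.exp (-(h * w)) ≤ 1 := Real.exp_le_one_iff.2 (by linarith)
    rw [Real.norm_of_nonneg hw.le, Real.norm_of_nonneg (div_nonneg (by linarith) hh.le), div_le_iff₀ hh]
    linarith [Real.add_one_le_exp (-(h*w))]
  have lim2 : Tendsto (fun h : ℝ => ∫ w in Ioi (0:ℝ), (1 - Real.exp (-(h * w))) / h * (Q.real {ω | w ≤ W ω} - K * w ^ (-Y))) (𝓝[>] 0)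
      (𝓝 (∫ w in Ioi (0:ℝ), w * (Q.real {ω | w ≤ W ω} - K * w ^ (-Y)))) := by
    refine tendsto_integral_filter_of_dominated_convergence (fun w => ‖w * (Q.real {ω | w ≤ W ω} - K * w ^ (-Y))‖) ?_ ?_ ti.norm ?_
    · exact Eventually.of_forall fun h => by
        apply Measurable.aestronglyMeasurable; fun_prop
    · filter_upwards [self_mem_nhdsWithin] with h hh
      exact ae_restrict_of_forall_mem measurableSet_Ioi fun w hw => hbd h w hh hw
    · refine ae_of_all _ fun w => ?_
      refine Tendsto.mul_const _ ?_
      have : HasDerivAt (fun l : ℝ => Real.exp (-(l * w))) (-w) 0 := by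
        have := ((hasDerivAt_id (0:ℝ)).mul_const w).neg.exp
        simpa using this
      have t := this.tendsto_slope_zero_right.neg
      rw [neg_neg] at t
      refine t.congr fun l => ?_
      simp; ring
  refine (lim1.add lim2).congr' ?_
  filter_upwards [self_mem_nhdsWithin] with h hh
  have hh : 0 < h := hh
  have hgi : Integrable (fun ω => Real.exp (-(h * W ω)) - 1 + h * W ω) Q := ((hexp h hh.le).sub (integrable_const _)).add (hintg.const_mul h)
  have split : ∫ ω, (Real.exp (-(h * W ω)) - 1 + h * W ω) ∂Q = ∫ ω, {ω | W ω ≤ 0}.indicator (fun ω => (Real.exp (-(h * W ω)) - 1 + h * W ω)) ω ∂Q + ∫ ω, {ω | 0 < W ω}.indicator (fun ω => (Real.exp (-(h * W ω)) - 1 + h * W ω)) ω ∂Q := by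
    rw [← integral_add (hgi.indicator hS) (hgi.indicator (measurableSet_lt measurable_const hW))]
    congr 1; ext ω
    rcases le_or_gt (W ω) 0 with hω | hω
    · rw [indicator_of_mem (show ω ∈ {ω | W ω ≤ 0} from hω), indicator_of_notMem (show ω ∉ {ω | 0 < W ω} from not_lt.2 hω), add_zero]
    · rw [indicator_of_notMem (show ω ∉ {ω | W ω ≤ 0} from not_le.2 hω), indicator_of_mem (show ω ∈ {ω | 0 < W ω} from hω), zero_add]
  have e1 : ∫ ω, {ω | W ω ≤ 0}.indicator (fun ω => (Real.exp (-(h * W ω)) - 1 + h * W ω) / h^2) ω ∂Q = (∫ ω, {ω | W ω ≤ 0}.indicator (fun ω => (Real.exp (-(h * W ω)) - 1 + h * W ω)) ω ∂Q) / h^2 := by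
    rw [← integral_div]; congr 1; ext ω
    by_cases hω : ω ∈ {ω | W ω ≤ 0}
    · simp only [indicator_of_mem hω]
    · simp only [indicator_of_notMem hω, zero_div]
  have ji := one_sub_exp_integrable hh one_pos h1 (by linarith)
  have jv := one_sub_exp_integral hh one_pos h1 (by linarith)
  have ti2 : IntegrableOn (fun w => (1 - Real.exp (-(h * w))) / h * (Q.real {ω | w ≤ W ω} - K * w ^ (-Y))) (Ioi 0) := by
    refine Integrable.mono ti (by apply Measurable.aestronglyMeasurable; fun_prop) (ae_restrict_of_forall_mem measurableSet_Ioi fun w hw => hbd h w hh hw)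
  have e2 : ∫ w in Ioi (0:ℝ), Q.real {ω | w ≤ W ω} * (h * (1 - Real.exp (-(h * w)))) = h^2 * (∫ w in Ioi (0:ℝ), (1 - Real.exp (-(h * w))) / h * (Q.real {ω | w ≤ W ω} - K * w ^ (-Y))) + h * K * ∫ w in Ioi (0:ℝ), (1 - Real.exp (-h * w ^ (1:ℝ))) * w ^ (-Y) := by
    rw [← integral_const_mul, ← integral_const_mul, ← integral_add (ti2.const_mul _) (ji.const_mul _)]
    congr 1; ext w
    rw [Real.rpow_one, neg_mul]
    field_simp
    ring
  rw [split, layer_g Q hW hh, e1, e2, jv]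
  have e3 : h ^ Y = h * h ^ ((Y-1)/1) := by
    nth_rewrite 2 [← Real.rpow_one h]
    rw [← Real.rpow_add hh]; congr 1; ring
  rw [e3, show 1 - (Y-1)/1 = 2 - Y by ring]
  field_simp
  ring

/-- the constant -/
noncomputable def cD : ℝ := ∫ u in Ioi (0:ℝ), (1 - Real.cos u) / u ^ 2

lemma one_sub_cos_le (v : ℝ) : 1 - Real.cos v ≤ v ^ 2 / 2 := by linarith [Real.one_sub_sq_div_two_le_cos (x := v)]

lemma cos_integrable (x : ℝ) : IntegrableOn (fun u : ℝ => (1 - Real.cos (u * x)) / u ^ 2) (Ioi 0) := by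
  have hm : Measurable fun u : ℝ => (1 - Real.cos (u * x)) / u ^ 2 := by fun_prop
  rw [← Ioc_union_Ioi_eq_Ioi zero_le_one]
  refine IntegrableOn.union ?_ ?_
  · have hi : IntegrableOn (fun u : ℝ => x ^ 2 / 2) (Ioc 0 1) := integrableOn_const (by simp)
    refine hi.mono' hm.aestronglyMeasurable (ae_restrict_of_forall_mem measurableSet_Ioc fun u hu => ?_)
    have hu0 := hu.1
    rw [Real.norm_of_nonneg (div_nonneg (by linarith [Real.cos_le_one (u*x)]) (by positivity)), div_le_iff₀ (by positivity)]
    have := one_sub_cos_le (u * x)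
    nlinarith
  · have hi : IntegrableOn (fun u : ℝ => 2 * u ^ (-2:ℝ)) (Ioi 1) := (integrableOn_Ioi_rpow_of_lt (by norm_num) one_pos).const_mul _
    refine hi.mono' hm.aestronglyMeasurable (ae_restrict_of_forall_mem measurableSet_Ioi fun u hu => ?_)
    have hu0 : 0 < u := one_pos.trans hu
    rw [Real.norm_of_nonneg (div_nonneg (by linarith [Real.cos_le_one (u*x)]) (by positivity)), Real.rpow_neg hu0.le, ← div_eq_mul_inv]
    have e : u ^ (2:ℝ) = u ^ 2 := by norm_cast
    rw [e]
    gcongr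
    linarith [Real.neg_one_le_cos (u*x)]

lemma cos_integral (x : ℝ) : ∫ u in Ioi (0:ℝ), (1 - Real.cos (u * x)) / u ^ 2 = cD * |x| := by
  rcases eq_or_ne x 0 with h | h
  · simp [h]
  · have hx : 0 < |x| := abs_pos.2 h
    have e := integral_comp_mul_left_Ioi (fun u : ℝ => (1 - Real.cos u) / u ^ 2) 0 hx
    rw [mul_zero] at e
    have e2 : ∀ u : ℝ, (1 - Real.cos (u * x)) / u ^ 2 = |x| ^ 2 * ((1 - Real.cos (|x| * u)) / (|x| * u) ^ 2) := by
      intro u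
      have : Real.cos (|x| * u) = Real.cos (u * x) := by
        rcases abs_choice x with h | h
        · rw [h, mul_comm]
        · rw [h, ← Real.cos_neg]; congr 1; ring
      rw [this]; field_simp
    simp only [e2]
    rw [integral_const_mul, e, cD, smul_eq_mul]
    field_simp

lemma abs_fourier (m : Measure ℝ) [IsProbabilityMeasure m] (hi : Integrable (fun x : ℝ => x) m) :
    IntegrableOn (fun u : ℝ => (1 - ∫ x, Real.cos (u * x) ∂m) / u ^ 2) (Ioi 0) ∧ 
    cD * ∫ x, |x| ∂m = ∫ u in Ioi (0:ℝ), (1 - ∫ x, Real.cos (u * x) ∂m) / u ^ 2 := by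
  have hF : Integrable (fun p : ℝ × ℝ => (1 - Real.cos (p.2 * p.1)) / p.2 ^ 2) (m.prod (volume.restrict (Ioi 0))) := by
    rw [integrable_prod_iff (by apply Measurable.aestronglyMeasurable; fun_prop)]
    refine ⟨ae_of_all _ fun x => cos_integrable x, ?_⟩
    have : ∀ x : ℝ, ∫ u in Ioi (0:ℝ), ‖(1 - Real.cos (u * x)) / u ^ 2‖ = cD * |x| := by
      intro x
      rw [← cos_integral x]
      congr 1; ext u
      rw [Real.norm_of_nonneg (div_nonneg (by linarith [Real.cos_le_one (u*x)]) (by positivity))]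
    simp only [this]
    exact hi.abs.const_mul _
  have e : ∀ u : ℝ, ∫ x, (1 - Real.cos (u * x)) / u ^ 2 ∂m = (1 - ∫ x, Real.cos (u * x) ∂m) / u ^ 2 := by
    intro u
    rw [integral_div, integral_sub (integrable_const _)]
    · simp
    · refine (integrable_const (1:ℝ)).mono' (by fun_prop) (ae_of_all _ fun x => ?_)
      exact Real.abs_cos_le_one _
  constructor
  · have := hF.integral_prod_right
    simp only [e] at this
    exact this
  · have := integral_integral_swap (f := fun x u : ℝ => (1 - Real.cos (u * x)) / u ^ 2) (μ := m) (ν := volume.restrict (Ioi 0)) hF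
    simp only [e, cos_integral] at this
    rw [← this, integral_const_mul]

lemma int_cos_of_char (m : Measure ℝ) [IsProbabilityMeasure m] (u r : ℝ)
    (h : ∫ x, Complex.exp (u * x * Complex.I) ∂m = (r:ℂ)) : ∫ x, Real.cos (u * x) ∂m = r := by
  have hi : Integrable (fun x : ℝ => Complex.exp (u * x * Complex.I)) m := by
    refine (integrable_const (1:ℝ)).mono' (by apply Continuous.aestronglyMeasurable; fun_prop) (ae_of_all _ fun x => ?_)
    rw [← Complex.ofReal_mul, Complex.norm_exp_ofReal_mul_I]
  have := integral_re hi
  simp only [RCLike.re_to_complex] at this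
  rw [h, Complex.ofReal_re] at this
  rw [← this]
  congr 1; ext x
  rw [← Complex.ofReal_mul, Complex.exp_ofReal_mul_I_re]

lemma cD_eq : cD = Real.pi / 2 := by
  have hi : Integrable (fun x : ℝ => x) (gaussianReal 0 1) := by
    exact (memLp_id_gaussianReal 1).integrable le_rfl
  have hcos : ∀ u : ℝ, ∫ x, Real.cos (u * x) ∂(gaussianReal 0 1) = Real.exp (-(1/2) * u ^ (2:ℝ)) := by
    intro u
    apply int_cos_of_char
    rw [← charFun_apply_real, charFun_gaussianReal]
    have : u ^ (2:ℝ) = u ^ 2 := by norm_cast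
    rw [this]
    push_cast
    congr 1; ring
  have h := (abs_fourier _ hi).2
  simp only [hcos] at h
  have v := one_sub_exp_integral (s := 1/2) (p := 2) (q := 2) (by norm_num) (by norm_num) (by norm_num) (by norm_num)
  have e1 : ∫ u in Ioi (0:ℝ), (1 - Real.exp (-(1/2) * u ^ (2:ℝ))) / u ^ 2 = ∫ u in Ioi (0:ℝ), (1 - Real.exp (-(1/2) * u ^ (2:ℝ))) * u ^ (-2:ℝ) := by
    refine setIntegral_congr_fun measurableSet_Ioi fun u hu => ?_
    have hu : 0 < u := hu
    have e : u ^ (2:ℝ) = u ^ 2 := by norm_cast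
    show _ / _ = _ * _
    rw [Real.rpow_neg hu.le, e, ← div_eq_mul_inv]
  rw [e1, v] at h
  have hab : ∫ x, |x| ∂(gaussianReal 0 1) = 2 * (Real.sqrt (2 * Real.pi))⁻¹ := by
    rw [integral_gaussianReal_eq_integral_smul (by norm_num)]
    have e2 : ∀ x : ℝ, gaussianPDFReal 0 1 x • |x| = (fun y : ℝ => (Real.sqrt (2 * Real.pi))⁻¹ * (y * Real.exp (-y^2/2))) |x| := by
      intro x
      simp [gaussianPDFReal]; ring
    simp only [e2]
    rw [integral_comp_abs (f := fun y : ℝ => (Real.sqrt (2 * Real.pi))⁻¹ * (y * Real.exp (-y^2/2))), integral_const_mul]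
    have := integral_rpow_mul_exp_neg_mul_rpow (p := 2) (q := 1) (b := 1/2) (by norm_num) (by norm_num) (by norm_num)
    have e3 : ∫ y in Ioi (0:ℝ), y * Real.exp (-y^2/2) = 1 := by
      rw [show (1:ℝ) + 1 = 2 by norm_num] at this
      norm_num [Real.rpow_neg_one] at this
      rw [← this]
      congr 1; ext y; congr 2; ring
    rw [e3]; ring
  rw [hab] at h
  norm_num [Real.Gamma_one_half_eq] at h
  have s1 : Real.sqrt (2 * Real.pi) = Real.sqrt 2 * Real.sqrt Real.pi := Real.sqrt_mul (by norm_num) _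
  have s2 : ((1:ℝ)/2) ^ ((1:ℝ)/2) = (Real.sqrt 2)⁻¹ := by rw [← Real.sqrt_eq_rpow]; simp
  have p1 : Real.sqrt Real.pi * Real.sqrt Real.pi = Real.pi := Real.mul_self_sqrt Real.pi_pos.le
  have q1 : 0 < Real.sqrt Real.pi := Real.sqrt_pos.2 Real.pi_pos
  have q2 : 0 < Real.sqrt 2 := by positivity
  rw [s2] at h
  field_simp at h
  nlinarith

structure ZLaw (s Y : ℝ) (n : Measure ℝ) : Prop where
  hs : 0 < s
  h1 : 1 < Y
  prob : IsProbabilityMeasure n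
  int : Integrable (fun x : ℝ => x) n
  mean : ∫ x, x ∂n = 0
  char : ∀ u : ℝ, ∫ x, Complex.exp (u * x * Complex.I) ∂n = (Real.exp (-s * |u| ^ Y) : ℝ)

lemma ZLaw.cos_shift {s Y : ℝ} {n : Measure ℝ} (H : ZLaw s Y n) (u a : ℝ) :
    ∫ x, Real.cos (u * (x + a)) ∂n = Real.cos (u * a) * Real.exp (-s * |u| ^ Y) := by
  have := H.prob
  have hi : Integrable (fun x : ℝ => Complex.exp (u * x * Complex.I)) n := by
    refine (integrable_const (1:ℝ)).mono' (by apply Continuous.aestronglyMeasurable; fun_prop) (ae_of_all _ fun x => ?_)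
    rw [← Complex.ofReal_mul, Complex.norm_exp_ofReal_mul_I]
  have hi2 := hi.const_mul (Complex.exp (u * a * Complex.I))
  have := integral_re hi2
  simp only [RCLike.re_to_complex] at this
  rw [integral_const_mul, H.char u, Complex.re_mul_ofReal, ← Complex.ofReal_mul, Complex.exp_ofReal_mul_I_re] at this
  rw [← this]
  congr 1; ext x
  rw [← Complex.exp_add, ← Complex.exp_ofReal_mul_I_re]
  congr 2; push_cast; ring

lemma ZLaw.abs_shift {s Y : ℝ} {n : Measure ℝ} (H : ZLaw s Y n) (a : ℝ) :
    IntegrableOn (fun u : ℝ => (1 - Real.cos (u * a) * Real.exp (-s * u ^ Y)) / u ^ 2) (Ioi 0) ∧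
    Real.pi / 2 * ∫ x, |x + a| ∂n = ∫ u in Ioi (0:ℝ), (1 - Real.cos (u * a) * Real.exp (-s * u ^ Y)) / u ^ 2 := by
  have := H.prob
  have hmm : Measurable (fun x : ℝ => x + a) := by fun_prop
  have : IsProbabilityMeasure (n.map (fun x => x + a)) := Measure.isProbabilityMeasure_map hmm.aemeasurable
  have hi : Integrable (fun x : ℝ => x) (n.map (fun x => x + a)) := by
    rw [integrable_map_measure (by fun_prop) (by fun_prop)]
    exact H.int.add (integrable_const a)
  obtain ⟨h1, h2⟩ := abs_fourier _ hi
  have e : ∀ u : ℝ, ∫ x, Real.cos (u * x) ∂(n.map (fun x => x + a)) = Real.cos (u * a) * Real.exp (-s * |u| ^ Y) := by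
    intro u
    rw [integral_map hmm.aemeasurable (by fun_prop), H.cos_shift]
  simp only [e] at h1 h2
  rw [integral_map hmm.aemeasurable (by fun_prop), cD_eq] at h2
  have e2 : ∀ u ∈ Ioi (0:ℝ), (1 - Real.cos (u * a) * Real.exp (-s * |u| ^ Y)) / u ^ 2 = (1 - Real.cos (u * a) * Real.exp (-s * u ^ Y)) / u ^ 2 := by
    intro u hu
    rw [abs_of_pos hu]
  rw [h2]
  exact ⟨h1.congr_fun e2 measurableSet_Ioi, setIntegral_congr_fun measurableSet_Ioi e2⟩

lemma ZLaw.pos_mean {s Y : ℝ} {n : Measure ℝ} (H : ZLaw s Y n) :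
    ∫ x, max x 0 ∂n = 1 / Real.pi * Real.Gamma (1 - 1/Y) * s ^ (1/Y) := by
  have h := (H.abs_shift 0).2
  have h1 := H.h1
  have hs := H.hs
  simp only [add_zero, mul_zero, Real.cos_zero, one_mul] at h
  have v := one_sub_exp_integral (s := s) (p := Y) (q := 2) hs (by linarith) (by norm_num) (by linarith)
  have e1 : ∫ u in Ioi (0:ℝ), (1 - Real.exp (-s * u ^ Y)) / u ^ 2 = ∫ u in Ioi (0:ℝ), (1 - Real.exp (-s * u ^ Y)) * u ^ (-2:ℝ) := by
    refine setIntegral_congr_fun measurableSet_Ioi fun u hu => ?_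
    have hu : 0 < u := hu
    have e : u ^ (2:ℝ) = u ^ 2 := by norm_cast
    show _ / _ = _ * _
    rw [Real.rpow_neg hu.le, e, ← div_eq_mul_inv]
  rw [e1, v] at h
  have e3 : ∀ x : ℝ, max x 0 = (1/2) * |x| + (1/2) * x := by
    intro x
    rcases le_total 0 x with h | h
    · rw [max_eq_left h, abs_of_nonneg h]; ring
    · rw [max_eq_right h, abs_of_nonpos h]; ring
  simp only [e3]
  rw [integral_add (H.int.abs.const_mul _) (H.int.const_mul _), integral_const_mul, integral_const_mul, H.mean]
  have hp := Real.pi_pos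
  rw [show (2:ℝ) - 1 = 1 by norm_num] at h
  have : ∫ x, |x| ∂n = 2 / Real.pi * (s ^ (1/Y) * Real.Gamma (1 - 1/Y)) := by
    field_simp at h ⊢; linarith
  rw [this]; field_simp; ring

lemma cos_quot_bound {v : ℝ} (hv : |v| ≤ 1) (h0 : v ≠ 0) : |(1 - Real.cos v) / v ^ 2 - 1/2| ≤ v ^ 2 := by
  have := Real.cos_bound hv
  have e : (1 - Real.cos v) / v ^ 2 - 1/2 = -(Real.cos v - (1 - v^2/2)) / v ^ 2 := by field_simp; ring
  rw [e, abs_div, abs_neg, abs_of_pos (by positivity : 0 < v ^ 2), div_le_iff₀ (by positivity)]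
  have e4 : |v| ^ 4 = v ^ 2 * v ^ 2 := by rw [show (4:ℕ) = 2 + 2 by norm_num, pow_add, sq_abs]
  rw [e4] at this
  nlinarith [sq_nonneg (v^2)]

lemma ZLaw.shift_asymp {s Y : ℝ} {n : Measure ℝ} (H : ZLaw s Y n) :
    (fun a : ℝ => (∫ x, (max (x + a) 0 - max x 0) ∂n) - a / 2 - 1 / (2 * Real.pi) * Real.Gamma (1 + 1/Y) * s ^ (-(1/Y)) * a ^ 2)
      =o[𝓝 0] fun a => a ^ 2 := by
  have := H.prob
  have h1 := H.h1
  have hs := H.hs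
  have hp := Real.pi_pos
  have ge : ∫ u in Ioi (0:ℝ), Real.exp (-s * u ^ Y) = s ^ (-(1/Y)) * Real.Gamma (1 + 1/Y) := by
    rw [integral_exp_neg_mul_rpow (by linarith) hs]; congr 2
    · ring
    · ring
  have gi : IntegrableOn (fun u : ℝ => Real.exp (-s * u ^ Y)) (Ioi 0) := by
    have := integrableOn_rpow_mul_exp_neg_mul_rpow (p := Y) (s := 0) (b := s) (by norm_num) (by linarith) hs
    simpa using this
  have e3 : ∀ x : ℝ, max x 0 = (1/2) * |x| + (1/2) * x := by
    intro x
    rcases le_total 0 x with h | h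
    · rw [max_eq_left h, abs_of_nonneg h]; ring
    · rw [max_eq_right h, abs_of_nonpos h]; ring
  have hia : ∀ a : ℝ, Integrable (fun x : ℝ => |x + a|) n := fun a => (H.int.add (integrable_const a)).abs
  have e : ∀ a : ℝ, (∫ x, (max (x + a) 0 - max x 0) ∂n) - a / 2 = 1 / Real.pi * ∫ u in Ioi (0:ℝ), (1 - Real.cos (u * a)) / u ^ 2 * Real.exp (-s * u ^ Y) := by
    intro a
    have q1 := H.abs_shift a
    have q2 := H.abs_shift 0
    have e5 : ∫ u in Ioi (0:ℝ), (1 - Real.cos (u * a)) / u ^ 2 * Real.exp (-s * u ^ Y) = Real.pi / 2 * ∫ x, |x + a| ∂n - Real.pi / 2 * ∫ x, |x + 0| ∂n := by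
      rw [q1.2, q2.2, ← integral_sub q1.1 q2.1]
      congr 1; ext u; simp only [mul_zero, Real.cos_zero]; ring
    have e6 : ∀ x : ℝ, max (x + a) 0 - max x 0 = (1/2) * |x + a| - (1/2) * |x + 0| + a / 2 := by
      intro x; rw [e3, e3, add_zero]; ring
    simp only [e6]
    have i0 : Integrable (fun x : ℝ => 1/2 * |x + a| - 1/2 * |x + 0|) n := ((hia a).const_mul _).sub ((hia 0).const_mul _)
    rw [integral_add i0 (integrable_const _), integral_sub ((hia a).const_mul _) ((hia 0).const_mul _), integral_const_mul, integral_const_mul, e5]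
    simp
    field_simp
  have key : Tendsto (fun a : ℝ => ∫ u in Ioi (0:ℝ), (1 - Real.cos (u * a)) / (u * a) ^ 2 * Real.exp (-s * u ^ Y)) (𝓝[≠] 0) (𝓝 (∫ u in Ioi (0:ℝ), 1 / 2 * Real.exp (-s * u ^ Y))) := by
    refine tendsto_integral_filter_of_dominated_convergence (fun u => 1/2 * Real.exp (-s * u ^ Y)) (Eventually.of_forall fun a => by apply Measurable.aestronglyMeasurable; fun_prop) ?_ (gi.const_mul _) ?_
    · filter_upwards [self_mem_nhdsWithin] with a ha
      refine ae_restrict_of_forall_mem measurableSet_Ioi fun u hu => ?_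
      have hu : 0 < u := hu
      have ha : a ≠ 0 := ha
      rw [norm_mul, Real.norm_of_nonneg (Real.exp_pos _).le]
      gcongr
      rw [Real.norm_of_nonneg (div_nonneg (by linarith [Real.cos_le_one (u*a)]) (by positivity)), div_le_iff₀ (by positivity)]
      linarith [one_sub_cos_le (u*a)]
    · refine ae_restrict_of_forall_mem measurableSet_Ioi fun u hu => ?_
      have hu : 0 < u := hu
      refine Tendsto.mul_const _ ?_
      rw [tendsto_iff_norm_sub_tendsto_zero]
      have lim : Tendsto (fun a : ℝ => u * a) (𝓝[≠] 0) (𝓝 0) := by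
        have : Tendsto (fun a : ℝ => u * a) (𝓝 0) (𝓝 (u * 0)) := (continuous_const.mul continuous_id).tendsto 0
        rw [mul_zero] at this
        exact this.mono_left nhdsWithin_le_nhds
      have lim2 := lim.pow 2
      rw [zero_pow (by norm_num)] at lim2
      refine squeeze_zero' (Eventually.of_forall fun _ => norm_nonneg _) ?_ lim2
      have ev := lim.abs
      rw [abs_zero] at ev
      filter_upwards [self_mem_nhdsWithin, ev.eventually (ge_mem_nhds (zero_lt_one))] with a ha hb
      exact cos_quot_bound hb (mul_ne_zero hu.ne' ha)
  rw [isLittleO_iff_tendsto' (Eventually.of_forall fun a ha => by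
    have : a = 0 := by simpa using ha
    subst this; simp)]
  have hN : 𝓝 (0:ℝ) = 𝓝[≠] 0 ⊔ pure 0 := (nhdsNE_sup_pure 0).symm
  suffices h : Tendsto (fun a : ℝ => ((∫ x, (max (x + a) 0 - max x 0) ∂n) - a / 2 - 1 / (2 * Real.pi) * Real.Gamma (1 + 1/Y) * s ^ (-(1/Y)) * a ^ 2) / a ^ 2) (𝓝[≠] 0 ⊔ pure 0) (𝓝 0) by
    rw [← hN] at h; exact h
  rw [tendsto_sup]
  constructor
  · have k2 := (key.const_mul (1/Real.pi)).sub_const (1 / (2 * Real.pi) * Real.Gamma (1 + 1/Y) * s ^ (-(1/Y)))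
    rw [integral_const_mul, ge] at k2
    have z : 1 / Real.pi * (1 / 2 * (s ^ (-(1 / Y)) * Real.Gamma (1 + 1 / Y))) - 1 / (2 * Real.pi) * Real.Gamma (1 + 1 / Y) * s ^ (-(1 / Y)) = 0 := by
      field_simp; ring
    rw [z] at k2
    refine k2.congr' ?_
    filter_upwards [self_mem_nhdsWithin] with a ha
    have ha : a ≠ 0 := ha
    rw [e a]
    have e7 : ∫ u in Ioi (0:ℝ), (1 - Real.cos (u * a)) / (u * a) ^ 2 * Real.exp (-s * u ^ Y) = (∫ u in Ioi (0:ℝ), (1 - Real.cos (u * a)) / u ^ 2 * Real.exp (-s * u ^ Y)) / a ^ 2 := by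
      rw [← integral_div]
      congr 1; ext u; rw [mul_pow]; field_simp
    rw [e7]
    generalize (∫ u in Ioi (0:ℝ), (1 - Real.cos (u * a)) / u ^ 2 * Real.exp (-s * u ^ Y)) = T
    field_simp
  · rw [tendsto_pure_left]
    intro S hS
    simpa using mem_of_mem_nhds hS

lemma StLaw.prod_lap {C Y : ℝ} {m : Measure ℝ} (H : StLaw C Y m) {z w : ℂ} (hz : 0 ≤ z.re) (hw : 0 ≤ w.re) :
    Integrable (fun p : ℝ × ℝ => Complex.exp (-z * p.1) * Complex.exp (-w * p.2)) (m.prod m) ∧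
    ∫ p : ℝ × ℝ, Complex.exp (-z * p.1) * Complex.exp (-w * p.2) ∂(m.prod m) =
      Complex.exp ((C * Real.Gamma (-Y) : ℝ) * (z ^ (Y:ℂ) + w ^ (Y:ℂ))) := by
  have := H.prob
  refine ⟨(H.lap z hz).1.mul_prod (H.lap w hw).1, ?_⟩
  rw [integral_prod_mul (fun x : ℝ => Complex.exp (-z * x)) (fun x : ℝ => Complex.exp (-w * x)), (H.lap z hz).2, (H.lap w hw).2, ← Complex.exp_add, mul_add]

lemma StLaw.prod_ex {C Y : ℝ} {m : Measure ℝ} (H : StLaw C Y m) {a b : ℝ} (ha : 0 ≤ a) (hb : 0 ≤ b) :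
    Integrable (fun p : ℝ × ℝ => Real.exp (-(a * p.1 + b * p.2))) (m.prod m) ∧
    ∫ p : ℝ × ℝ, Real.exp (-(a * p.1 + b * p.2)) ∂(m.prod m) = Real.exp (C * Real.Gamma (-Y) * (a ^ Y + b ^ Y)) := by
  have := H.prob
  have e : ∀ p : ℝ × ℝ, Real.exp (-(a * p.1 + b * p.2)) = Real.exp (-a * p.1) * Real.exp (-b * p.2) := by
    intro p; rw [← Real.exp_add]; congr 1; ring
  simp only [e]
  refine ⟨(H.ex a ha).1.mul_prod (H.ex b hb).1, ?_⟩
  rw [integral_prod_mul (fun x : ℝ => Real.exp (-a * x)) (fun x : ℝ => Real.exp (-b * x)), (H.ex a ha).2, (H.ex b hb).2, ← Real.exp_add, mul_add]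

lemma StLaw.prod_mean {C Y : ℝ} {m : Measure ℝ} (H : StLaw C Y m) (a b : ℝ) :
    Integrable (fun p : ℝ × ℝ => a * p.1 + b * p.2) (m.prod m) ∧
    ∫ p : ℝ × ℝ, (a * p.1 + b * p.2) ∂(m.prod m) = 0 := by
  have := H.prob
  have i1 : Integrable (fun p : ℝ × ℝ => p.1) (m.prod m) := H.mean.1.comp_fst m
  have i2 : Integrable (fun p : ℝ × ℝ => p.2) (m.prod m) := H.mean.1.comp_snd m
  refine ⟨(i1.const_mul a).add (i2.const_mul b), ?_⟩
  rw [integral_add (i1.const_mul a) (i2.const_mul b), integral_const_mul, integral_const_mul]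
  have e1 : ∫ p : ℝ × ℝ, p.1 ∂(m.prod m) = 0 := by
    have := integral_fun_fst (μ := m) (ν := m) (fun x : ℝ => x)
    rw [this, H.mean.2]; simp
  have e2 : ∫ p : ℝ × ℝ, p.2 ∂(m.prod m) = 0 := by
    have := integral_fun_snd (μ := m) (ν := m) (fun x : ℝ => x)
    rw [this, H.mean.2]; simp
  rw [e1, e2]; simp

lemma StLaw.zlaw {C Y : ℝ} {m : Measure ℝ} (H : StLaw C Y m) :
    ZLaw (-2 * C * Real.Gamma (-Y) * Real.cos (Real.pi * Y / 2)) Y ((m.prod m).map (fun p => p.1 - p.2)) := by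
  have := H.prob
  have hk : 0 < C * Real.Gamma (-Y) := mul_pos H.hC (gamma_neg_pos H.h1 H.h2)
  have hcos := cos_piY_neg H.h1 H.h2
  have hm : Measurable (fun p : ℝ × ℝ => p.1 - p.2) := by fun_prop
  obtain ⟨i, e⟩ := H.prod_mean 1 (-1)
  have e0 : ∀ p : ℝ × ℝ, 1 * p.1 + (-1) * p.2 = p.1 - p.2 := fun p => by ring
  simp only [e0] at i e
  refine ⟨by nlinarith, H.h1, Measure.isProbabilityMeasure_map hm.aemeasurable, ?_, ?_, ?_⟩
  · rw [integrable_map_measure (by fun_prop) hm.aemeasurable]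
    exact i
  · rw [integral_map hm.aemeasurable (by fun_prop)]; exact e
  · intro u
    rw [integral_map hm.aemeasurable (by apply Continuous.aestronglyMeasurable; fun_prop)]
    have h := (H.prod_lap (z := -(Complex.I * u)) (w := -(Complex.I * (-u:ℝ))) (by simp) (by simp)).2
    have e1 : ∀ p : ℝ × ℝ, Complex.exp (-(-(Complex.I * u)) * p.1) * Complex.exp (-(-(Complex.I * (-u:ℝ))) * p.2) = Complex.exp (u * ((p.1 - p.2 : ℝ):ℂ) * Complex.I) := by
      intro p; rw [← Complex.exp_add]; congr 1; push_cast; ring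
    simp only [e1] at h
    rw [h, cpow_neg_I_mul H.h1, cpow_neg_I_mul H.h1, Real.sign_neg, abs_neg]
    push_cast
    congr 1; ring

/-- the variable W -/
noncomputable def Wf (M G : ℝ) (p : ℝ × ℝ) : ℝ := max (p.1 - p.2) 0 + ((M - 1) * p.1 + (G + 1) * p.2)

lemma Wf_meas (M G : ℝ) : Measurable (Wf M G) := by unfold Wf; fun_prop

lemma Wf_ge (M G : ℝ) (p : ℝ × ℝ) : M * p.1 + G * p.2 ≤ Wf M G p := by
  unfold Wf; linarith [le_max_left (p.1 - p.2) 0]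

lemma StLaw.pos_int {C Y : ℝ} {m : Measure ℝ} (H : StLaw C Y m) : Integrable (fun p : ℝ × ℝ => max (p.1 - p.2) 0) (m.prod m) := by
  have i := (H.prod_mean 1 (-1)).1
  have e0 : ∀ p : ℝ × ℝ, 1 * p.1 + (-1) * p.2 = p.1 - p.2 := fun p => by ring
  simp only [e0] at i
  exact i.pos_part

lemma StLaw.pos_val {C Y : ℝ} {m : Measure ℝ} (H : StLaw C Y m) : ∫ p : ℝ × ℝ, max (p.1 - p.2) 0 ∂(m.prod m) =
    1 / Real.pi * Real.Gamma (1 - 1/Y) * (-2 * C * Real.Gamma (-Y) * Real.cos (Real.pi * Y / 2)) ^ (1/Y) := by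
  have := H.zlaw.pos_mean
  rw [integral_map (by fun_prop) (by fun_prop)] at this
  exact this

lemma Wf_int {C Y : ℝ} {m : Measure ℝ} (H : StLaw C Y m) (M G : ℝ) : Integrable (Wf M G) (m.prod m) :=
  H.pos_int.add (H.prod_mean (M-1) (G+1)).1

lemma Wf_val {C Y : ℝ} {m : Measure ℝ} (H : StLaw C Y m) (M G : ℝ) : ∫ p, Wf M G p ∂(m.prod m) = ∫ p : ℝ × ℝ, max (p.1 - p.2) 0 ∂(m.prod m) := by
  unfold Wf
  rw [integral_add H.pos_int (H.prod_mean (M-1) (G+1)).1, (H.prod_mean (M-1) (G+1)).2, add_zero]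

lemma Wf_exp {C Y : ℝ} {m : Measure ℝ} (H : StLaw C Y m) {M G : ℝ} (hM : 0 ≤ M) (hG : 0 ≤ G) (l : ℝ) (hl : 0 ≤ l) :
    Integrable (fun p => Real.exp (-(l * Wf M G p))) (m.prod m) := by
  have := H.prob
  refine (H.prod_ex (a := l * M) (b := l * G) (by positivity) (by positivity)).1.mono' (((Wf_meas M G).const_mul l).neg.exp).aestronglyMeasurable (ae_of_all _ fun p => ?_)
  rw [Real.norm_of_nonneg (Real.exp_pos _).le, Real.exp_le_exp]
  nlinarith [mul_le_mul_of_nonneg_left (Wf_ge M G p) hl]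

lemma Wf_tail {C Y : ℝ} {m : Measure ℝ} (H : StLaw C Y m) {M G : ℝ} (hM : 1 < M) (hG : 0 < G) :
    ∃ B : ℝ, ∀ w : ℝ, 1 ≤ w → |(m.prod m).real {p | w ≤ Wf M G p} - C * (M ^ Y + (G+1) ^ Y) / Y * w ^ (-Y)| ≤ B * w ^ (-(Y+1)) := by
  have := H.prob
  obtain ⟨c1, -, h1⟩ := prod_tail H (a := M) (b := G) (by linarith) hG.le
  obtain ⟨c2, -, h2⟩ := prod_tail H (a := G + 1) (b := M - 1) (by linarith) (by linarith)
  refine ⟨c1 + c2, fun w hw => ?_⟩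
  have mS1 : MeasurableSet {p : ℝ × ℝ | p.1 ≤ p.2} := measurableSet_le measurable_fst measurable_snd
  have mS2 : MeasurableSet {p : ℝ × ℝ | p.1 < p.2} := measurableSet_lt measurable_fst measurable_snd
  have t1 := h1 w hw {p | p.1 ≤ p.2} mS1 (fun p hp => show p.1 ≤ p.2 from le_of_lt hp) (fun p hp => hp)
  have t2 := h2 w hw {p | p.1 < p.2} mS2 (fun p hp => hp) (fun p hp => show p.1 ≤ p.2 from le_of_lt hp)
  have mA : MeasurableSet ({p : ℝ × ℝ | w ≤ M * p.2 + G * p.1} ∩ {p | p.1 ≤ p.2}) := (measurableSet_le measurable_const (by fun_prop)).inter mS1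
  have e1 : (m.prod m).real ({p : ℝ × ℝ | w ≤ M * p.2 + G * p.1} ∩ {p | p.1 ≤ p.2}) = (m.prod m).real ({p : ℝ × ℝ | w ≤ M * p.1 + G * p.2} ∩ {p | p.2 ≤ p.1}) := by
    conv_lhs => rw [← Measure.prod_swap]
    rw [map_measureReal_apply measurable_swap mA]
    rfl
  have e2 : {p | w ≤ Wf M G p} = ({p : ℝ × ℝ | w ≤ M * p.1 + G * p.2} ∩ {p | p.2 ≤ p.1}) ∪ ({p : ℝ × ℝ | w ≤ (G+1) * p.2 + (M-1) * p.1} ∩ {p | p.1 < p.2}) := by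
    ext p
    simp only [mem_union, mem_inter_iff, mem_ofPred_eq, Wf]
    rcases le_or_gt p.2 p.1 with h | h
    · rw [max_eq_left (by linarith)]
      constructor
      · intro h'; exact Or.inl ⟨by linarith, h⟩
      · rintro (⟨a, -⟩ | ⟨-, b⟩)
        · linarith
        · linarith
    · rw [max_eq_right (by linarith)]
      constructor
      · intro h'; exact Or.inr ⟨by linarith, h⟩
      · rintro (⟨-, b⟩ | ⟨a, -⟩)
        · linarith
        · linarith
  rw [e2, measureReal_union]
  · rw [e1] at t1
    set x1 := (m.prod m).real ({p : ℝ × ℝ | w ≤ M * p.1 + G * p.2} ∩ {p | p.2 ≤ p.1})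
    set x2 := (m.prod m).real ({p : ℝ × ℝ | w ≤ (G+1) * p.2 + (M-1) * p.1} ∩ {p | p.1 < p.2})
    have : x1 + x2 - C * (M ^ Y + (G+1) ^ Y) / Y * w ^ (-Y) = (x1 - C * M ^ Y / Y * w ^ (-Y)) + (x2 - C * (G+1) ^ Y / Y * w ^ (-Y)) := by ring
    rw [this]
    rw [add_mul]
    exact (abs_add_le _ _).trans (add_le_add t1 t2)
  · rw [Set.disjoint_left]
    rintro p ⟨-, a⟩ ⟨-, b⟩
    exact absurd (show p.1 < p.2 from b) (not_lt.2 (show p.2 ≤ p.1 from a))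
  · exact (measurableSet_le measurable_const (by fun_prop)).inter mS2

/-- constant from the expansion (equals `-d₃₂`) -/
noncomputable def Aconst (C Y M G : ℝ) (m : Measure ℝ) : ℝ :=
  ∫ p, {p | Wf M G p ≤ 0}.indicator (fun p => Wf M G p ^ 2 / 2) p ∂(m.prod m) + 
         ∫ w in Ioi (0:ℝ), w * ((m.prod m).real {p | w ≤ Wf M G p} - C * (M ^ Y + (G+1) ^ Y) / Y * w ^ (-Y))

lemma gamma_two_sub {Y : ℝ} (h1 : 1 < Y) (h2 : Y < 2) : Real.Gamma (2 - Y) / (Y - 1) = Y * Real.Gamma (-Y) := by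
  have a := Real.Gamma_add_one (s := -Y) (by linarith)
  have b := Real.Gamma_add_one (s := -Y + 1) (by linarith)
  rw [show -Y + 1 + 1 = 2 - Y by ring] at b
  rw [b, a, div_eq_iff (by linarith)]; ring

lemma Wf_expansion {C Y : ℝ} {m : Measure ℝ} (H : StLaw C Y m) {M G : ℝ} (hM : 1 < M) (hG : 0 < G) :
    Tendsto (fun h : ℝ => (∫ p, (Real.exp (-(h * Wf M G p)) - 1 + h * Wf M G p) ∂(m.prod m) - C * Real.Gamma (-Y) * (M ^ Y + (G+1) ^ Y) * h ^ Y) / h ^ 2)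
      (𝓝[>] 0) (𝓝 (Aconst C Y M G m)) := by
  have := H.prob
  obtain ⟨B, hB⟩ := Wf_tail H hM hG
  have := expansion (m.prod m) (Wf_meas M G) (Wf_exp H (by linarith) hG.le) (Wf_int H M G) H.h1 H.h2 hB
  rw [gamma_two_sub H.h1 H.h2] at this
  have hY : Y ≠ 0 := by linarith [H.h1]
  have e : C * (M ^ Y + (G + 1) ^ Y) / Y * (Y * Real.Gamma (-Y)) = C * Real.Gamma (-Y) * (M ^ Y + (G+1) ^ Y) := by
    field_simp
  rw [e] at this
  exact this

lemma mu_eq {C Y : ℝ} {m : Measure ℝ} (H : StLaw C Y m) {M G t c : ℝ} (hM : 0 < M) (hG : 0 < G) (ht : 0 < t)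
    (μ : Measure ℝ) [IsProbabilityMeasure μ]
    (hchar : ∀ u : ℝ,
      (∫ x, Complex.exp (Complex.I * u * x) ∂μ) =
        Complex.exp ((t : ℂ) * (Complex.I * (c : ℂ) * (u : ℂ) +
          ((C * Real.Gamma (-Y) : ℝ) : ℂ) *
          (((M : ℂ) - Complex.I * (u : ℂ)) ^ (Y : ℂ) + ((G : ℂ) + Complex.I * (u : ℂ)) ^ (Y : ℂ)
            - (M : ℂ) ^ (Y : ℂ) - (G : ℂ) ^ (Y : ℂ))))) :
    μ = ((m.prod m).withDensity (fun p => ENNReal.ofReal (Real.exp (-(t * (C * Real.Gamma (-Y) * (M ^ Y + G ^ Y)))) *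
        Real.exp (-(M * t ^ (1/Y) * p.1 + G * t ^ (1/Y) * p.2))))).map (fun p => t ^ (1/Y) * (p.1 - p.2) + c * t) := by
  have := H.prob
  have hY : Y ≠ 0 := by linarith [H.h1]
  have hh : 0 < t ^ (1/Y) := Real.rpow_pos_of_pos ht _
  have hhY : (t ^ (1/Y)) ^ Y = t := by
    rw [← Real.rpow_mul ht.le, one_div_mul_cancel hY, Real.rpow_one]
  set h := t ^ (1/Y) with hdef
  have hi := (H.prod_ex (a := M * h) (b := G * h) (by positivity) (by positivity)).1.const_mul (Real.exp (-(t * (C * Real.Gamma (-Y) * (M ^ Y + G ^ Y)))))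
  have : IsFiniteMeasure ((m.prod m).withDensity (fun p => ENNReal.ofReal (Real.exp (-(t * (C * Real.Gamma (-Y) * (M ^ Y + G ^ Y)))) *
        Real.exp (-(M * h * p.1 + G * h * p.2))))) := isFiniteMeasure_withDensity_ofReal hi.2
  apply Measure.ext_of_charFun
  ext u
  rw [charFun_apply_real, charFun_apply_real, integral_map (by fun_prop) (by apply Continuous.aestronglyMeasurable; fun_prop),
    integral_withDensity_eq_integral_toReal_smul (by fun_prop) (ae_of_all _ fun _ => ENNReal.ofReal_lt_top)]
  have e0 : ∀ x : ℝ, Complex.exp (u * x * Complex.I) = Complex.exp (Complex.I * u * x) := by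
    intro x; congr 1; ring
  simp only [e0]
  rw [hchar u]
  have e1 : ∀ p : ℝ × ℝ, (ENNReal.ofReal (Real.exp (-(t * (C * Real.Gamma (-Y) * (M ^ Y + G ^ Y)))) *
        Real.exp (-(M * h * p.1 + G * h * p.2)))).toReal • Complex.exp (Complex.I * u * ((h * (p.1 - p.2) + c * t : ℝ):ℂ)) =
      Complex.exp (-(t * (C * Real.Gamma (-Y) * (M ^ Y + G ^ Y)) : ℝ) + Complex.I * c * u * t) *
       (Complex.exp (-(h * (M - Complex.I * u)) * p.1) * Complex.exp (-(h * (G + Complex.I * u)) * p.2)) := by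
    intro p
    rw [ENNReal.toReal_ofReal (by positivity), Complex.real_smul, ← Real.exp_add, Complex.ofReal_exp, ← Complex.exp_add, ← Complex.exp_add, ← Complex.exp_add]
    congr 1; push_cast; ring
  simp only [e1]
  rw [integral_const_mul, (H.prod_lap (by simp; positivity) (by simp; positivity)).2, ofReal_mul_cpow hh, ofReal_mul_cpow hh, ← Complex.ofReal_cpow hh.le, hhY, ← Complex.exp_add,
    ← Complex.ofReal_cpow hM.le, ← Complex.ofReal_cpow hG.le]
  congr 1; push_cast; ring

lemma price {C Y : ℝ} {m : Measure ℝ} (H : StLaw C Y m) {M G t c : ℝ} (hM : 0 < M) (hG : 0 < G) (ht : 0 < t)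
    (hc : c = -C * Real.Gamma (-Y) * ((M-1) ^ Y + (G+1) ^ Y - M ^ Y - G ^ Y))
    (μ : Measure ℝ) [IsProbabilityMeasure μ]
    (hchar : ∀ u : ℝ,
      (∫ x, Complex.exp (Complex.I * u * x) ∂μ) =
        Complex.exp ((t : ℂ) * (Complex.I * (c : ℂ) * (u : ℂ) +
          ((C * Real.Gamma (-Y) : ℝ) : ℂ) *
          (((M : ℂ) - Complex.I * (u : ℂ)) ^ (Y : ℂ) + ((G : ℂ) + Complex.I * (u : ℂ)) ^ (Y : ℂ)
            - (M : ℂ) ^ (Y : ℂ) - (G : ℂ) ^ (Y : ℂ))))) :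
    ∫ x, max (Real.exp x - 1) 0 ∂μ = Real.exp (-(t * (C * Real.Gamma (-Y) * ((M-1) ^ Y + (G+1) ^ Y)))) *
      ∫ p : ℝ × ℝ, Real.exp (-(t ^ (1/Y) * ((M-1) * p.1 + (G+1) * p.2))) * (1 - Real.exp (-max (t ^ (1/Y) * (p.1 - p.2) + c * t) 0)) ∂(m.prod m) := by
  have := H.prob
  rw [mu_eq H hM hG ht μ hchar, integral_map (by fun_prop) (by apply Continuous.aestronglyMeasurable; fun_prop),
    integral_withDensity_eq_integral_toReal_smul (by fun_prop) (ae_of_all _ fun _ => ENNReal.ofReal_lt_top), ← integral_const_mul]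
  congr 1; ext p
  have e : ∀ T : ℝ, max (Real.exp T - 1) 0 = Real.exp T * (1 - Real.exp (-max T 0)) := by
    intro T
    rcases le_total 0 T with h | h
    · rw [max_eq_left h, max_eq_left (by linarith [Real.one_le_exp h]), mul_sub, ← Real.exp_add]; simp
    · rw [max_eq_right h, max_eq_right (by linarith [Real.exp_le_one_iff.2 h])]; simp
  rw [e, ENNReal.toReal_ofReal (by positivity), smul_eq_mul, ← Real.exp_add, ← mul_assoc, ← Real.exp_add]
  conv_rhs => rw [← mul_assoc, ← Real.exp_add]
  congr 2
  rw [hc]; ring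

lemma exp_lip {a b : ℝ} (ha : 0 ≤ a) (hb : 0 ≤ b) : |Real.exp (-a) - Real.exp (-b)| ≤ |b - a| := by
  have e1 : Real.exp (-b) = Real.exp (-a) * Real.exp (-(b-a)) := by rw [← Real.exp_add]; congr 1; ring
  have e2 : Real.exp (-a) = Real.exp (-b) * Real.exp (-(a-b)) := by rw [← Real.exp_add]; congr 1; ring
  have p1 : Real.exp (-a) ≤ 1 := Real.exp_le_one_iff.2 (by linarith)
  have p2 : Real.exp (-b) ≤ 1 := Real.exp_le_one_iff.2 (by linarith)
  have q1 := Real.exp_pos (-a)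
  have q2 := Real.exp_pos (-b)
  have i1 : Real.exp (-a) * (1 - (b-a)) ≤ Real.exp (-b) := by
    rw [e1]; exact mul_le_mul_of_nonneg_left (by linarith [Real.add_one_le_exp (-(b-a))]) q1.le
  have i2 : Real.exp (-b) * (1 - (a-b)) ≤ Real.exp (-a) := by
    rw [e2]; exact mul_le_mul_of_nonneg_left (by linarith [Real.add_one_le_exp (-(a-b))]) q2.le
  have m1 : Real.exp (-a) * (b - a) ≤ |b - a| := by
    calc _ ≤ Real.exp (-a) * |b-a| := mul_le_mul_of_nonneg_left (le_abs_self _) q1.le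
      _ ≤ 1 * |b-a| := mul_le_mul_of_nonneg_right p1 (abs_nonneg _)
      _ = _ := one_mul _
  have m2 : Real.exp (-b) * (a - b) ≤ |b - a| := by
    calc _ ≤ Real.exp (-b) * |b-a| := mul_le_mul_of_nonneg_left (by rw [abs_sub_comm]; exact le_abs_self _) q2.le
      _ ≤ 1 * |b-a| := mul_le_mul_of_nonneg_right p2 (abs_nonneg _)
      _ = _ := one_mul _
  rw [abs_le]; constructor <;> nlinarith

lemma exp_lip2 {a b : ℝ} (ha : 0 ≤ a) (hb : 0 ≤ b) : |Real.exp (-a) - Real.exp (-b) - (b - a)| ≤ |b - a| * (a + |b - a|) := by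
  have e1 : Real.exp (-b) = Real.exp (-a) * Real.exp (-(b-a)) := by rw [← Real.exp_add]; congr 1; ring
  have e2 : Real.exp (-a) = Real.exp (-b) * Real.exp (-(a-b)) := by rw [← Real.exp_add]; congr 1; ring
  have p1 : Real.exp (-a) ≤ 1 := Real.exp_le_one_iff.2 (by linarith)
  have p2 : Real.exp (-b) ≤ 1 := Real.exp_le_one_iff.2 (by linarith)
  have r1 : 1 - Real.exp (-a) ≤ a + |b - a| := by linarith [Real.add_one_le_exp (-a), abs_nonneg (b-a)]
  have r2 : 1 - Real.exp (-b) ≤ a + |b - a| := by linarith [Real.add_one_le_exp (-b), le_abs_self (b-a)]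
  have q1 := Real.exp_pos (-a)
  have q2 := Real.exp_pos (-b)
  have i1 : Real.exp (-a) * (1 - (b-a)) ≤ Real.exp (-b) := by
    rw [e1]; exact mul_le_mul_of_nonneg_left (by linarith [Real.add_one_le_exp (-(b-a))]) q1.le
  have i2 : Real.exp (-b) * (1 - (a-b)) ≤ Real.exp (-a) := by
    rw [e2]; exact mul_le_mul_of_nonneg_left (by linarith [Real.add_one_le_exp (-(a-b))]) q2.le
  have m1 : (1 - Real.exp (-a)) * (a - b) ≤ |b - a| * (a + |b-a|) := by
    calc _ ≤ (1 - Real.exp (-a)) * |b-a| := mul_le_mul_of_nonneg_left (by rw [abs_sub_comm]; exact le_abs_self _) (by linarith)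
      _ ≤ (a + |b-a|) * |b-a| := mul_le_mul_of_nonneg_right r1 (abs_nonneg _)
      _ = _ := mul_comm _ _
  have m2 : (1 - Real.exp (-b)) * (b - a) ≤ |b - a| * (a + |b-a|) := by
    calc _ ≤ (1 - Real.exp (-b)) * |b-a| := mul_le_mul_of_nonneg_left (le_abs_self _) (by linarith)
      _ ≤ (a + |b-a|) * |b-a| := mul_le_mul_of_nonneg_right r2 (abs_nonneg _)
      _ = _ := mul_comm _ _
  rw [abs_le]; constructor <;> nlinarith

lemma max_shift_le (x b : ℝ) : |max (x + b) 0 - max x 0| ≤ |b| := by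
  have := abs_max_sub_max_le_abs (x + b) x 0
  simpa using this

lemma drift_pt (E P0 P1 b : ℝ) (h0 : 0 ≤ P0) (h1 : 0 ≤ P1) (hb : |P1 - P0| ≤ b) :
    |E * (Real.exp (-P0) - Real.exp (-P1)) - (P1 - P0)| ≤ b * (P0 + b + |E - 1|) := by
  have e : E * (Real.exp (-P0) - Real.exp (-P1)) - (P1 - P0) = (E - 1) * (Real.exp (-P0) - Real.exp (-P1)) + (Real.exp (-P0) - Real.exp (-P1) - (P1 - P0)) := by ring
  have hb0 : 0 ≤ b := (abs_nonneg _).trans hb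
  rw [e]
  refine (abs_add_le _ _).trans ?_
  rw [abs_mul]
  have a1 := (exp_lip h0 h1).trans hb
  have a2 := exp_lip2 h0 h1
  have a3 : |P1 - P0| * (P0 + |P1 - P0|) ≤ b * (P0 + b) := by gcongr
  have a4 := mul_le_mul_of_nonneg_left a1 (abs_nonneg (E - 1))
  nlinarith

lemma drift_error {C Y : ℝ} {m : Measure ℝ} (H : StLaw C Y m) {M G h : ℝ} (hM : 1 < M) (hG : 0 < G) (hh : 0 ≤ h) (b : ℝ) :
    |∫ p : ℝ × ℝ, Real.exp (-(h * ((M-1) * p.1 + (G+1) * p.2))) * (1 - Real.exp (-max (h * (p.1 - p.2) + b) 0)) ∂(m.prod m)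
      - (Real.exp (C * Real.Gamma (-Y) * ((M-1) ^ Y + (G+1) ^ Y) * h ^ Y) - ∫ p, Real.exp (-(h * Wf M G p)) ∂(m.prod m)
        + ∫ p : ℝ × ℝ, (max (h * (p.1 - p.2) + b) 0 - max (h * (p.1 - p.2)) 0) ∂(m.prod m))| ≤
    |b| * (h * (∫ p : ℝ × ℝ, max (p.1 - p.2) 0 ∂(m.prod m)) + |b| + (h * (∫ p : ℝ × ℝ, |(M-1) * p.1 + (G+1) * p.2| ∂(m.prod m)) + (Real.exp (C * Real.Gamma (-Y) * ((M-1) ^ Y + (G+1) ^ Y) * h ^ Y) - 1))) := by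
  have := H.prob
  have hM1 : 0 ≤ M - 1 := by linarith
  have hG1 : 0 ≤ G + 1 := by linarith
  obtain ⟨iE, vE⟩ := H.prod_ex (a := h * (M-1)) (b := h * (G+1)) (by positivity) (by positivity)
  rw [Real.mul_rpow hh hM1, Real.mul_rpow hh hG1] at vE
  have e0 : ∀ p : ℝ × ℝ, Real.exp (-(h * (M-1) * p.1 + h * (G+1) * p.2)) = Real.exp (-(h * ((M-1) * p.1 + (G+1) * p.2))) := by
    intro p; congr 1; ring
  simp only [e0] at iE vE
  rw [show C * Real.Gamma (-Y) * (h ^ Y * (M-1) ^ Y + h ^ Y * (G+1) ^ Y) = C * Real.Gamma (-Y) * ((M-1) ^ Y + (G+1) ^ Y) * h ^ Y by ring] at vE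
  have iW := Wf_exp H (M := M) (G := G) (by linarith) hG.le h hh
  have iP := H.pos_int
  obtain ⟨iU, vU⟩ := H.prod_mean (M-1) (G+1)
  set Q := m.prod m with hQ
  have iF : Integrable (fun p : ℝ × ℝ => Real.exp (-(h * ((M-1) * p.1 + (G+1) * p.2))) * (1 - Real.exp (-max (h * (p.1 - p.2) + b) 0))) Q := by
    refine iE.mono' (by apply Measurable.aestronglyMeasurable; fun_prop) (ae_of_all _ fun p => ?_)
    have z : Real.exp (-max (h * (p.1 - p.2) + b) 0) ≤ 1 := Real.exp_le_one_iff.2 (by linarith [le_max_right (h * (p.1 - p.2) + b) 0])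
    have z2 := Real.exp_pos (-max (h * (p.1 - p.2) + b) 0)
    rw [norm_mul, Real.norm_of_nonneg (Real.exp_pos _).le, Real.norm_of_nonneg (by linarith)]
    exact mul_le_of_le_one_right (Real.exp_pos _).le (by linarith)
  have iD : Integrable (fun p : ℝ × ℝ => max (h * (p.1 - p.2) + b) 0 - max (h * (p.1 - p.2)) 0) Q := by
    refine (integrable_const |b|).mono' (by apply Measurable.aestronglyMeasurable; fun_prop) (ae_of_all _ fun p => ?_)
    exact max_shift_le _ _
  have iB : Integrable (fun p : ℝ × ℝ => h * |(M-1) * p.1 + (G+1) * p.2| + (Real.exp (-(h * ((M-1) * p.1 + (G+1) * p.2))) - 1 + h * ((M-1) * p.1 + (G+1) * p.2))) Q :=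
    (iU.abs.const_mul h).add ((iE.sub (integrable_const 1)).add (iU.const_mul h))
  have iB2 : Integrable (fun p : ℝ × ℝ => |b| * (h * max (p.1 - p.2) 0 + |b| + (h * |(M-1) * p.1 + (G+1) * p.2| + (Real.exp (-(h * ((M-1) * p.1 + (G+1) * p.2))) - 1 + h * ((M-1) * p.1 + (G+1) * p.2))))) Q :=
    (((iP.const_mul h).add (integrable_const _)).add iB).const_mul _
  have vB2 : ∫ p : ℝ × ℝ, |b| * (h * max (p.1 - p.2) 0 + |b| + (h * |(M-1) * p.1 + (G+1) * p.2| + (Real.exp (-(h * ((M-1) * p.1 + (G+1) * p.2))) - 1 + h * ((M-1) * p.1 + (G+1) * p.2)))) ∂Q = 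
    |b| * (h * (∫ p : ℝ × ℝ, max (p.1 - p.2) 0 ∂Q) + |b| + (h * (∫ p : ℝ × ℝ, |(M-1) * p.1 + (G+1) * p.2| ∂Q) + (Real.exp (C * Real.Gamma (-Y) * ((M-1) ^ Y + (G+1) ^ Y) * h ^ Y) - 1))) := by
    have j1 : Integrable (fun p : ℝ × ℝ => h * max (p.1 - p.2) 0 + |b|) Q := (iP.const_mul h).add (integrable_const _)
    have j2 : Integrable (fun p : ℝ × ℝ => Real.exp (-(h * ((M-1) * p.1 + (G+1) * p.2))) - 1) Q := iE.sub (integrable_const 1)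
    have j3 : Integrable (fun p : ℝ × ℝ => Real.exp (-(h * ((M-1) * p.1 + (G+1) * p.2))) - 1 + h * ((M-1) * p.1 + (G+1) * p.2)) Q := j2.add (iU.const_mul h)
    rw [integral_const_mul, integral_add j1 iB, integral_add (iP.const_mul h) (integrable_const _), integral_add (iU.abs.const_mul h) j3, integral_add j2 (iU.const_mul h),
      integral_sub iE (integrable_const 1), integral_const_mul, integral_const_mul, integral_const_mul, vU, vE]
    simp
  have eq : ∫ p : ℝ × ℝ, Real.exp (-(h * ((M-1) * p.1 + (G+1) * p.2))) * (1 - Real.exp (-max (h * (p.1 - p.2) + b) 0)) ∂Q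
      - (Real.exp (C * Real.Gamma (-Y) * ((M-1) ^ Y + (G+1) ^ Y) * h ^ Y) - ∫ p, Real.exp (-(h * Wf M G p)) ∂Q
        + ∫ p : ℝ × ℝ, (max (h * (p.1 - p.2) + b) 0 - max (h * (p.1 - p.2)) 0) ∂Q) = 
      ∫ p : ℝ × ℝ, (Real.exp (-(h * ((M-1) * p.1 + (G+1) * p.2))) * (Real.exp (-max (h * (p.1 - p.2)) 0) - Real.exp (-max (h * (p.1 - p.2) + b) 0)) - (max (h * (p.1 - p.2) + b) 0 - max (h * (p.1 - p.2)) 0)) ∂Q := by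
    have j1 : Integrable (fun p : ℝ × ℝ => Real.exp (-(h * ((M-1) * p.1 + (G+1) * p.2))) - Real.exp (-(h * Wf M G p))) Q := iE.sub iW
    have j2 : Integrable (fun p : ℝ × ℝ => Real.exp (-(h * ((M-1) * p.1 + (G+1) * p.2))) - Real.exp (-(h * Wf M G p)) + (max (h * (p.1 - p.2) + b) 0 - max (h * (p.1 - p.2)) 0)) Q := j1.add iD
    rw [← vE, ← integral_sub iE iW, ← integral_add j1 iD, ← integral_sub iF j2]
    congr 1; ext p
    have : Real.exp (-(h * Wf M G p)) = Real.exp (-(h * ((M-1) * p.1 + (G+1) * p.2))) * Real.exp (-max (h * (p.1 - p.2)) 0) := by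
      rw [← Real.exp_add, Wf]; congr 1
      rw [show max (h * (p.1 - p.2)) 0 = h * max (p.1 - p.2) 0 by rw [mul_max_of_nonneg _ _ hh, mul_zero]]
      ring
    rw [this]; ring
  rw [eq, ← vB2, ← Real.norm_eq_abs]
  refine norm_integral_le_of_norm_le iB2 (ae_of_all _ fun p => ?_)
  have d := drift_pt (Real.exp (-(h * ((M-1) * p.1 + (G+1) * p.2)))) (max (h * (p.1 - p.2)) 0) (max (h * (p.1 - p.2) + b) 0) |b| (le_max_right _ _) (le_max_right _ _) (max_shift_le _ _)
  rw [Real.norm_eq_abs]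
  refine d.trans ?_
  rw [show max (h * (p.1 - p.2)) 0 = h * max (p.1 - p.2) 0 by rw [mul_max_of_nonneg _ _ hh, mul_zero]]
  have ab : |Real.exp (-(h * ((M-1) * p.1 + (G+1) * p.2))) - 1| ≤ h * |(M-1) * p.1 + (G+1) * p.2| + (Real.exp (-(h * ((M-1) * p.1 + (G+1) * p.2))) - 1 + h * ((M-1) * p.1 + (G+1) * p.2)) := by
    have g := g_nonneg (h * ((M-1) * p.1 + (G+1) * p.2))
    have i1 : h * ((M-1) * p.1 + (G+1) * p.2) ≤ h * |(M-1) * p.1 + (G+1) * p.2| := mul_le_mul_of_nonneg_left (le_abs_self _) hh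
    have i2 : h * (-((M-1) * p.1 + (G+1) * p.2)) ≤ h * |(M-1) * p.1 + (G+1) * p.2| := mul_le_mul_of_nonneg_left (neg_le_abs _) hh
    rw [abs_le]; constructor <;> linarith
  gcongr

lemma rpow_lo {p r : ℝ} (h : r < p) : (fun t : ℝ => t ^ p) =o[𝓝[>] 0] fun t => t ^ r := by
  have lim : Tendsto (fun t : ℝ => t ^ (p - r)) (𝓝[>] 0) (𝓝 0) := by
    have := (Real.continuousAt_rpow_const 0 (p - r) (Or.inr (by linarith))).tendsto
    rw [Real.zero_rpow (by linarith)] at this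
    exact this.mono_left nhdsWithin_le_nhds
  refine isLittleO_iff_exists_eq_mul.2 ⟨fun t => t ^ (p - r), lim, ?_⟩
  filter_upwards [self_mem_nhdsWithin] with t ht
  have ht : 0 < t := ht
  simp only [Pi.mul_apply]
  rw [← Real.rpow_add ht]; congr 1; ring

lemma rpow_O {p r : ℝ} (h : r ≤ p) : (fun t : ℝ => t ^ p) =O[𝓝[>] 0] fun t => t ^ r := by
  rcases h.eq_or_lt with h | h
  · rw [h]
  · exact (rpow_lo h).isBigO

lemma exp_sub_one_le {x : ℝ} : Real.exp x - 1 ≤ x * Real.exp x := by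
  have := Real.add_one_le_exp (-x)
  have p := Real.exp_pos x
  have e : Real.exp x * Real.exp (-x) = 1 := by rw [← Real.exp_add]; simp
  nlinarith

lemma ev_unit : ∀ᶠ t : ℝ in 𝓝[>] 0, 0 < t ∧ t ≤ 1 := by
  filter_upwards [Ioc_mem_nhdsGT (zero_lt_one)] with t ht using ht

/-- normalized price integral -/
noncomputable def Iint (Y M G c : ℝ) (m : Measure ℝ) (t : ℝ) : ℝ :=
  ∫ p : ℝ × ℝ, Real.exp (-(t ^ (1/Y) * ((M-1) * p.1 + (G+1) * p.2))) * (1 - Real.exp (-max (t ^ (1/Y) * (p.1 - p.2) + c * t) 0)) ∂(m.prod m)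

lemma delta_asymp {C Y : ℝ} {m : Measure ℝ} (H : StLaw C Y m) (c : ℝ) :
    (fun t : ℝ => (∫ p : ℝ × ℝ, (max (t ^ (1/Y) * (p.1 - p.2) + c * t) 0 - max (t ^ (1/Y) * (p.1 - p.2)) 0) ∂(m.prod m)) - c / 2 * t
      - c ^ 2 / (2 * Real.pi) * Real.Gamma (1 + 1/Y) * (-2 * C * Real.Gamma (-Y) * Real.cos (Real.pi * Y / 2)) ^ (-(1/Y)) * t ^ (2 - 1/Y))
      =o[𝓝[>] 0] fun t => t ^ (2 - 1/Y) := by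
  have := H.prob
  have hY := H.h1
  have hY1 : 1/Y < 1 := by rw [div_lt_one (by linarith)]; exact hY
  have sh := H.zlaw.shift_asymp
  set s := -2 * C * Real.Gamma (-Y) * Real.cos (Real.pi * Y / 2) with hs
  have lim : Tendsto (fun t : ℝ => c * t ^ (1 - 1/Y)) (𝓝[>] 0) (𝓝 0) := by
    have := (Real.continuousAt_rpow_const 0 (1 - 1/Y) (Or.inr (by linarith))).tendsto
    rw [Real.zero_rpow (by linarith)] at this
    have := (this.mono_left (nhdsWithin_le_nhds (s := Ioi 0))).const_mul c
    rwa [mul_zero] at this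
  have q := sh.comp_tendsto lim
  have q2 := (isBigO_refl (fun t : ℝ => t ^ (1/Y)) (𝓝[>] 0)).mul_isLittleO q
  have q3 : (fun t : ℝ => t ^ (1/Y) * ((fun a : ℝ => a ^ 2) ∘ fun t => c * t ^ (1 - 1/Y)) t) =O[𝓝[>] 0] fun t => t ^ (2 - 1/Y) := by
    refine IsBigO.of_bound (c^2) ?_
    filter_upwards [ev_unit] with t ht
    have ht := ht.1
    simp only [Function.comp]
    have e : t ^ (1/Y) * (c * t ^ (1 - 1/Y)) ^ 2 = c ^ 2 * t ^ (2 - 1/Y) := by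
      rw [mul_pow, ← Real.rpow_natCast (t ^ (1 - 1/Y)), ← Real.rpow_mul ht.le]
      have : t ^ (2 - 1/Y) = t ^ (1/Y) * t ^ ((1 - 1/Y) * (2:ℕ)) := by
        rw [← Real.rpow_add ht]; congr 1; push_cast; ring
      rw [this]; ring
    rw [e, norm_mul, Real.norm_of_nonneg (sq_nonneg c)]
  refine (q2.trans_isBigO q3).congr' ?_ EventuallyEq.rfl
  filter_upwards [ev_unit] with t ht
  have ht := ht.1
  have hh : 0 < t ^ (1/Y) := Real.rpow_pos_of_pos ht _
  simp only [Function.comp]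
  rw [integral_map (by fun_prop) (by fun_prop)]
  have ha : t ^ (1/Y) * (c * t ^ (1 - 1/Y)) = c * t := by
    have : t = t ^ (1/Y) * t ^ (1 - 1/Y) := by
      rw [← Real.rpow_add ht]; simp
    conv_rhs => rw [this]
    ring
  have ha2 : t ^ (1/Y) * (c * t ^ (1 - 1/Y)) ^ 2 = c ^ 2 * t ^ (2 - 1/Y) := by
    rw [mul_pow, ← Real.rpow_natCast (t ^ (1 - 1/Y)), ← Real.rpow_mul ht.le]
    have : t ^ (2 - 1/Y) = t ^ (1/Y) * t ^ ((1 - 1/Y) * (2:ℕ)) := by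
      rw [← Real.rpow_add ht]; congr 1; push_cast; ring
    rw [this]; ring
  have e1 : ∫ p : ℝ × ℝ, (max (t ^ (1/Y) * (p.1 - p.2) + c * t) 0 - max (t ^ (1/Y) * (p.1 - p.2)) 0) ∂(m.prod m) = 
      t ^ (1/Y) * ∫ p : ℝ × ℝ, (max (p.1 - p.2 + c * t ^ (1 - 1/Y)) 0 - max (p.1 - p.2) 0) ∂(m.prod m) := by
    rw [← integral_const_mul]
    congr 1; ext p
    generalize p.1 - p.2 = z
    rw [mul_sub, mul_max_of_nonneg _ _ hh.le, mul_max_of_nonneg _ _ hh.le, mul_zero, mul_add, ha]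
  rw [e1]
  rw [mul_sub, mul_sub, mul_div_assoc', ha]
  have e2 : t ^ (1 / Y) * (1 / (2 * Real.pi) * Real.Gamma (1 + 1 / Y) * s ^ (-(1 / Y)) * (c * t ^ (1 - 1 / Y)) ^ 2) = 
    1 / (2 * Real.pi) * Real.Gamma (1 + 1 / Y) * s ^ (-(1 / Y)) * (t ^ (1/Y) * (c * t ^ (1 - 1/Y)) ^ 2) := by ring
  rw [e2, ha2]; ring

lemma W_asymp {C Y : ℝ} {m : Measure ℝ} (H : StLaw C Y m) {M G : ℝ} (hM : 1 < M) (hG : 0 < G) :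
    (fun t : ℝ => ∫ p, (Real.exp (-(t ^ (1/Y) * Wf M G p)) - 1 + t ^ (1/Y) * Wf M G p) ∂(m.prod m) - C * Real.Gamma (-Y) * (M ^ Y + (G+1) ^ Y) * t - Aconst C Y M G m * t ^ (2/Y))
      =o[𝓝[>] 0] fun t => t ^ (2/Y) := by
  have hY := H.h1
  have hY0 : 0 < 1/Y := by positivity
  have lim : Tendsto (fun t : ℝ => t ^ (1/Y)) (𝓝[>] 0) (𝓝[>] 0) := by
    refine tendsto_nhdsWithin_iff.2 ⟨?_, ?_⟩
    · have := (Real.continuousAt_rpow_const 0 (1/Y) (Or.inr hY0.le)).tendsto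
      rw [Real.zero_rpow (by linarith)] at this
      exact this.mono_left nhdsWithin_le_nhds
    · filter_upwards [ev_unit] with t ht using Real.rpow_pos_of_pos ht.1 _
  have q := ((Wf_expansion H hM hG).comp lim).sub_const (Aconst C Y M G m)
  rw [sub_self] at q
  refine isLittleO_iff_exists_eq_mul.2 ⟨_, q, ?_⟩
  filter_upwards [ev_unit] with t ht
  have ht := ht.1
  have hh : 0 < t ^ (1/Y) := Real.rpow_pos_of_pos ht _
  have h2 : t ^ (2/Y) = (t ^ (1/Y)) ^ 2 := by
    rw [← Real.rpow_natCast (t ^ (1/Y)), ← Real.rpow_mul ht.le]; congr 1; push_cast; ring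
  have hhY : (t ^ (1/Y)) ^ Y = t := by
    rw [← Real.rpow_mul ht.le, one_div_mul_cancel (by linarith), Real.rpow_one]
  simp only [Function.comp, Pi.mul_apply]
  rw [h2, hhY]
  field_simp

lemma I_asymp {C Y : ℝ} {m : Measure ℝ} (H : StLaw C Y m) {M G : ℝ} (hM : 1 < M) (hG : 0 < G) (c r : ℝ) (hr1 : r ≤ 2 - 1/Y) (hr2 : r ≤ 2/Y) :
    (fun t : ℝ => Iint Y M G c m t - ((∫ p : ℝ × ℝ, max (p.1 - p.2) 0 ∂(m.prod m)) * t ^ (1/Y)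
      + (C * Real.Gamma (-Y) * ((M-1) ^ Y + (G+1) ^ Y) - C * Real.Gamma (-Y) * (M ^ Y + (G+1) ^ Y) + c / 2) * t
      + c ^ 2 / (2 * Real.pi) * Real.Gamma (1 + 1/Y) * (-2 * C * Real.Gamma (-Y) * Real.cos (Real.pi * Y / 2)) ^ (-(1/Y)) * t ^ (2 - 1/Y)
      - Aconst C Y M G m * t ^ (2/Y))) =o[𝓝[>] 0] fun t => t ^ r := by
  have := H.prob
  have hY := H.h1
  have hY2 : 1/Y < 1 := by rw [div_lt_one (by linarith)]; exact hY
  have hY0 : 0 < 1/Y := by positivity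
  have hY3 : 2/Y = 2 * (1/Y) := by ring
  have w := (W_asymp H hM hG).trans_isBigO (rpow_O hr2)
  have d := (delta_asymp H c).trans_isBigO (rpow_O hr1)
  have hk : 0 < C * Real.Gamma (-Y) := mul_pos H.hC (gamma_neg_pos H.h1 H.h2)
  have hM1 : 0 < (M-1) ^ Y := Real.rpow_pos_of_pos (by linarith) _
  have hG1 : 0 < (G+1) ^ Y := Real.rpow_pos_of_pos (by linarith) _
  have dr := fun h (hh : 0 ≤ h) b => drift_error H hM hG hh b
  set η := C * Real.Gamma (-Y) * ((M-1) ^ Y + (G+1) ^ Y) with hη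
  have hη0 : 0 < η := by positivity
  set D1 := ∫ p : ℝ × ℝ, max (p.1 - p.2) 0 ∂(m.prod m) with hD1
  set EU := ∫ p : ℝ × ℝ, |(M-1) * p.1 + (G+1) * p.2| ∂(m.prod m) with hEU
  have hD10 : 0 ≤ D1 := integral_nonneg fun p => le_max_right _ _
  have hEU0 : 0 ≤ EU := integral_nonneg fun p => abs_nonneg _
  -- exponential remainder
  have x1 : (fun t : ℝ => Real.exp (η * t) - 1 - η * t) =o[𝓝[>] 0] fun t => t ^ r := by
    have : (fun t : ℝ => Real.exp (η * t) - 1 - η * t) =O[𝓝[>] 0] fun t => t ^ (2:ℝ) := by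
      refine IsBigO.of_bound (η ^ 2 * Real.exp η) ?_
      filter_upwards [ev_unit] with t ht
      have h0 : 0 ≤ η * t := mul_nonneg hη0.le ht.1.le
      have a1 := Real.add_one_le_exp (η * t)
      have a2 := exp_sub_one_le (x := η * t)
      have a3 : Real.exp (η * t) ≤ Real.exp η := Real.exp_le_exp.2 (by nlinarith [ht.2])
      have a4 : 1 ≤ Real.exp (η * t) := Real.one_le_exp h0
      have a5 : Real.exp (η * t) - 1 - η * t ≤ (η * t) * (η * t * Real.exp (η * t)) := by nlinarith
      have a6 : (η * t) * (η * t * Real.exp (η * t)) ≤ (η * t) * (η * t * Real.exp η) := by gcongr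
      rw [Real.norm_of_nonneg (by linarith), Real.norm_of_nonneg (Real.rpow_nonneg ht.1.le _), Real.rpow_two]
      linarith [a5.trans a6]
    exact this.trans_isLittleO (rpow_lo (by linarith))
  -- drift remainder
  have x2 : (fun t : ℝ => Iint Y M G c m t - (Real.exp (η * t) - ∫ p, Real.exp (-(t ^ (1/Y) * Wf M G p)) ∂(m.prod m)
        + ∫ p : ℝ × ℝ, (max (t ^ (1/Y) * (p.1 - p.2) + c * t) 0 - max (t ^ (1/Y) * (p.1 - p.2)) 0) ∂(m.prod m))) =o[𝓝[>] 0] fun t => t ^ r := by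
    have : (fun t : ℝ => Iint Y M G c m t - (Real.exp (η * t) - ∫ p, Real.exp (-(t ^ (1/Y) * Wf M G p)) ∂(m.prod m)
        + ∫ p : ℝ × ℝ, (max (t ^ (1/Y) * (p.1 - p.2) + c * t) 0 - max (t ^ (1/Y) * (p.1 - p.2)) 0) ∂(m.prod m))) =O[𝓝[>] 0] fun t => t ^ (1 + 1/Y) := by
      refine IsBigO.of_bound (|c| * (D1 + |c| + (EU + η * Real.exp η))) ?_
      filter_upwards [ev_unit] with t ht
      obtain ⟨ht, ht1⟩ := ht
      have hh : 0 < t ^ (1/Y) := Real.rpow_pos_of_pos ht _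
      have hhY : (t ^ (1/Y)) ^ Y = t := by
        rw [← Real.rpow_mul ht.le, one_div_mul_cancel (by linarith), Real.rpow_one]
      have hth : t ≤ t ^ (1/Y) := by
        have := Real.rpow_le_rpow_of_exponent_ge ht ht1 hY2.le
        rwa [Real.rpow_one] at this
      have h := dr (t ^ (1/Y)) hh.le (c * t)
      rw [hhY] at h
      rw [Real.norm_eq_abs]
      refine h.trans ?_
      have h0 : 0 ≤ η * t := mul_nonneg hη0.le ht.le
      have a2 := exp_sub_one_le (x := η * t)
      have a3 : Real.exp (η * t) ≤ Real.exp η := Real.exp_le_exp.2 (by nlinarith)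
      have a4 : Real.exp (η * t) - 1 ≤ η * t ^ (1/Y) * Real.exp η := a2.trans (by gcongr)
      rw [Real.norm_of_nonneg (Real.rpow_nonneg ht.le _), Real.rpow_add ht, Real.rpow_one, abs_mul, abs_of_pos ht]
      have a5 : |c| * t ≤ |c| * t ^ (1/Y) := by gcongr
      calc |c| * t * (t ^ (1/Y) * D1 + |c| * t + (t ^ (1/Y) * EU + (Real.exp (η * t) - 1))) 
          ≤ |c| * t * (t ^ (1/Y) * D1 + |c| * t ^ (1/Y) + (t ^ (1/Y) * EU + η * t ^ (1/Y) * Real.exp η)) := by gcongr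
        _ = _ := by ring
    exact this.trans_isLittleO (rpow_lo (by linarith))
  refine (((x1.sub w).add d).add x2).congr' ?_ EventuallyEq.rfl
  filter_upwards [ev_unit] with t ht
  have hh : 0 < t ^ (1/Y) := Real.rpow_pos_of_pos ht.1 _
  have iW := Wf_exp H (M := M) (G := G) (by linarith) hG.le _ hh.le
  have e : ∫ p, (Real.exp (-(t ^ (1/Y) * Wf M G p)) - 1 + t ^ (1/Y) * Wf M G p) ∂(m.prod m) = (∫ p, Real.exp (-(t ^ (1/Y) * Wf M G p)) ∂(m.prod m)) - 1 + t ^ (1/Y) * D1 := by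
    have j2 : Integrable (fun p => Real.exp (-(t ^ (1/Y) * Wf M G p)) - 1) (m.prod m) := iW.sub (integrable_const 1)
    rw [integral_add j2 ((Wf_int H M G).const_mul _), integral_sub iW (integrable_const 1), integral_const_mul, Wf_val H]
    simp [hD1]
  rw [e]; ring

lemma Pr_asymp {C Y : ℝ} {m : Measure ℝ} (H : StLaw C Y m) {M G : ℝ} (c r D1 D2 D3 D4 η : ℝ) (hη : 0 ≤ η)
    (hr2 : r ≤ 2/Y) (hr0 : 1 / Y ≤ r)
    (hI : (fun t : ℝ => Iint Y M G c m t - (D1 * t ^ (1/Y) + D2 * t + D3 * t ^ (2 - 1/Y) + D4 * t ^ (2/Y))) =o[𝓝[>] 0] fun t => t ^ r) :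
    (fun t : ℝ => Real.exp (-(t * η)) * Iint Y M G c m t - (D1 * t ^ (1/Y) + D2 * t + D3 * t ^ (2 - 1/Y) + D4 * t ^ (2/Y))) =o[𝓝[>] 0] fun t => t ^ r := by
  have hY := H.h1
  have hY2 : 1/Y < 1 := by rw [div_lt_one (by linarith)]; exact hY
  have hY0 : 0 < 1/Y := by positivity
  have hY3 : 2/Y = 2 * (1/Y) := by ring
  have o1 : (fun t : ℝ => t) =O[𝓝[>] 0] fun t => t ^ (1/Y) := by
    have := rpow_O hY2.le
    simpa using this
  have b1 : (fun t : ℝ => D1 * t ^ (1/Y) + D2 * t + D3 * t ^ (2 - 1/Y) + D4 * t ^ (2/Y)) =O[𝓝[>] 0] fun t => t ^ (1/Y) :=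
    ((((isBigO_refl _ _).const_mul_left D1).add (o1.const_mul_left D2)).add ((rpow_O (by linarith)).const_mul_left D3)).add ((rpow_O (by linarith)).const_mul_left D4)
  have b2 : (fun t : ℝ => Iint Y M G c m t) =O[𝓝[>] 0] fun t => t ^ (1/Y) := by
    have := (hI.isBigO.trans (rpow_O hr0)).add b1
    simpa using this
  have b3 : (fun t : ℝ => Real.exp (-(t * η)) - 1) =O[𝓝[>] 0] fun t => t ^ (1:ℝ) := by
    refine IsBigO.of_bound η ?_
    filter_upwards [ev_unit] with t ht
    have h0 : 0 ≤ t * η := mul_nonneg ht.1.le hη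
    have a := Real.add_one_le_exp (-(t * η))
    have a2 : Real.exp (-(t * η)) ≤ 1 := Real.exp_le_one_iff.2 (by linarith)
    rw [Real.norm_of_nonpos (by linarith), Real.rpow_one, Real.norm_of_nonneg ht.1.le]
    linarith
  have b4 := b3.mul b2
  have b5 : (fun t : ℝ => t ^ (1:ℝ) * t ^ (1/Y)) =o[𝓝[>] 0] fun t => t ^ r := by
    refine (rpow_lo (p := 1 + 1/Y) (by linarith)).congr' ?_ EventuallyEq.rfl
    filter_upwards [ev_unit] with t ht
    rw [Real.rpow_add ht.1]
  refine (hI.add (b4.trans_isLittleO b5)).congr_left fun t => ?_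
  ring

lemma phi_int : Integrable (fun t : ℝ => Real.exp (-t ^ 2 / 2) / Real.sqrt (2 * Real.pi)) := by
  have := (integrable_exp_neg_mul_sq (b := 1/2) (by norm_num)).div_const (Real.sqrt (2 * Real.pi))
  convert this using 4
  ring

lemma cdf_zero : stdGaussianCDF 0 = 1/2 := by
  unfold stdGaussianCDF
  have h := integral_comp_neg_Iic (0:ℝ) (fun t : ℝ => Real.exp (-t ^ 2 / 2) / Real.sqrt (2 * Real.pi))
  simp only [neg_sq, neg_zero] at h
  rw [h, integral_div]
  have g := integral_gaussian_Ioi (1/2)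
  have e : ∀ x : ℝ, Real.exp (-(1/2) * x ^ 2) = Real.exp (-x ^ 2 / 2) := by intro x; congr 1; ring
  simp only [e] at g
  rw [g, show Real.pi / (1/2) = 2 * Real.pi by ring]
  have : 0 < Real.sqrt (2 * Real.pi) := Real.sqrt_pos.2 (by positivity)
  field_simp

lemma cdf_mono : Monotone stdGaussianCDF := by
  intro a b hab
  unfold stdGaussianCDF
  exact setIntegral_mono_set phi_int.integrableOn (ae_of_all _ fun t => by positivity) (Iic_subset_Iic.2 hab).eventuallyLE

lemma cdf_cubic {x : ℝ} (hx : 0 ≤ x) : |2 * stdGaussianCDF x - 1 - 2 * x / Real.sqrt (2 * Real.pi)| ≤ x ^ 3 / Real.sqrt (2 * Real.pi) := by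
  set q := Real.sqrt (2 * Real.pi) with hq
  have hq0 : 0 < q := Real.sqrt_pos.2 (by positivity)
  have h := intervalIntegral.integral_Iic_sub_Iic (a := 0) (b := x) phi_int.integrableOn phi_int.integrableOn
  have e : 2 * stdGaussianCDF x - 1 - 2 * x / q = 2 * ∫ t in (0:ℝ)..x, (Real.exp (-t ^ 2 / 2) / q - 1 / q) := by
    rw [intervalIntegral.integral_sub (phi_int.intervalIntegrable) (by simp), ← h]
    have z := cdf_zero
    unfold stdGaussianCDF at z ⊢
    rw [z]
    simp only [intervalIntegral.integral_const, smul_eq_mul, ← hq]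
    ring
  rw [e, abs_mul, abs_two]
  have b := intervalIntegral.norm_integral_le_of_norm_le_const (a := 0) (b := x) (f := fun t : ℝ => Real.exp (-t ^ 2 / 2) / q - 1 / q) (C := x ^ 2 / 2 / q) (by
    intro t ht
    rw [uIoc_of_le hx] at ht
    have h1 : Real.exp (-t ^ 2 / 2) ≤ 1 := Real.exp_le_one_iff.2 (by nlinarith [sq_nonneg t])
    have h2 := Real.add_one_le_exp (-t ^ 2 / 2)
    have h3 : t ^ 2 ≤ x ^ 2 := by nlinarith [ht.1, ht.2]
    rw [← sub_div, norm_div, Real.norm_of_nonneg hq0.le, Real.norm_of_nonpos (by linarith)]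
    gcongr
    linarith)
  rw [sub_zero, abs_of_nonneg hx, Real.norm_eq_abs] at b
  calc _ ≤ 2 * (x ^ 2 / 2 / q * x) := by linarith
    _ = _ := by ring

lemma cdf_inv {x : ℝ} (hx : 0 ≤ x) (h : 2 * stdGaussianCDF x - 1 < 1 / Real.sqrt (2 * Real.pi)) : x ≤ Real.sqrt (2 * Real.pi) * (2 * stdGaussianCDF x - 1) := by
  have hq0 : 0 < Real.sqrt (2 * Real.pi) := Real.sqrt_pos.2 (by positivity)
  have key : ∀ y : ℝ, 0 ≤ y → y ≤ 1 → y / Real.sqrt (2 * Real.pi) ≤ 2 * stdGaussianCDF y - 1 := by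
    intro y h0 h1
    have c := (abs_le.1 (cdf_cubic h0)).1
    have : y ^ 3 ≤ y := by nlinarith [mul_nonneg h0 h0]
    have : y ^ 3 / Real.sqrt (2 * Real.pi) ≤ y / Real.sqrt (2 * Real.pi) := by gcongr
    have e : 2 * y / Real.sqrt (2 * Real.pi) = y / Real.sqrt (2 * Real.pi) + y / Real.sqrt (2 * Real.pi) := by ring
    linarith
  rcases le_total x 1 with h1 | h1
  · have := key x hx h1
    rw [div_le_iff₀ hq0] at this
    linarith
  · have a := key 1 zero_le_one le_rfl
    have b := cdf_mono h1
    linarith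

lemma bs_invert {Y r δ : ℝ} (hY : 0 < Y) (hr : r < 3 / Y) (hδ : 0 < δ) (Pr σ F : ℝ → ℝ)
    (hpos : ∀ t ∈ Set.Ioo (0:ℝ) δ, 0 < σ t)
    (hBS : ∀ t ∈ Set.Ioo (0:ℝ) δ, CBS t (σ t) = Pr t)
    (hO : Pr =O[𝓝[>] 0] fun t : ℝ => t ^ (1/Y))
    (hF : (fun t => Pr t - F t) =o[𝓝[>] 0] fun t : ℝ => t ^ r) :
    (fun t => σ t / Real.sqrt (2 * Real.pi) - t ^ (-(1/2) : ℝ) * F t) =o[𝓝[>] 0] fun t : ℝ => t ^ (r - 1/2) := by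
  have hY0 : 0 < 1/Y := by positivity
  set q := Real.sqrt (2 * Real.pi) with hq
  have hq0 : 0 < q := Real.sqrt_pos.2 (by positivity)
  have lim : Tendsto Pr (𝓝[>] 0) (𝓝 0) := by
    refine hO.trans_tendsto ?_
    have := (Real.continuousAt_rpow_const 0 (1/Y) (Or.inr hY0.le)).tendsto
    rw [Real.zero_rpow (by linarith)] at this
    exact this.mono_left nhdsWithin_le_nhds
  have ev1 : ∀ᶠ t in 𝓝[>] (0:ℝ), Pr t < 1 / q := lim.eventually (gt_mem_nhds (by positivity))
  have ev2 : ∀ᶠ t in 𝓝[>] (0:ℝ), t ∈ Ioo 0 δ := Ioo_mem_nhdsGT hδ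
  have x1 : (fun t => σ t * Real.sqrt t / q - Pr t) =O[𝓝[>] 0] fun t => Pr t ^ 3 := by
    refine IsBigO.of_bound (q ^ 2) ?_
    filter_upwards [ev1, ev2] with t h1 h2
    have hx : 0 ≤ σ t * Real.sqrt t / 2 := by have := hpos t h2; positivity
    have hb := hBS t h2
    unfold CBS at hb
    have c := cdf_cubic hx
    have i := cdf_inv hx (by rw [hb]; exact h1)
    rw [hb] at c i
    rw [← hq] at c i
    have e : σ t * Real.sqrt t / q - Pr t = -(Pr t - 2 * (σ t * Real.sqrt t / 2) / q) := by ring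
    rw [e, norm_neg, Real.norm_eq_abs]
    refine c.trans ?_
    have p0 : 0 ≤ Pr t := by
      by_contra hn
      have : q * Pr t < 0 := mul_neg_of_pos_of_neg hq0 (by linarith)
      linarith
    rw [norm_pow, Real.norm_of_nonneg p0]
    calc _ ≤ (q * Pr t) ^ 3 / q := by gcongr
      _ = _ := by field_simp
  have x2 : (fun t => Pr t ^ 3) =o[𝓝[>] 0] fun t : ℝ => t ^ r := by
    have h3 := hO.pow 3
    refine h3.trans_isLittleO ((rpow_lo hr).congr' ?_ EventuallyEq.rfl)
    filter_upwards [ev_unit] with t ht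
    rw [← Real.rpow_natCast, ← Real.rpow_mul ht.1.le]; congr 1; push_cast; ring
  have x3 := (x1.trans_isLittleO x2).add hF
  have x4 := (isBigO_refl (fun t : ℝ => t ^ (-(1/2) : ℝ)) (𝓝[>] 0)).mul_isLittleO x3
  refine x4.congr' ?_ ?_
  · filter_upwards [ev_unit] with t ht
    have : t ^ (-(1/2) : ℝ) * Real.sqrt t = 1 := by
      rw [Real.sqrt_eq_rpow, ← Real.rpow_add ht.1]; simp
    have e : t ^ (-(1/2) : ℝ) * (σ t * Real.sqrt t / q - Pr t + (Pr t - F t)) = (t ^ (-(1/2) : ℝ) * Real.sqrt t) * σ t / q - t ^ (-(1/2) : ℝ) * F t := by ring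
    rw [e, this, one_mul]
  · filter_upwards [ev_unit] with t ht
    rw [← Real.rpow_add ht.1]; congr 1; ring

lemma char_conv {Ω : Type} [MeasurableSpace Ω] (P : Measure Ω) [IsProbabilityMeasure P]
    {C Y : ℝ} (hY : 1 < Y) (U : Ω → ℝ) (hU : Measurable U)
    (hUchar : ∀ u : ℝ, (∫ ω, Complex.exp (Complex.I * u * (U ω)) ∂P) =
      Complex.exp (((C * Real.Gamma (-Y) * |u| ^ Y : ℝ) : ℂ) *
        (((Real.cos (Real.pi * Y / 2) : ℝ) : ℂ)
          - Complex.I * ((Real.sign u : ℝ) : ℂ) * ((Real.sin (Real.pi * Y / 2) : ℝ) : ℂ)))) (u : ℝ) :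
    ∫ x, Complex.exp (Complex.I * u * x) ∂(P.map U) = Complex.exp ((C * Real.Gamma (-Y) : ℝ) * (-(Complex.I * u)) ^ (Y:ℂ)) := by
  rw [integral_map hU.aemeasurable (by apply Continuous.aestronglyMeasurable; fun_prop), hUchar, cpow_neg_I_mul hY]
  congr 1
  push_cast; ring

lemma d32_eq {Ω : Type} [MeasurableSpace Ω] (P : Measure Ω) [IsProbabilityMeasure P] {C Y M G : ℝ} (hY : 1 < Y)
    (U V : Ω → ℝ) (hU : Measurable U) (hV : Measurable V) (m : Measure ℝ) (hlaw : P.map (fun ω => (U ω, V ω)) = m.prod m)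
    (Z Ut : Ω → ℝ)
    (hZ : Z = fun ω => U ω - V ω)
    (hUt : Ut = fun ω => (M - 1) * U ω + (G + 1) * V ω) :
    -(1/2) * (∫ ω, Set.indicator {ω | max (Z ω) 0 + Ut ω ≤ 0}
        (fun ω => (max (Z ω) 0 + Ut ω) ^ 2) ω ∂P)
      - ∫ w in Set.Ioi (0:ℝ), w * ((P {ω | w ≤ max (Z ω) 0 + Ut ω}).toReal
          - C * M ^ Y / (Y * w ^ Y) - C * (G+1) ^ Y / (Y * w ^ Y)) = -Aconst C Y M G m := by
  have hp : Measurable (fun ω => (U ω, V ω)) := hU.prodMk hV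
  have hW : ∀ ω, max (Z ω) 0 + Ut ω = Wf M G (U ω, V ω) := by intro ω; rw [hZ, hUt, Wf]
  simp only [hW]
  unfold Aconst
  rw [← hlaw]
  have mS : MeasurableSet {p | Wf M G p ≤ 0} := measurableSet_le (Wf_meas M G) measurable_const
  have e1 : ∫ p, {p | Wf M G p ≤ 0}.indicator (fun p => Wf M G p ^ 2 / 2) p ∂(P.map (fun ω => (U ω, V ω))) = 
      (1/2) * ∫ ω, Set.indicator {ω | Wf M G (U ω, V ω) ≤ 0} (fun ω => Wf M G (U ω, V ω) ^ 2) ω ∂P := by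
    rw [integral_map hp.aemeasurable ((((Wf_meas M G).pow_const 2).div_const 2).indicator mS).aestronglyMeasurable, ← integral_const_mul]
    congr 1; ext ω
    by_cases h : Wf M G (U ω, V ω) ≤ 0
    · rw [Set.indicator_of_mem (show (U ω, V ω) ∈ {p | Wf M G p ≤ 0} from h), Set.indicator_of_mem (show ω ∈ {ω | Wf M G (U ω, V ω) ≤ 0} from h)]
      ring
    · rw [Set.indicator_of_notMem (show (U ω, V ω) ∉ {p | Wf M G p ≤ 0} from h), Set.indicator_of_notMem (show ω ∉ {ω | Wf M G (U ω, V ω) ≤ 0} from h)]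
      ring
  have e2 : ∫ w in Ioi (0:ℝ), w * ((P.map (fun ω => (U ω, V ω))).real {p | w ≤ Wf M G p} - C * (M ^ Y + (G+1) ^ Y) / Y * w ^ (-Y)) = 
      ∫ w in Set.Ioi (0:ℝ), w * ((P {ω | w ≤ Wf M G (U ω, V ω)}).toReal
          - C * M ^ Y / (Y * w ^ Y) - C * (G+1) ^ Y / (Y * w ^ Y)) := by
    refine setIntegral_congr_fun measurableSet_Ioi fun w hw => ?_
    have hw : 0 < w := hw
    show w * _ = w * _
    congr 1
    rw [map_measureReal_apply hp (measurableSet_le measurable_const (Wf_meas M G)), Real.rpow_neg hw.le]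
    have : 0 < w ^ Y := Real.rpow_pos_of_pos hw _
    have e : (P.real ((fun ω => (U ω, V ω)) ⁻¹' {p | w ≤ Wf M G p})) = (P {ω | w ≤ Wf M G (U ω, V ω)}).toReal := rfl
    rw [e]
    field_simp
    ring
  rw [e1, e2]; ring

/-- Third-order at-the-money implied volatility asymptotics for the pure-jump CGMY model. -/
theorem stmt1
    {Ω : Type} [MeasurableSpace Ω] (P : Measure Ω) [IsProbabilityMeasure P]
    (C G M Y : ℝ) (hC : 0 < C) (hG : 0 < G) (hM : 1 < M) (hY : Y ∈ Set.Ioo (1:ℝ) 2)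
    (c : ℝ)
    (hc : c = -C * Real.Gamma (-Y) * ((M-1) ^ Y + (G+1) ^ Y - M ^ Y - G ^ Y))
    (μ : ℝ → Measure ℝ)
    (hμprob : ∀ t > (0:ℝ), IsProbabilityMeasure (μ t))
    (hμchar : ∀ t > (0:ℝ), ∀ u : ℝ,
      (∫ x, Complex.exp (Complex.I * u * x) ∂(μ t)) =
        Complex.exp ((t : ℂ) * (Complex.I * (c : ℂ) * (u : ℂ) +
          ((C * Real.Gamma (-Y) : ℝ) : ℂ) *
          (((M : ℂ) - Complex.I * (u : ℂ)) ^ (Y : ℂ) + ((G : ℂ) + Complex.I * (u : ℂ)) ^ (Y : ℂ)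
            - (M : ℂ) ^ (Y : ℂ) - (G : ℂ) ^ (Y : ℂ)))))
    (Pr : ℝ → ℝ)
    (hPr : ∀ t > (0:ℝ), Pr t = ∫ x, max (Real.exp x - 1) 0 ∂(μ t))
    (U V : Ω → ℝ) (hU : Measurable U) (hV : Measurable V)
    (hIndep : IndepFun U V P)
    (hUchar : ∀ u : ℝ, (∫ ω, Complex.exp (Complex.I * u * (U ω)) ∂P) =
      Complex.exp (((C * Real.Gamma (-Y) * |u| ^ Y : ℝ) : ℂ) *
        (((Real.cos (Real.pi * Y / 2) : ℝ) : ℂ)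
          - Complex.I * ((Real.sign u : ℝ) : ℂ) * ((Real.sin (Real.pi * Y / 2) : ℝ) : ℂ))))
    (hVchar : ∀ u : ℝ, (∫ ω, Complex.exp (Complex.I * u * (V ω)) ∂P) =
      Complex.exp (((C * Real.Gamma (-Y) * |u| ^ Y : ℝ) : ℂ) *
        (((Real.cos (Real.pi * Y / 2) : ℝ) : ℂ)
          - Complex.I * ((Real.sign u : ℝ) : ℂ) * ((Real.sin (Real.pi * Y / 2) : ℝ) : ℂ))))
    (Z Ut : Ω → ℝ)
    (hZ : Z = fun ω => U ω - V ω)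
    (hUt : Ut = fun ω => (M - 1) * U ω + (G + 1) * V ω)
    (γ' d₁ d₂ d₃₁ d₃₂ d₃ : ℝ)
    (hγ' : γ' = -C * Real.Gamma (-Y) * ((M-1) ^ Y + (G+1) ^ Y - M ^ Y - G ^ Y))
    (hd₁ : d₁ = (1 / Real.pi) * Real.Gamma (1 - 1/Y) *
      (2 * C * Real.Gamma (-Y) * |Real.cos (Real.pi * Y / 2)|) ^ (1/Y))
    (hd₂ : d₂ = (C * Real.Gamma (-Y) / 2) * ((M-1) ^ Y - M ^ Y - (G+1) ^ Y + G ^ Y))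
    (hd₃₁ : d₃₁ = (γ' ^ 2 / (2 * Real.pi)) * Real.Gamma (1 + 1/Y) *
      (-2 * C * Real.Gamma (-Y) * Real.cos (Real.pi * Y / 2)) ^ (-(1/Y)))
    (hd₃₂ : d₃₂ = -(1/2) * (∫ ω, Set.indicator {ω | max (Z ω) 0 + Ut ω ≤ 0}
        (fun ω => (max (Z ω) 0 + Ut ω) ^ 2) ω ∂P)
      - ∫ w in Set.Ioi (0:ℝ), w * ((P {ω | w ≤ max (Z ω) 0 + Ut ω}).toReal
          - C * M ^ Y / (Y * w ^ Y) - C * (G+1) ^ Y / (Y * w ^ Y)))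
    (hd₃ : d₃ = if Y < 3/2 then d₃₁ else if 3/2 < Y then d₃₂ else d₃₁ + d₃₂)
    (δ : ℝ) (hδ : 0 < δ) (σhat : ℝ → ℝ)
    (hσhatpos : ∀ t ∈ Set.Ioo (0:ℝ) δ, 0 < σhat t)
    (hBS : ∀ t ∈ Set.Ioo (0:ℝ) δ, CBS t (σhat t) = Pr t) :
    (Y ≤ 3/2 →
      (fun t => σhat t / Real.sqrt (2 * Real.pi)
          - (d₁ * t ^ (1/Y - 1/2) + d₂ * t ^ ((1:ℝ)/2) + d₃ * t ^ (3/2 - 1/Y)))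
        =o[𝓝[>] (0:ℝ)] fun t => t ^ (3/2 - 1/Y)) ∧
    (3/2 < Y →
      (fun t => σhat t / Real.sqrt (2 * Real.pi)
          - (d₁ * t ^ (1/Y - 1/2) + d₂ * t ^ ((1:ℝ)/2) + d₃ * t ^ (2/Y - 1/2)))
        =o[𝓝[>] (0:ℝ)] fun t => t ^ (2/Y - 1/2)) := by
  obtain ⟨h1, h2⟩ := hY
  have hUc := char_conv P h1 U hU hUchar
  have hVc := char_conv P h1 V hV hVchar
  have pU : IsProbabilityMeasure (P.map U) := Measure.isProbabilityMeasure_map hU.aemeasurable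
  have pV : IsProbabilityMeasure (P.map V) := Measure.isProbabilityMeasure_map hV.aemeasurable
  have hVU : P.map V = P.map U := by
    apply Measure.ext_of_charFun
    ext u
    rw [charFun_apply_real, charFun_apply_real]
    have e0 : ∀ x : ℝ, Complex.exp (u * x * Complex.I) = Complex.exp (Complex.I * u * x) := by
      intro x; congr 1; ring
    simp only [e0]
    rw [hUc, hVc]
  have hlaw : P.map (fun ω => (U ω, V ω)) = (P.map U).prod (P.map U) := by
    rw [(indepFun_iff_map_prod_eq_prod_map_map hU.aemeasurable hV.aemeasurable).1 hIndep, hVU]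
  have H : StLaw C Y (P.map U) := stLaw_of_char hC h1 h2 _ hUc
  set m := P.map U with hm
  have hA := d32_eq (C := C) P h1 U V hU hV m hlaw Z Ut hZ hUt
  rw [← hd₃₂] at hA
  have hk : 0 < C * Real.Gamma (-Y) := mul_pos hC (gamma_neg_pos h1 h2)
  have hcos := cos_piY_neg h1 h2
  have hM1 : 0 < (M-1) ^ Y := Real.rpow_pos_of_pos (by linarith) _
  have hG1 : 0 < (G+1) ^ Y := Real.rpow_pos_of_pos (by linarith) _
  have hγc : γ' = c := by rw [hγ', hc]
  have hD1 : ∫ p : ℝ × ℝ, max (p.1 - p.2) 0 ∂(m.prod m) = d₁ := by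
    rw [H.pos_val, hd₁, abs_of_neg hcos]
    congr 2; ring
  have hY2 : 1/Y < 1 := by rw [div_lt_one (by linarith)]; exact h1
  have hY0 : 1/2 < 1/Y := by rw [div_lt_div_iff₀ (by norm_num) (by linarith)]; linarith
  have hY3 : 2/Y = 2 * (1/Y) := by ring
  have hY4 : 3/Y = 3 * (1/Y) := by ring
  -- main expansion of the price
  have main : ∀ r : ℝ, r ≤ 2 - 1/Y → r ≤ 2/Y → 1/Y ≤ r →
      (fun t : ℝ => Pr t - (d₁ * t ^ (1/Y) + d₂ * t + d₃₁ * t ^ (2 - 1/Y) + d₃₂ * t ^ (2/Y))) =o[𝓝[>] 0] fun t => t ^ r := by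
    intro r hr1 hr2 hr0
    have i := I_asymp H hM hG c r hr1 hr2
    rw [hD1] at i
    have q := Pr_asymp H (M := M) (G := G) c r d₁ d₂ d₃₁ d₃₂ (C * Real.Gamma (-Y) * ((M-1) ^ Y + (G+1) ^ Y)) (by positivity) hr2 hr0 (by
      refine i.congr_left fun t => ?_
      rw [hA, hd₃₁, hγc, hd₂]
      have : c / 2 = -C * Real.Gamma (-Y) * ((M-1) ^ Y + (G+1) ^ Y - M ^ Y - G ^ Y) / 2 := by rw [← hc]
      rw [this]
      ring)
    refine q.congr' ?_ EventuallyEq.rfl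
    filter_upwards [ev_unit] with t ht
    have := hμprob t ht.1
    rw [hPr t ht.1, price H (by linarith) hG ht.1 hc (μ t) (hμchar t ht.1), Iint]
  have hO : Pr =O[𝓝[>] 0] fun t : ℝ => t ^ (1/Y) := by
    have q := (main (1/Y) (by linarith) (by linarith) le_rfl).isBigO
    have o1 : (fun t : ℝ => t) =O[𝓝[>] 0] fun t => t ^ (1/Y) := by
      have := rpow_O hY2.le
      simpa using this
    have b1 : (fun t : ℝ => d₁ * t ^ (1/Y) + d₂ * t + d₃₁ * t ^ (2 - 1/Y) + d₃₂ * t ^ (2/Y)) =O[𝓝[>] 0] fun t => t ^ (1/Y) :=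
      ((((isBigO_refl _ _).const_mul_left d₁).add (o1.const_mul_left d₂)).add ((rpow_O (by linarith)).const_mul_left d₃₁)).add ((rpow_O (by linarith)).const_mul_left d₃₂)
    have := q.add b1
    simpa using this
  -- passage to implied volatility
  have fin : ∀ r : ℝ, r ≤ 2/Y → (fun t : ℝ => Pr t - (d₁ * t ^ (1/Y) + d₂ * t + d₃ * t ^ r)) =o[𝓝[>] 0] (fun t => t ^ r) →
      (fun t => σhat t / Real.sqrt (2 * Real.pi)
          - (d₁ * t ^ (1/Y - 1/2) + d₂ * t ^ ((1:ℝ)/2) + d₃ * t ^ (r - 1/2)))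
        =o[𝓝[>] (0:ℝ)] fun t => t ^ (r - 1/2) := by
    intro r hr hF
    have b := bs_invert (by linarith) (by linarith) hδ Pr σhat _ hσhatpos hBS hO hF
    refine b.congr' ?_ EventuallyEq.rfl
    filter_upwards [ev_unit] with t ht
    have e1 : t ^ (1/Y - 1/2) = t ^ (-(1/2) : ℝ) * t ^ (1/Y) := by
      rw [← Real.rpow_add ht.1]; congr 1; ring
    have e2 : t ^ ((1:ℝ)/2) = t ^ (-(1/2) : ℝ) * t := by
      conv_rhs => rw [← Real.rpow_one t, ← Real.rpow_mul ht.1.le, ← Real.rpow_add ht.1]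
      congr 1; norm_num
    have e3 : t ^ (r - 1/2) = t ^ (-(1/2) : ℝ) * t ^ r := by
      rw [← Real.rpow_add ht.1]; congr 1; ring
    rw [e1, e2, e3]; ring
  constructor
  · intro hY'
    have hle : 2 - 1/Y ≤ 2/Y := by
      have : 2/3 ≤ 1/Y := by rw [div_le_div_iff₀ (by norm_num) (by linarith)]; linarith
      linarith
    have q := main (2 - 1/Y) le_rfl hle (by linarith)
    have f := fin (2 - 1/Y) hle ?_
    · rw [show 2 - 1/Y - 1/2 = 3/2 - 1/Y by ring] at f
      exact f
    · rcases hY'.lt_or_eq with hlt | heq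
      · rw [if_pos hlt] at hd₃
        have : 2/3 < 1/Y := by rw [div_lt_div_iff₀ (by norm_num) (by linarith)]; linarith
        have o := (rpow_lo (p := 2/Y) (r := 2 - 1/Y) (by linarith)).const_mul_left d₃₂
        refine (q.add o).congr_left fun t => ?_
        rw [hd₃]; ring
      · rw [if_neg (by linarith), if_neg (by linarith)] at hd₃
        have ee : 2/Y = 2 - 1/Y := by rw [heq]; norm_num
        rw [ee] at q
        refine q.congr_left fun t => ?_
        rw [hd₃]; ring
  · intro hY'
    have hlt : 2/Y < 2 - 1/Y := by
      have : 1/Y < 2/3 := by rw [div_lt_div_iff₀ (by linarith) (by norm_num)]; linarith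
      linarith
    have q := main (2/Y) hlt.le le_rfl (by linarith)
    refine fin (2/Y) le_rfl ?_
    rw [if_neg (by linarith), if_pos hY'] at hd₃
    have o := (rpow_lo (p := 2 - 1/Y) (r := 2/Y) hlt).const_mul_left d₃₁
    refine (q.add o).congr_left fun t => ?_
    rw [hd₃]; ring
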